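/- Let $c$ and $\mu$ be fixed real numbers with $1 < c < \frac{17}{16}$ and $0 < \mu < 1$, and set $\delta = \frac{17 - 16c}{32}$ and $\xi = \frac{16c - 5}{32}$. There exist $\varepsilon_0 = \varepsilon_0(c) > 0$ and $X_0 > 0$ such that for every real $X \geq X_0$, with $D = X^{\delta}$ and $\Delta = X^{\xi - c}$, and any two sieve weights $\lambda^-$ and $\lambda^+$ of level $D$ with associated sums $L^-(\alpha)$ and $L^+(\alpha)$, one has $\int_{\Delta \leq |\alpha| \leq \frac{1}{2}} |L^-(\alpha)|\, |L^+(\alpha)|^2 \, d\alpha \leq X^{3 - c - \varepsilon_0}$. -/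

import Mathlib

/-!
With `c = 17/16 - η` the level is `D = X ^ (η / 2)`, and `Δ ≤ |α|` says that
`|α| X ^ c ≥ X ^ (3/8 - η/2)`. The integral is at most `sup |L⁻| · ∫ |L⁺|²`. The integers `⌊p ^ c⌋`
are distinct, so Parseval's identity bounds the mean square by `X ^ (1 + 4ε)` (`L_mean_square`), and
what has to be shown is the pointwise bound `|L(α)| ≤ X ^ (2 - c - 14ε)` for `Δ ≤ |α| ≤ 1/2`, where
`ε = η / 1000` (`L_sup_bound`).

Writing `L(α) = ∑ log p · ρ(p) e(α⌊p ^ c⌋)` with `ρ(n) = ∑_{d ∣ n + 2} λ(d)`, the primes are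
replaced by the von Mangoldt function. The integer part is removed by expanding
a continuous modification of `e(-α{t})` in a Fourier series (`floor_phase_approx`). The modification
differs from the original only for `{t} > 1 - w`, where `w = X ^ -(c - 1 + 20ε)`, and few `n` have
`{n ^ c}` in that range (`count_fract`). There remain sums with the phase `e(θ n ^ c)`,
`θ = α + h`, which are bounded uniformly in `θ`, with a loss `√(1 + |θ| w)` that the decay of the
Fourier coefficients absorbs (`mangoldt_sum_bound`).

For these sums Vaughan's identity with `U = X ^ (1/8)` gives linear sums, with one variable up to
`X ^ (1/4)` (`typeI_full`), and bilinear sums, with both variables above `X ^ (1/8)`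
(`typeII_full`). For bilinear sums one variable is split into short blocks of length `Q`, Cauchy's
inequality is applied, and the resulting correlations are sums of `e(κ m ^ c)` over residue classes
modulo `lcm d₁ d₂`, with `d₁, d₂` odd and at most `D`. All such sums, the linear ones included, are
bounded by a discrete second derivative test (`second_diff_test`) derived from the Kusmin–Landau
inequality. In the bilinear case the optimal `Q` saves a sufficient power of `X` exactly because
`c < 17/16`.
-/

open MeasureTheory

/-- `e(t) = e^{2πit}`. -/
noncomputable def e (t : ℝ) : ℂ := Complex.exp (2 * Real.pi * Complex.I * t)

/-- A sieve weight of level `D`. -/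
def IsSieveWeight (D : ℝ) (lam : ℕ → ℝ) : Prop :=
  (∀ d : ℕ, |lam d| ≤ 1) ∧ ∀ d : ℕ, (D < (d : ℝ) ∨ 2 ∣ d ∨ ¬ Squarefree d) → lam d = 0

/-- The exponential sum `L(α)` over primes `μX < p ≤ X` with `p + 2 ≡ 0 (mod d)`. -/
noncomputable def L (c μ X D : ℝ) (lam : ℕ → ℝ) (α : ℝ) : ℂ :=
  ∑ d ∈ Finset.range (⌊D⌋₊ + 1), (lam d : ℂ) *
    ∑ p ∈ (Finset.range (⌊X⌋₊ + 1)).filter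
        (fun p : ℕ => p.Prime ∧ μ * X < (p : ℝ) ∧ d ∣ (p + 2)),
      (Real.log p : ℂ) * e (α * ⌊(p : ℝ) ^ c⌋)

/-! ### The exponential `e` -/

lemma e_add (s t : ℝ) : e (s + t) = e s * e t := by
  unfold e; rw [← Complex.exp_add]; push_cast; ring_nf

lemma e_zero : e 0 = 1 := by simp [e]

lemma e_int (k : ℤ) : e k = 1 := by
  unfold e
  rw [Complex.exp_eq_one_iff]
  exact ⟨k, by push_cast; ring⟩

lemma norm_e (t : ℝ) : ‖e t‖ = 1 := by
  unfold e
  rw [Complex.norm_exp]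
  simp

lemma e_ne_zero (t : ℝ) : e t ≠ 0 := by
  rw [← norm_ne_zero_iff, norm_e]; norm_num

lemma conj_e (t : ℝ) : (starRingEnd ℂ) (e t) = e (-t) := by
  unfold e
  rw [← Complex.exp_conj]
  congr 1
  simp only [map_mul, Complex.conj_I, Complex.conj_ofReal, map_ofNat]
  push_cast
  ring

lemma e_neg (t : ℝ) : e (-t) = (e t)⁻¹ := by
  unfold e; rw [← Complex.exp_neg]; push_cast; ring_nf

lemma e_sub (s t : ℝ) : e (s - t) = e s * e (-t) := by
  rw [sub_eq_add_neg, e_add]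

lemma continuous_e : Continuous e := by
  unfold e; fun_prop

lemma norm_e_sub_one (x : ℝ) : ‖e x - 1‖ = 2 * |Real.sin (Real.pi * x)| := by
  have := Complex.norm_exp_I_mul_ofReal_sub_one (2 * Real.pi * x)
  unfold e
  rw [show (2 * Real.pi * Complex.I * x : ℂ) = Complex.I * ((2 * Real.pi * x : ℝ) : ℂ) by
    push_cast; ring, this]
  rw [Real.norm_eq_abs, abs_mul, abs_two]
  congr 3; ring

lemma norm_e_sub_e (x y : ℝ) : ‖e y - e x‖ = 2 * |Real.sin (Real.pi * (y - x))| := by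
  rw [← norm_e_sub_one]
  have : e y - e x = e x * (e (y - x) - 1) := by
    rw [mul_sub, ← e_add]; ring_nf
  rw [this, norm_mul, norm_e, one_mul]

/-! ### The Kusmin–Landau inequality -/

lemma two_mul_le_sin {w x : ℝ} (hw : 0 < w) (h1 : w ≤ x) (h2 : x ≤ 1 - w) :
    2 * w ≤ Real.sin (Real.pi * x) := by
  have hpi := Real.pi_pos
  have key : ∀ y : ℝ, w ≤ y → y ≤ 1 / 2 → 2 * w ≤ Real.sin (Real.pi * y) := by
    intro y hy1 hy2
    have h := Real.mul_le_sin (x := Real.pi * y) (mul_nonneg hpi.le (by linarith)) (by nlinarith)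
    have h3 : 2 / Real.pi * (Real.pi * y) = 2 * y := by field_simp
    linarith
  rcases le_total x (1 / 2) with h | h
  · exact key x h1 h
  · have := key (1 - x) (by linarith) (by linarith)
    rwa [show Real.pi * (1 - x) = Real.pi - Real.pi * x by ring, Real.sin_pi_sub] at this

/-- Partial summation with the weights `1 / (e(δ) - 1)`, whose total variation is controlled by
the monotonicity of the cotangent. -/
lemma kusmin_landau (f : ℕ → ℝ) (a b : ℕ) (k : ℤ) (w : ℝ) (hw : 0 < w)
    (hmono : ∀ j, a ≤ j → j + 1 < b → f (j + 1) - f j ≤ f (j + 2) - f (j + 1))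
    (hr : ∀ j, a ≤ j → j < b → k + w ≤ f (j + 1) - f j ∧ f (j + 1) - f j ≤ k + 1 - w) :
    ‖∑ j ∈ Finset.Ico a b, e (f j)‖ ≤ 1 / w := by
  rcases le_or_gt b a with hba | hab
  · rw [Finset.Ico_eq_empty (by omega)]; simp; positivity
  set x : ℕ → ℝ := fun j => f (j + 1) - f j - k with hx
  set s : ℕ → ℝ := fun j => Real.sin (Real.pi * x j) with hs
  set ct : ℕ → ℝ := fun j => Real.cos (Real.pi * x j) / s j with hct
  set u : ℕ → ℂ := fun j => (e (x j) - 1)⁻¹ with hu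
  have hxr : ∀ j, a ≤ j → j < b → w ≤ x j ∧ x j ≤ 1 - w := by
    intro j h1 h2
    have := hr j h1 h2
    simp only [hx]; constructor <;> linarith [this.1, this.2]
  have hsp : ∀ j, a ≤ j → j < b → 2 * w ≤ s j := fun j h1 h2 =>
    two_mul_le_sin hw (hxr j h1 h2).1 (hxr j h1 h2).2
  have hun : ∀ j, a ≤ j → j < b → ‖u j‖ = 1 / (2 * s j) := by
    intro j h1 h2
    have := hsp j h1 h2
    simp only [hu, norm_inv, norm_e_sub_one]
    rw [abs_of_pos (by linarith), one_div]
  have hune : ∀ j, a ≤ j → j < b → e (x j) - 1 ≠ 0 := by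
    intro j h1 h2
    have := hsp j h1 h2
    rw [← norm_ne_zero_iff, norm_e_sub_one, abs_of_pos (by linarith)]
    linarith
  have hub : ∀ j, a ≤ j → j < b → ‖u j‖ ≤ 1 / (4 * w) := by
    intro j h1 h2
    rw [hun j h1 h2]
    apply one_div_le_one_div_of_le (by linarith)
    linarith [hsp j h1 h2]
  have hctb : ∀ j, a ≤ j → j < b → |ct j| ≤ 1 / (2 * w) := by
    intro j h1 h2
    have := hsp j h1 h2
    simp only [hct]
    rw [abs_div, abs_of_pos (show 0 < s j by linarith)]
    exact div_le_div₀ zero_le_one (Real.abs_cos_le_one _) (by linarith) this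
  have hz : ∀ j, a ≤ j → j < b → e (f j) = u j * (e (f (j + 1)) - e (f j)) := by
    intro j h1 h2
    have : e (f (j + 1)) = e (f j) * e (x j) := by
      rw [← e_add, show f j + x j = f (j + 1) + ((-k : ℤ) : ℝ) by simp only [hx]; push_cast; ring,
        e_add, e_int, mul_one]
    rw [this]
    have := hune j h1 h2
    simp only [hu]
    field_simp
  have hdu : ∀ j, a ≤ j → j + 1 < b → ‖u j - u (j + 1)‖ ≤ (ct j - ct (j + 1)) / 2 := by
    intro j h1 h2
    have n1 := hune j h1 (by omega)
    have n2 := hune (j + 1) (by omega) h2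
    have s1 := hsp j h1 (by omega)
    have s2 := hsp (j + 1) (by omega) h2
    have m := hmono j h1 h2
    have e1 : u j - u (j + 1) = (e (x (j + 1)) - e (x j)) * (u j * u (j + 1)) := by
      simp only [hu]; field_simp; ring
    have x1 := hxr j h1 (by omega)
    have x2 := hxr (j + 1) (by omega) h2
    have hsub : 0 ≤ x (j + 1) - x j := by
      simp only [hx]
      have : f (j + 1 + 1) = f (j + 2) := rfl
      linarith
    have hsn : 0 ≤ Real.sin (Real.pi * (x (j + 1) - x j)) := by
      apply Real.sin_nonneg_of_nonneg_of_le_pi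
      · have := Real.pi_pos; positivity
      · nlinarith [Real.pi_pos]
    rw [e1, norm_mul, norm_mul, hun j h1 (by omega), hun (j + 1) (by omega) h2, norm_e_sub_e,
      abs_of_nonneg hsn]
    apply le_of_eq
    have s1' : s j ≠ 0 := by linarith
    have s2' : s (j + 1) ≠ 0 := by linarith
    have : Real.sin (Real.pi * (x (j + 1) - x j)) =
        s (j + 1) * Real.cos (Real.pi * x j) - Real.cos (Real.pi * x (j + 1)) * s j := by
      rw [mul_sub, Real.sin_sub]
    rw [this]
    simp only [hct]
    field_simp
  have main : ∀ n, a + 1 + n ≤ b →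
      ‖∑ j ∈ Finset.Ico a (a + 1 + n), e (f j) - u (a + n) * e (f (a + n + 1))‖
        ≤ 1 / (4 * w) + (ct a - ct (a + n)) / 2 := by
    intro n
    induction n with
    | zero =>
      intro h
      simp only [add_zero, Nat.Ico_succ_singleton, Finset.sum_singleton, sub_self, zero_div]
      have : e (f a) - u a * e (f (a + 1)) = - (u a * e (f a)) := by
        have := hz a le_rfl hab
        linear_combination this
      rw [this, norm_neg, norm_mul, norm_e, mul_one]
      exact hub a le_rfl hab
    | succ n ih =>
      intro h
      have ih := ih (by omega)
      rw [show a + 1 + (n + 1) = (a + 1 + n) + 1 by ring, Finset.sum_Ico_succ_top (by omega)]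
      have h1 := hz (a + 1 + n) (by omega) (by omega)
      have h2 := hdu (a + n) (by omega) (by omega)
      have e1 : a + 1 + n = a + n + 1 := by ring
      have e2 : a + (n + 1) = a + n + 1 := by ring
      rw [e1] at h1 ih ⊢
      rw [e2]
      have : ∑ j ∈ Finset.Ico a (a + n + 1), e (f j) + e (f (a + n + 1))
          - u (a + n + 1) * e (f (a + n + 1 + 1)) =
          (∑ j ∈ Finset.Ico a (a + n + 1), e (f j) - u (a + n) * e (f (a + n + 1))) +
          (u (a + n) - u (a + n + 1)) * e (f (a + n + 1)) := by
        linear_combination h1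
      rw [this]
      refine (norm_add_le _ _).trans ?_
      rw [norm_mul, norm_e, mul_one]
      linarith
  obtain ⟨n, rfl⟩ : ∃ n, b = a + 1 + n := ⟨b - (a + 1), by omega⟩
  have h := main n le_rfl
  have h1 := hub (a + n) (by omega) (by omega)
  have h2 := abs_le.1 (hctb a le_rfl hab)
  have h3 := abs_le.1 (hctb (a + n) (by omega) (by omega))
  have h4 : ‖∑ j ∈ Finset.Ico a (a + 1 + n), e (f j)‖ ≤
      ‖∑ j ∈ Finset.Ico a (a + 1 + n), e (f j) - u (a + n) * e (f (a + n + 1))‖ + ‖u (a + n)‖ := by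
    have := norm_add_le (∑ j ∈ Finset.Ico a (a + 1 + n), e (f j) - u (a + n) * e (f (a + n + 1)))
      (u (a + n) * e (f (a + n + 1)))
    rwa [sub_add_cancel, norm_mul (u (a + n)), norm_e, mul_one] at this
  have e1 : 1 / (4 * w) = (1 / w) / 4 := by field_simp
  have e2 : 1 / (2 * w) = (1 / w) / 2 := by field_simp
  rw [e1] at h h1
  rw [e2] at h2 h3
  linarith [h2.2, h3.1]

/-! ### The second derivative test -/

/-- A finite order-convex set of natural numbers is an interval. -/
lemma convex_eq_Ico (s : Finset ℕ)
    (hs : ∀ i ∈ s, ∀ j ∈ s, ∀ l, i ≤ l → l ≤ j → l ∈ s) :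
    ∃ a b, s = Finset.Ico a b := by
  rcases s.eq_empty_or_nonempty with rfl | hne
  · exact ⟨0, 0, by simp⟩
  · refine ⟨s.min' hne, s.max' hne + 1, ?_⟩
    ext l
    rw [Finset.mem_Ico]
    constructor
    · intro h
      exact ⟨s.min'_le l h, Nat.lt_succ_of_le (s.le_max' l h)⟩
    · rintro ⟨h1, h2⟩
      exact hs _ (s.min'_mem hne) _ (s.max'_mem hne) l h1 (by omega)

/-- Points whose increments are at least `lam` and which lie in an interval of length `w`
are few. -/
lemma card_le_of_spaced (K : ℕ) (g : ℕ → ℝ) (lam w y : ℝ) (hlam : 0 < lam) (hw : 0 ≤ w)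
    (hg : ∀ i j, i ≤ j → j < K → g i + lam * (j - i : ℝ) ≤ g j)
    (s : Finset ℕ) (hsK : ∀ j ∈ s, j < K) (hsy : ∀ j ∈ s, y ≤ g j ∧ g j ≤ y + w) :
    (s.card : ℝ) ≤ w / lam + 1 := by
  rcases s.eq_empty_or_nonempty with rfl | hne
  · simp; positivity
  · have h1 : s ⊆ Finset.Icc (s.min' hne) (s.max' hne) := fun l hl =>
      Finset.mem_Icc.2 ⟨s.min'_le l hl, s.le_max' l hl⟩
    have h2 := Finset.card_le_card h1
    rw [Nat.card_Icc] at h2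
    have hle := s.min'_le _ (s.max'_mem hne)
    have h3 := hg _ _ hle (hsK _ (s.max'_mem hne))
    have h4 := hsy _ (s.min'_mem hne)
    have h5 := hsy _ (s.max'_mem hne)
    have h6 : (s.card : ℝ) ≤ (s.max' hne : ℝ) - (s.min' hne : ℝ) + 1 := by
      have : s.card + s.min' hne ≤ s.max' hne + 1 := by omega
      have : (s.card : ℝ) + s.min' hne ≤ s.max' hne + 1 := by exact_mod_cast this
      linarith
    have h7 : (s.max' hne : ℝ) - (s.min' hne : ℝ) ≤ w / lam := by
      rw [le_div_iff₀ hlam]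
      nlinarith [h4.1, h5.2]
    linarith

/-- The discrete second derivative test: the increments of `f` pass at most `A λ K + 2` integers,
and near each of them the sum is estimated trivially within distance `√λ` and by the
Kusmin–Landau inequality elsewhere. -/
lemma second_diff_test (f : ℕ → ℝ) (K : ℕ) (lam A : ℝ) (hlam : 0 < lam) (hlam4 : lam ≤ 1 / 4)
    (hA : 1 ≤ A)
    (h2 : ∀ j, j + 2 ≤ K → lam ≤ f (j + 2) - 2 * f (j + 1) + f j ∧
      f (j + 2) - 2 * f (j + 1) + f j ≤ A * lam) :
    ‖∑ j ∈ Finset.range K, e (f j)‖ ≤ (A * lam * K + 2) * (5 / √lam) := by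
  rcases Nat.eq_zero_or_pos K with rfl | hK
  · simp; positivity
  set g : ℕ → ℝ := fun j => f (j + 1) - f j with hg
  have step : ∀ j, j + 1 < K → g j + lam ≤ g (j + 1) ∧ g (j + 1) ≤ g j + A * lam := by
    intro j hj
    have := h2 j (by omega)
    simp only [hg]
    have e1 : f (j + 1 + 1) = f (j + 2) := rfl
    rw [e1]
    constructor <;> linarith [this.1, this.2]
  have hgl : ∀ i j, i ≤ j → j < K → g i + lam * (j - i : ℝ) ≤ g j := by
    intro i j hij
    induction j, hij using Nat.le_induction with
    | base => intro _; simp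
    | succ j hij ih =>
      intro hj
      have := ih (by omega)
      have := (step j hj).1
      push_cast
      linarith
  have hgu : ∀ j, j < K → g j ≤ g 0 + A * lam * j := by
    intro j
    induction j with
    | zero => intro _; simp
    | succ j ih =>
      intro hj
      have := ih (by omega)
      have := (step j hj).2
      push_cast
      linarith
  have hgm : ∀ i j, i ≤ j → j < K → g i ≤ g j := by
    intro i j hij hj
    have := hgl i j hij hj
    have h : (0:ℝ) ≤ j - i := by
      have : (i:ℝ) ≤ j := by exact_mod_cast hij
      linarith
    nlinarith
  set w := √lam with hw
  have hw0 : 0 < w := Real.sqrt_pos.2 hlam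
  have hww : w * w = lam := Real.mul_self_sqrt hlam.le
  have hw2 : w ≤ 1 / 2 := by nlinarith
  set ks := Finset.Icc ⌊g 0⌋ ⌊g (K - 1)⌋ with hks
  have hmaps : ∀ j ∈ Finset.range K, ⌊g j⌋ ∈ ks := by
    intro j hj
    rw [Finset.mem_range] at hj
    rw [hks, Finset.mem_Icc]
    exact ⟨Int.floor_le_floor (hgm 0 j (by omega) hj),
      Int.floor_le_floor (hgm j (K - 1) (by omega) (by omega))⟩
  rw [← Finset.sum_fiberwise_of_maps_to hmaps]
  have hcard : (ks.card : ℝ) ≤ A * lam * K + 2 := by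
    have hle : ⌊g 0⌋ ≤ ⌊g (K - 1)⌋ := Int.floor_le_floor (hgm 0 (K - 1) (by omega) (by omega))
    rw [hks, Int.card_Icc]
    have : ((⌊g (K - 1)⌋ + 1 - ⌊g 0⌋).toNat : ℝ) = ⌊g (K - 1)⌋ + 1 - ⌊g 0⌋ := by
      have : ((⌊g (K - 1)⌋ + 1 - ⌊g 0⌋).toNat : ℤ) = ⌊g (K - 1)⌋ + 1 - ⌊g 0⌋ :=
        Int.toNat_of_nonneg (by omega)
      exact_mod_cast this
    rw [this]
    have a1 := Int.floor_le (g (K - 1))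
    have a2 := Int.lt_floor_add_one (g 0)
    have a3 := hgu (K - 1) (by omega)
    have a4 : A * lam * ((K - 1 : ℕ) : ℝ) ≤ A * lam * K := by
      apply mul_le_mul_of_nonneg_left _ (by positivity)
      exact_mod_cast Nat.sub_le K 1
    linarith
  have per : ∀ k ∈ ks, ‖∑ j ∈ (Finset.range K).filter (fun j => ⌊g j⌋ = k), e (f j)‖ ≤ 5 / w := by
    intro k _
    set s := (Finset.range K).filter (fun j => ⌊g j⌋ = k) with hs
    have hmem : ∀ j, j ∈ s ↔ j < K ∧ (k : ℝ) ≤ g j ∧ g j < k + 1 := by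
      intro j
      rw [hs, Finset.mem_filter, Finset.mem_range, Int.floor_eq_iff]
    set s1 := s.filter (fun j => g j < k + w) with hs1
    set s2 := (s.filter (fun j => ¬ g j < k + w)).filter (fun j => k + 1 - w < g j) with hs2
    set s3 := (s.filter (fun j => ¬ g j < k + w)).filter (fun j => ¬ k + 1 - w < g j) with hs3
    have hsplit : ∑ j ∈ s, e (f j) = ∑ j ∈ s1, e (f j) + (∑ j ∈ s2, e (f j) + ∑ j ∈ s3, e (f j)) := by
      rw [hs1, hs2, hs3, Finset.sum_filter_add_sum_filter_not, Finset.sum_filter_add_sum_filter_not]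
    have triv : ∀ t : Finset ℕ, ‖∑ j ∈ t, e (f j)‖ ≤ t.card := by
      intro t
      refine (norm_sum_le _ _).trans ?_
      simp [norm_e]
    have c1 : (s1.card : ℝ) ≤ w / lam + 1 := by
      apply card_le_of_spaced K g lam w k hlam hw0.le hgl
      · intro j hj
        rw [hs1, Finset.mem_filter, hmem] at hj
        exact hj.1.1
      · intro j hj
        rw [hs1, Finset.mem_filter, hmem] at hj
        exact ⟨hj.1.2.1, hj.2.le⟩
    have c2 : (s2.card : ℝ) ≤ w / lam + 1 := by
      apply card_le_of_spaced K g lam w (k + 1 - w) hlam hw0.le hgl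
      · intro j hj
        rw [hs2, Finset.mem_filter, Finset.mem_filter, hmem] at hj
        exact hj.1.1.1
      · intro j hj
        rw [hs2, Finset.mem_filter, Finset.mem_filter, hmem] at hj
        exact ⟨hj.2.le, by linarith [hj.1.1.2.2]⟩
    have c3 : ‖∑ j ∈ s3, e (f j)‖ ≤ 1 / w := by
      have m3 : ∀ j, j ∈ s3 ↔ j < K ∧ k + w ≤ g j ∧ g j ≤ k + 1 - w := by
        intro j
        rw [hs3, Finset.mem_filter, Finset.mem_filter, hmem]
        push Not
        constructor
        · rintro ⟨⟨⟨h1, h2, h3⟩, h4⟩, h5⟩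
          exact ⟨h1, h4, h5⟩
        · rintro ⟨h1, h2, h3⟩
          exact ⟨⟨⟨h1, by linarith, by linarith⟩, h2⟩, h3⟩
      obtain ⟨a, b, hab⟩ := convex_eq_Ico s3 (by
        intro i hi j hj l hil hlj
        rw [m3] at hi hj ⊢
        have hl : l < K := by omega
        exact ⟨hl, hi.2.1.trans (hgm i l hil hl), (hgm l j hlj hj.1).trans hj.2.2⟩)
      rw [hab]
      have mm : ∀ j, a ≤ j → j < b → j < K ∧ k + w ≤ g j ∧ g j ≤ k + 1 - w := by
        intro j h1 h2
        rw [← m3, hab, Finset.mem_Ico]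
        exact ⟨h1, h2⟩
      apply kusmin_landau f a b k w hw0
      · intro j h1 h2
        have := hgm j (j + 1) (by omega) (mm (j + 1) (by omega) h2).1
        exact this
      · intro j h1 h2
        exact (mm j h1 h2).2
    rw [hsplit]
    have n1 := norm_add_le (∑ j ∈ s1, e (f j)) (∑ j ∈ s2, e (f j) + ∑ j ∈ s3, e (f j))
    have n2 := norm_add_le (∑ j ∈ s2, e (f j)) (∑ j ∈ s3, e (f j))
    have n3 := triv s1
    have n4 := triv s2
    have e1 : w / lam = 1 / w := by rw [← hww]; field_simp
    rw [e1] at c1 c2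
    have e2 : 2 ≤ 1 / w := by rw [le_div_iff₀ hw0]; linarith
    have e3 : 5 / w = 5 * (1 / w) := by ring
    rw [e3]
    linarith
  calc ‖∑ k ∈ ks, ∑ j ∈ (Finset.range K).filter (fun j => ⌊g j⌋ = k), e (f j)‖
      ≤ ∑ k ∈ ks, (5 / w) := norm_sum_le_of_le _ per
    _ = ks.card * (5 / w) := by rw [Finset.sum_const, nsmul_eq_mul]
    _ ≤ _ := by
      apply mul_le_mul_of_nonneg_right hcard
      positivity

/-- The mean value theorem for the second difference of `t ^ c`. -/
lemma second_diff_rpow (c x h : ℝ) (hx : 0 < x) (hh : 0 < h) :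
    ∃ z, x < z ∧ z < x + 2 * h ∧
      (x + 2 * h) ^ c - 2 * (x + h) ^ c + x ^ c = c * (c - 1) * h ^ 2 * z ^ (c - 2) := by
  have d1 : ∀ y : ℝ, 0 < y → HasDerivAt (fun t : ℝ => t ^ c) (c * y ^ (c - 1)) y := fun y hy =>
    Real.hasDerivAt_rpow_const (Or.inl hy.ne')
  have d2 : ∀ y : ℝ, 0 < y → HasDerivAt (fun t : ℝ => c * t ^ (c - 1))
      (c * ((c - 1) * y ^ (c - 2))) y := fun y hy => by
    have := (Real.hasDerivAt_rpow_const (x := y) (p := c - 1) (Or.inl hy.ne')).const_mul c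
    rwa [show c - 1 - 1 = c - 2 by ring] at this
  have d3 : ∀ y : ℝ, 0 < y → HasDerivAt (fun t : ℝ => (t + h) ^ c - t ^ c)
      (c * (y + h) ^ (c - 1) - c * y ^ (c - 1)) y := fun y hy => by
    have := (d1 (y + h) (by linarith)).comp_add_const y h
    exact this.sub (d1 y hy)
  obtain ⟨y, hy, hy'⟩ := exists_hasDerivAt_eq_slope (fun t : ℝ => (t + h) ^ c - t ^ c)
    (fun y => c * (y + h) ^ (c - 1) - c * y ^ (c - 1)) (show x < x + h by linarith)
    (fun y hy => (d3 y (by linarith [hy.1])).continuousAt.continuousWithinAt)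
    (fun y hy => d3 y (by linarith [hy.1]))
  obtain ⟨z, hz, hz'⟩ := exists_hasDerivAt_eq_slope (fun t : ℝ => c * t ^ (c - 1))
    (fun t => c * ((c - 1) * t ^ (c - 2))) (show y < y + h by linarith)
    (fun t ht => (d2 t (by linarith [ht.1, hy.1])).continuousAt.continuousWithinAt)
    (fun t ht => d2 t (by linarith [ht.1, hy.1]))
  refine ⟨z, by linarith [hz.1, hy.1], by linarith [hz.2, hy.2], ?_⟩
  rw [eq_div_iff (by linarith)] at hy' hz'
  rw [show x + h + h = x + 2 * h by ring] at hy'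
  rw [show x + h - x = h by ring] at hy'
  rw [show y + h - y = h by ring] at hz'
  linear_combination -hy' - h * hz'

lemma norm_sum_e_neg {ι : Type*} (s : Finset ι) (f : ι → ℝ) :
    ‖∑ i ∈ s, e (-f i)‖ = ‖∑ i ∈ s, e (f i)‖ := by
  rw [← RCLike.norm_conj (∑ i ∈ s, e (f i)), map_sum]
  simp only [conj_e]

/-- A residue class inside an interval is an arithmetic progression. -/
lemma Ioc_filter_modEq (u v q a : ℕ) (hq : 0 < q)
    (hne : ((Finset.Ioc u v).filter (fun m => m ≡ a [MOD q])).Nonempty) :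
    ∃ m₀ n : ℕ, u < m₀ ∧ m₀ + q * n ≤ v ∧ (Finset.Ioc u v).filter (fun m => m ≡ a [MOD q]) =
      (Finset.range (n + 1)).image (fun j => m₀ + q * j) := by
  set s := (Finset.Ioc u v).filter (fun m => m ≡ a [MOD q]) with hs
  have h0 := s.min'_mem hne
  set m₀ := s.min' hne with hm
  rw [hs, Finset.mem_filter, Finset.mem_Ioc] at h0
  have hdiv := Nat.div_mul_le_self (v - m₀) q
  refine ⟨m₀, (v - m₀) / q, h0.1.1, ?_, ?_⟩
  · rw [mul_comm]; omega
  · ext m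
    rw [Finset.mem_image]
    constructor
    · intro h
      have hle : m₀ ≤ m := s.min'_le m h
      rw [hs, Finset.mem_filter, Finset.mem_Ioc] at h
      have h1 : m₀ ≡ m [MOD q] := h0.2.trans h.2.symm
      obtain ⟨j, hj⟩ := (Nat.modEq_iff_dvd' hle).1 h1
      refine ⟨j, ?_, by omega⟩
      rw [Finset.mem_range, Nat.lt_succ_iff, Nat.le_div_iff_mul_le hq, mul_comm]
      omega
    · rintro ⟨j, hj, rfl⟩
      rw [Finset.mem_range, Nat.lt_succ_iff, Nat.le_div_iff_mul_le hq, mul_comm] at hj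
      rw [hs, Finset.mem_filter, Finset.mem_Ioc]
      refine ⟨⟨by omega, by omega⟩, ?_⟩
      have : m₀ + q * j ≡ m₀ [MOD q] := by simp [Nat.ModEq]
      exact this.trans h0.2

set_option maxHeartbeats 800000 in
/-- The second derivative test for `κ m ^ c`, with `m ≍ M` in a residue class. -/
lemma power_sum_bound (c A : ℝ) (hc1 : 1 < c) (hc2 : c < 2) (hA : 1 ≤ A) :
    ∃ C : ℝ, 1 ≤ C ∧ ∀ (κ M : ℝ) (q a u v : ℕ), κ ≠ 0 → 1 ≤ M → 0 < q → M ≤ u + 1 → v ≤ A * M →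
      ‖∑ m ∈ (Finset.Ioc u v).filter (fun m => m ≡ a [MOD q]), e (κ * (m : ℝ) ^ c)‖ ≤
        C * (√(|κ| * M ^ c) + M / √(|κ| * M ^ c)) := by
  have hA0 : 0 < A := by linarith
  set B := c * (c - 1) * A ^ (c - 2) with hB
  have hB0 : 0 < B := by
    have : 0 < c - 1 := by linarith
    positivity
  set b := √B with hb
  have hb0 : 0 < b := Real.sqrt_pos.2 hB0
  have hbb : b ^ 2 = B := Real.sq_sqrt hB0.le
  refine ⟨1 + 5 * A ^ 2 * b + 10 / b + 2 * b * A, ?_, ?_⟩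
  · have : 0 ≤ 5 * A ^ 2 * b + 10 / b + 2 * b * A := by positivity
    linarith
  have pos : ∀ (κ M : ℝ) (q a u v : ℕ), 0 < κ → 1 ≤ M → 0 < q → M ≤ u + 1 → v ≤ A * M →
      ‖∑ m ∈ (Finset.Ioc u v).filter (fun m => m ≡ a [MOD q]), e (κ * (m : ℝ) ^ c)‖ ≤
        (1 + 5 * A ^ 2 * b + 10 / b + 2 * b * A) * (√(κ * M ^ c) + M / √(κ * M ^ c)) := by
    intro κ M q a u v hκ hM hq hu hv
    have hM0 : 0 < M := by linarith
    set F := κ * M ^ c with hF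
    have hF0 : 0 < F := by positivity
    set s := √F with hs
    have hs0 : 0 < s := Real.sqrt_pos.2 hF0
    have hss : s ^ 2 = F := Real.sq_sqrt hF0.le
    have hone : 1 ≤ s + M / s := by
      have : s + M / s = (s ^ 2 + M) / s := by field_simp
      rw [this, le_div_iff₀ hs0]
      nlinarith [sq_nonneg (s - 1)]
    rcases ((Finset.Ioc u v).filter (fun m => m ≡ a [MOD q])).eq_empty_or_nonempty with h | hne
    · rw [h]; simp; positivity
    obtain ⟨m₀, n, hm₀, hn, heq⟩ := Ioc_filter_modEq u v q a hq hne
    rw [heq, Finset.sum_image (by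
      intro i _ j _ hij
      have : q * i = q * j := by simpa using hij
      exact Nat.eq_of_mul_eq_mul_left hq this)]
    have hmM : M ≤ m₀ := by
      have : (u : ℝ) + 1 ≤ m₀ := by exact_mod_cast hm₀
      linarith
    have hq1 : (1 : ℝ) ≤ q := by exact_mod_cast hq
    have hqn : (m₀ : ℝ) + q * n ≤ A * M := by
      have : (m₀ : ℝ) + q * n ≤ v := by exact_mod_cast hn
      linarith
    set lam := F * B * q ^ 2 / M ^ 2 with hlam
    have hlam0 : 0 < lam := by positivity
    have hsl : √lam = b * s * q / M := by
      rw [Real.sqrt_eq_iff_mul_self_eq hlam0.le (by positivity), hlam, ← hss, ← hbb]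
      field_simp
    have hnb : b * s * q / M * n ≤ b * s * A := by
      rw [div_mul_eq_mul_div, div_le_iff₀ hM0]
      have : (q:ℝ) * n ≤ A * M := by linarith [show (0:ℝ) ≤ m₀ from Nat.cast_nonneg _]
      have hbs : 0 ≤ b * s := by positivity
      nlinarith
    have hMs : 0 ≤ M / s := by positivity
    have hnorm : ∀ k : ℕ, ‖∑ j ∈ Finset.range k, e (κ * ((m₀ + q * j : ℕ) : ℝ) ^ c)‖ ≤ k := by
      intro k
      refine (norm_sum_le _ _).trans ?_
      simp [norm_e]
    rcases le_or_gt lam (1 / 4) with hl | hl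
    · have key := second_diff_test (fun j => κ * ((m₀ + q * j : ℕ) : ℝ) ^ c) n lam A hlam0 hl hA ?_
      · rw [Finset.sum_range_succ]
        refine (norm_add_le _ _).trans ?_
        rw [norm_e]
        have hl2 : lam = √lam * √lam := (Real.mul_self_sqrt hlam0.le).symm
        have hsl0 : 0 < √lam := Real.sqrt_pos.2 hlam0
        have e1 : (A * lam * n + 2) * (5 / √lam) = 5 * A * (√lam * n) + 10 / √lam := by
          have h3 : lam / √lam = √lam := by rw [div_eq_iff hsl0.ne']; exact hl2
          have h4 : (A * lam * n + 2) * (5 / √lam) = 5 * A * (lam / √lam * n) + 10 / √lam := by ring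
          rw [h4, h3]
        rw [e1] at key
        have e2 : 10 / √lam ≤ 10 / b * (M / s) := by
          rw [hsl]
          have : 10 / (b * s * q / M) = 10 / b * (M / s) / q := by field_simp
          rw [this]
          exact div_le_self (by positivity) hq1
        have e3 : 5 * A * (√lam * n) ≤ 5 * A ^ 2 * b * s := by
          rw [hsl]
          have := mul_le_mul_of_nonneg_left hnb (show 0 ≤ 5 * A by positivity)
          linarith
        have p1 : 0 ≤ 5 * A ^ 2 * b * (M / s) := by positivity
        have p2 : 0 ≤ 10 / b * s := by positivity
        have p3 : 0 ≤ 2 * b * A * (s + M / s) := by positivity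
        have e4 : (1 + 5 * A ^ 2 * b + 10 / b + 2 * b * A) * (s + M / s) =
            (s + M / s) + 5 * A ^ 2 * b * s + 5 * A ^ 2 * b * (M / s) + 10 / b * s +
              10 / b * (M / s) + 2 * b * A * (s + M / s) := by ring
        rw [e4]
        linarith
      · intro j hj
        have hx0 : 0 < ((m₀ + q * j : ℕ) : ℝ) := by
          push_cast
          have : (0:ℝ) ≤ q * j := by positivity
          linarith
        obtain ⟨z, hz1, hz2, hz⟩ := second_diff_rpow c ((m₀ + q * j : ℕ) : ℝ) q hx0 (by linarith)
        have c1 : ((m₀ + q * (j + 2) : ℕ) : ℝ) = ((m₀ + q * j : ℕ) : ℝ) + 2 * q := by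
          push_cast; ring
        have c2 : ((m₀ + q * (j + 1) : ℕ) : ℝ) = ((m₀ + q * j : ℕ) : ℝ) + q := by
          push_cast; ring
        rw [c1, c2]
        have e1 : κ * (((m₀ + q * j : ℕ) : ℝ) + 2 * q) ^ c - 2 * (κ * (((m₀ + q * j : ℕ) : ℝ) + q) ^ c)
            + κ * ((m₀ + q * j : ℕ) : ℝ) ^ c = κ * (c * (c - 1) * q ^ 2) * z ^ (c - 2) := by
          rw [mul_assoc κ, ← hz]; ring
        rw [e1]
        have hzM : M ≤ z := by
          have : M ≤ ((m₀ + q * j : ℕ) : ℝ) := by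
            push_cast
            have : (0:ℝ) ≤ q * j := by positivity
            linarith
          linarith
        have hzA : z ≤ A * M := by
          have : (q:ℝ) * (j + 2) ≤ q * n := by
            apply mul_le_mul_of_nonneg_left _ (by linarith)
            exact_mod_cast hj
          have h3 : ((m₀ + q * j : ℕ) : ℝ) + 2 * q ≤ m₀ + q * n := by push_cast; linarith
          linarith
        have l1 : (A * M) ^ (c - 2) ≤ z ^ (c - 2) :=
          Real.rpow_le_rpow_of_nonpos (by linarith) hzA (by linarith)
        have l2 : z ^ (c - 2) ≤ M ^ (c - 2) :=
          Real.rpow_le_rpow_of_nonpos hM0 hzM (by linarith)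
        have e2 : M ^ (c - 2) = M ^ c / M ^ 2 := by
          rw [Real.rpow_sub hM0]; norm_cast
        have e3 : lam = κ * (c * (c - 1) * q ^ 2) * (A * M) ^ (c - 2) := by
          rw [Real.mul_rpow hA0.le hM0.le, e2, hlam, hF, hB]
          ring
        have pp : 0 ≤ κ * (c * (c - 1) * q ^ 2) := by
          have : 0 < c - 1 := by linarith
          positivity
        constructor
        · rw [e3]
          exact mul_le_mul_of_nonneg_left l1 pp
        · have l3 : M ^ (c - 2) ≤ A * (A * M) ^ (c - 2) := by
            rw [Real.mul_rpow hA0.le hM0.le, ← mul_assoc]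
            apply le_mul_of_one_le_left (by positivity)
            have : A * A ^ (c - 2) = A ^ (c - 1) := by
              rw [← Real.rpow_one_add' hA0.le (by linarith)]; ring_nf
            rw [this]
            exact Real.one_le_rpow hA (by linarith)
          rw [e3]
          calc _ ≤ κ * (c * (c - 1) * q ^ 2) * (A * (A * M) ^ (c - 2)) :=
                mul_le_mul_of_nonneg_left (l2.trans l3) pp
            _ = _ := by ring
    · refine (hnorm (n + 1)).trans ?_
      have h1 : 1 / 2 ≤ √lam := by
        apply Real.le_sqrt_of_sq_le; linarith
      push_cast
      have h2 : (n:ℝ) ≤ 2 * (√lam * n) := by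
        have : (0:ℝ) ≤ n := Nat.cast_nonneg _
        nlinarith
      rw [hsl] at h2
      have p1 : 0 ≤ 5 * A ^ 2 * b * (s + M / s) := by positivity
      have p2 : 0 ≤ 10 / b * (s + M / s) := by positivity
      have p3 : 0 ≤ 2 * b * A * (M / s) := by positivity
      have e4 : (1 + 5 * A ^ 2 * b + 10 / b + 2 * b * A) * (s + M / s) =
          (s + M / s) + 5 * A ^ 2 * b * (s + M / s) + 10 / b * (s + M / s) +
            2 * (b * s * A) + 2 * b * A * (M / s) := by ring
      rw [e4]
      linarith
  intro κ M q a u v hκ hM hq hu hv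
  rcases lt_or_gt_of_ne hκ with h | h
  · have := pos (-κ) M q a u v (by linarith) hM hq hu hv
    rw [abs_of_neg h]
    simp only [neg_mul] at this ⊢
    rwa [norm_sum_e_neg] at this
  · rw [abs_of_pos h]
    exact pos κ M q a u v h hM hq hu hv

/-- Given one solution `m₀`, the solutions of `m k ≡ -2 (mod d)` with `d` odd form a residue class:
`k` is invertible modulo `d` because a common factor would divide `2`. -/
lemma dvd_iff_modEq {d k m₀ : ℕ} (hd : Odd d) (h0 : d ∣ m₀ * k + 2) (m : ℕ) :
    d ∣ m * k + 2 ↔ m ≡ m₀ [MOD d] := by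
  have hcop : Nat.gcd d k = 1 := by
    have h1 : Nat.gcd d k ∣ 2 := by
      have h2 : Nat.gcd d k ∣ m₀ * k + 2 := (Nat.gcd_dvd_left d k).trans h0
      have h3 : Nat.gcd d k ∣ m₀ * k := (Nat.gcd_dvd_right d k).mul_left m₀
      exact (Nat.dvd_add_right h3).1 h2
    rcases (Nat.dvd_prime Nat.prime_two).1 h1 with h | h
    · exact h
    · exfalso
      have : 2 ∣ d := h ▸ Nat.gcd_dvd_left d k
      exact (Nat.not_even_iff_odd.2 hd) (even_iff_two_dvd.2 this)
  have h0' : m₀ * k + 2 ≡ 0 [MOD d] := (Nat.modEq_zero_iff_dvd).2 h0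
  rw [← Nat.modEq_zero_iff_dvd]
  constructor
  · intro h
    have h1 : m * k + 2 ≡ m₀ * k + 2 [MOD d] := h.trans h0'.symm
    have h2 : m * k ≡ m₀ * k [MOD d] := Nat.ModEq.add_right_cancel' 2 h1
    exact Nat.ModEq.cancel_right_of_coprime hcop h2
  · intro h
    exact ((h.mul_right k).add_right 2).trans h0'

/-- For odd moduli the two divisibility conditions cut out at most one residue class modulo
`lcm d₁ d₂`. -/
lemma cong_class (d₁ d₂ k₁ k₂ : ℕ) (h₁ : Odd d₁) (h₂ : Odd d₂) :
    (∀ m, ¬ (d₁ ∣ m * k₁ + 2 ∧ d₂ ∣ m * k₂ + 2)) ∨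
    ∃ a, ∀ m, (d₁ ∣ m * k₁ + 2 ∧ d₂ ∣ m * k₂ + 2) ↔ m ≡ a [MOD Nat.lcm d₁ d₂] := by
  by_cases h : ∃ m₀, d₁ ∣ m₀ * k₁ + 2 ∧ d₂ ∣ m₀ * k₂ + 2
  · obtain ⟨m₀, h3, h4⟩ := h
    right
    refine ⟨m₀, fun m => ?_⟩
    rw [dvd_iff_modEq h₁ h3, dvd_iff_modEq h₂ h4]
    constructor
    · rintro ⟨a1, a2⟩
      rw [Nat.modEq_iff_dvd] at *
      exact Int.natCast_dvd.2 (Nat.lcm_dvd (Int.natCast_dvd.1 a1) (Int.natCast_dvd.1 a2))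
    · intro h
      exact ⟨h.of_dvd (Nat.dvd_lcm_left _ _), h.of_dvd (Nat.dvd_lcm_right _ _)⟩
  · left
    push Not at h
    intro m hm
    exact h m hm.1 hm.2

lemma power_sum_cong (c A : ℝ) (hc1 : 1 < c) (hc2 : c < 2) (hA : 1 ≤ A) :
    ∃ C : ℝ, 1 ≤ C ∧ ∀ (κ M : ℝ) (d₁ d₂ k₁ k₂ u v : ℕ), κ ≠ 0 → 1 ≤ M → Odd d₁ → Odd d₂ →
      M ≤ u + 1 → v ≤ A * M →
      ‖∑ m ∈ (Finset.Ioc u v).filter (fun m => d₁ ∣ m * k₁ + 2 ∧ d₂ ∣ m * k₂ + 2),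
          e (κ * (m : ℝ) ^ c)‖ ≤ C * (√(|κ| * M ^ c) + M / √(|κ| * M ^ c)) := by
  obtain ⟨C, hC, h⟩ := power_sum_bound c A hc1 hc2 hA
  refine ⟨C, hC, ?_⟩
  intro κ M d₁ d₂ k₁ k₂ u v hκ hM h₁ h₂ hu hv
  rcases cong_class d₁ d₂ k₁ k₂ h₁ h₂ with h0 | ⟨a, ha⟩
  · rw [Finset.filter_false_of_mem (fun m _ => h0 m)]
    simp only [Finset.sum_empty, norm_zero]
    positivity
  · simp only [ha]
    exact h κ M _ a u v hκ hM (Nat.lcm_pos h₁.pos h₂.pos) hu hv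

/-! ### The divisor bound -/

/-- `τ(n) ≪ n ^ ε`: only primes below `2 ^ (1 / ε)` contribute more than `1` to
`τ(n) / n ^ ε`, each a bounded factor. -/
lemma divisor_bound (ε : ℝ) (hε : 0 < ε) :
    ∃ C : ℝ, 1 ≤ C ∧ ∀ n : ℕ, n ≠ 0 → (n.divisors.card : ℝ) ≤ C * (n : ℝ) ^ ε := by
  set C1 : ℝ := 1 / (ε * Real.log 2) + 1 with hC1
  have hl2 : 0 < Real.log 2 := Real.log_pos (by norm_num)
  have hC1' : 1 ≤ C1 := by
    have : 0 < 1 / (ε * Real.log 2) := by positivity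
    linarith
  set P0 : ℕ := ⌈(2 : ℝ) ^ (1 / ε)⌉₊ with hP0
  refine ⟨C1 ^ P0, one_le_pow₀ hC1', fun n hn => ?_⟩
  have hterm : ∀ p ∈ n.primeFactors, ((n.factorization p + 1 : ℕ) : ℝ) ≤
      (if p < P0 then C1 else 1) * ((p : ℝ) ^ (n.factorization p)) ^ ε := by
    intro p hp
    have hp2 : 2 ≤ p := (Nat.prime_of_mem_primeFactors hp).two_le
    set k := n.factorization p with hk
    have hp2' : (2 : ℝ) ≤ p := by exact_mod_cast hp2
    have hkk : (0 : ℝ) ≤ k := Nat.cast_nonneg _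
    have e1 : ((p : ℝ) ^ k) ^ ε = ((p : ℝ) ^ ε) ^ k := by
      rw [← Real.rpow_natCast, ← Real.rpow_natCast, ← Real.rpow_mul (by linarith),
        ← Real.rpow_mul (by linarith), mul_comm]
    split_ifs with h
    · have h1 : ((2 : ℝ) ^ k) ^ ε ≤ ((p : ℝ) ^ k) ^ ε :=
        Real.rpow_le_rpow (by positivity) (pow_le_pow_left₀ (by norm_num) hp2' _) hε.le
      have h2 : 1 + k * (ε * Real.log 2) ≤ ((2 : ℝ) ^ k) ^ ε := by
        rw [Real.rpow_def_of_pos (by positivity), Real.log_pow]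
        have := Real.add_one_le_exp (k * Real.log 2 * ε)
        linarith
      have h3 : (k : ℝ) + 1 ≤ C1 * (1 + k * (ε * Real.log 2)) := by
        have : C1 * (1 + k * (ε * Real.log 2)) =
            k + 1 + (1 / (ε * Real.log 2) + k * (ε * Real.log 2)) := by
          rw [hC1]; field_simp; ring
        rw [this]
        have : 0 ≤ 1 / (ε * Real.log 2) + k * (ε * Real.log 2) := by positivity
        linarith
      push_cast
      calc (k : ℝ) + 1 ≤ _ := h3
        _ ≤ C1 * ((p : ℝ) ^ k) ^ ε := mul_le_mul_of_nonneg_left (h2.trans h1) (by linarith)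
    · have h1 : (2 : ℝ) ≤ (p : ℝ) ^ ε := by
        have h3 : (2 : ℝ) ^ (1 / ε) ≤ p := by
          refine (Nat.le_ceil _).trans ?_
          exact_mod_cast (not_lt.1 h)
        calc (2 : ℝ) = ((2 : ℝ) ^ (1 / ε)) ^ ε := by
              rw [← Real.rpow_mul (by norm_num)]; field_simp; simp
          _ ≤ _ := Real.rpow_le_rpow (by positivity) h3 hε.le
      rw [e1, one_mul]
      calc ((k + 1 : ℕ) : ℝ) ≤ (2 : ℝ) ^ k := by exact_mod_cast Nat.lt_two_pow_self
        _ ≤ _ := pow_le_pow_left₀ (by norm_num) h1 _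
  have hn' : (n : ℝ) ^ ε = ∏ p ∈ n.primeFactors, ((p : ℝ) ^ (n.factorization p)) ^ ε := by
    rw [Real.finsetProd_rpow _ _ (fun i _ => by positivity)]
    congr 1
    conv_lhs => rw [← Nat.prod_factorization_pow_eq_self hn]
    rw [Finsupp.prod]
    push_cast
    rfl
  rw [Nat.card_divisors hn, hn', Nat.cast_prod]
  refine (Finset.prod_le_prod (fun i _ => by positivity) hterm).trans ?_
  rw [Finset.prod_mul_distrib]
  apply mul_le_mul_of_nonneg_right _ (Finset.prod_nonneg fun i _ => by positivity)
  rw [← Finset.prod_filter, Finset.prod_const]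
  apply pow_le_pow_right₀ hC1'
  calc _ ≤ (Finset.range P0).card := by
        apply Finset.card_le_card
        intro p hp
        rw [Finset.mem_filter] at hp
        exact Finset.mem_range.2 hp.2
    _ = P0 := Finset.card_range _

/-! ### Correlations of the sifted phase -/

/-- The sieve convolution `∑_{d ∣ n + 2} λ(d)`. -/
noncomputable def rho (D : ℝ) (lam : ℕ → ℝ) (n : ℕ) : ℝ :=
  ∑ d ∈ (Finset.range (⌊D⌋₊ + 1)).filter (fun d => d ∣ n + 2), lam d

/-- The sifted phase `ρ(n) e(θ n ^ c)`, cut off to `A < n ≤ B`. -/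
noncomputable def G (c θ D : ℝ) (lam : ℕ → ℝ) (A B n : ℕ) : ℂ :=
  if A < n ∧ n ≤ B then (rho D lam n : ℂ) * e (θ * (n : ℝ) ^ c) else 0

lemma norm_G_le {c θ D P : ℝ} {lam : ℕ → ℝ} {A B : ℕ} (hP : 0 ≤ P)
    (hρ : ∀ n, A < n → n ≤ B → |rho D lam n| ≤ P) (n : ℕ) : ‖G c θ D lam A B n‖ ≤ P := by
  unfold G
  split_ifs with h
  · rw [norm_mul, norm_e, mul_one, Complex.norm_real, Real.norm_eq_abs]
    exact hρ n h.1 h.2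
  · simpa using hP

lemma sub_rpow_bounds (c x y : ℝ) (hc : 1 ≤ c) (hy : 0 < y) (hyx : y < x) :
    (x - y) * x ^ (c - 1) ≤ x ^ c - y ^ c ∧ x ^ c - y ^ c ≤ c * (x - y) * x ^ (c - 1) := by
  have hx : 0 < x := hy.trans hyx
  have ex : x ^ c = x * x ^ (c - 1) := by
    rw [← Real.rpow_one_add' hx.le (by linarith)]; ring_nf
  have ey : y ^ c = y * y ^ (c - 1) := by
    rw [← Real.rpow_one_add' hy.le (by linarith)]; ring_nf
  constructor
  · have : y ^ (c - 1) ≤ x ^ (c - 1) := Real.rpow_le_rpow hy.le hyx.le (by linarith)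
    rw [ex, ey]
    nlinarith
  · have hb := one_add_mul_self_le_rpow_one_add (s := y / x - 1)
      (by have : 0 < y / x := by positivity
          linarith) hc
    rw [show 1 + (y / x - 1) = y / x by ring, Real.div_rpow hy.le hx.le,
      le_div_iff₀ (by positivity)] at hb
    have : (1 + c * (y / x - 1)) * x ^ c = x ^ c - c * (x - y) * x ^ (c - 1) := by
      rw [ex]; field_simp; ring
    linarith

/-- Opening both sieve convolutions turns the correlation into sums of `e(κ m ^ c)` over residue
classes, with `κ = θ (k₁ ^ c - k₂ ^ c)`. -/
lemma G_mul_conj (c θ D : ℝ) (lam : ℕ → ℝ) (A B M k₁ k₂ m : ℕ) (h1 : 0 < k₁) (h2 : 0 < k₂)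
    (hm : m ∈ Finset.Ico M (2 * M)) :
    G c θ D lam A B (m * k₁) * (starRingEnd ℂ) (G c θ D lam A B (m * k₂)) =
      ∑ d₁ ∈ Finset.range (⌊D⌋₊ + 1), ∑ d₂ ∈ Finset.range (⌊D⌋₊ + 1), (lam d₁ : ℂ) * (lam d₂ : ℂ) *
        if (max (A / k₁) (A / k₂) < m ∧ m ≤ min (B / k₁) (B / k₂)) ∧
          (d₁ ∣ m * k₁ + 2 ∧ d₂ ∣ m * k₂ + 2)
        then e (θ * ((k₁ : ℝ) ^ c - (k₂ : ℝ) ^ c) * (m : ℝ) ^ c) else 0 := by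
  have a1 : A / k₁ < m ↔ A < m * k₁ := Nat.div_lt_iff_lt_mul h1
  have a2 : A / k₂ < m ↔ A < m * k₂ := Nat.div_lt_iff_lt_mul h2
  have b1 : m ≤ B / k₁ ↔ m * k₁ ≤ B := Nat.le_div_iff_mul_le h1
  have b2 : m ≤ B / k₂ ↔ m * k₂ ≤ B := Nat.le_div_iff_mul_le h2
  simp only [max_lt_iff, le_min_iff, a1, a2, b1, b2]
  unfold G
  by_cases hh : (A < m * k₁ ∧ A < m * k₂) ∧ (m * k₁ ≤ B ∧ m * k₂ ≤ B)
  · rw [if_pos ⟨hh.1.1, hh.2.1⟩, if_pos ⟨hh.1.2, hh.2.2⟩]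
    have he : e (θ * ((m * k₁ : ℕ) : ℝ) ^ c) * e (-(θ * ((m * k₂ : ℕ) : ℝ) ^ c)) =
        e (θ * ((k₁ : ℝ) ^ c - (k₂ : ℝ) ^ c) * (m : ℝ) ^ c) := by
      rw [← e_add]
      congr 1
      push_cast
      rw [Real.mul_rpow (by positivity) (by positivity), Real.mul_rpow (by positivity)
        (by positivity)]
      ring
    rw [map_mul, conj_e, Complex.conj_ofReal,
      show ∀ x y z w : ℂ, x * y * (z * w) = (x * z) * (y * w) from fun x y z w => by ring, he]
    unfold rho
    simp only [Finset.sum_filter]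
    push_cast
    rw [Finset.sum_mul_sum, Finset.sum_mul]
    refine Finset.sum_congr rfl fun d₁ _ => ?_
    rw [Finset.sum_mul]
    refine Finset.sum_congr rfl fun d₂ _ => ?_
    simp only [hh, true_and, and_self]
    by_cases c1 : d₁ ∣ m * k₁ + 2 <;> by_cases c2 : d₂ ∣ m * k₂ + 2 <;> simp [c1, c2]
  · simp only [hh, false_and, if_false, mul_zero, Finset.sum_const_zero]
    by_cases hx : A < m * k₁ ∧ m * k₁ ≤ B
    · have hy : ¬ (A < m * k₂ ∧ m * k₂ ≤ B) := fun hy => hh ⟨⟨hx.1, hy.1⟩, ⟨hx.2, hy.2⟩⟩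
      rw [if_neg hy]; simp
    · rw [if_neg hx]; simp

lemma sieve_odd {D : ℝ} {lam : ℕ → ℝ} (h : IsSieveWeight D lam) {d : ℕ} (hd : lam d ≠ 0) :
    Odd d := by
  by_contra hodd
  apply hd
  apply h.2
  right; left
  rw [Nat.not_odd_iff_even] at hodd
  exact hodd.two_dvd

set_option maxHeartbeats 800000 in
/-- Off-diagonal correlations are sums to which the second derivative test applies, with a phase
of size `y ≍ |θ| X ^ c (k₁ - k₂) M / X`. -/
lemma corr_bound (c μ : ℝ) (hc1 : 1 < c) (hc2 : c < 2) (hμ0 : 0 < μ) (hμ1 : μ < 1) :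
    ∃ C : ℝ, 1 ≤ C ∧ ∀ (X θ D : ℝ) (lam : ℕ → ℝ) (M k₁ k₂ : ℕ), IsSieveWeight D lam → 0 < X →
      θ ≠ 0 → 0 < M → 0 < k₂ → k₂ < k₁ →
      ‖∑ m ∈ Finset.Ico M (2 * M), G c θ D lam ⌊μ * X⌋₊ ⌊X⌋₊ (m * k₁) *
          (starRingEnd ℂ) (G c θ D lam ⌊μ * X⌋₊ ⌊X⌋₊ (m * k₂))‖ ≤
        (⌊D⌋₊ + 1 : ℝ) ^ 2 * (C * (√(|θ| * X ^ (c - 1) * M * (k₁ - k₂)) +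
          M / √(|θ| * X ^ (c - 1) * M * (k₁ - k₂)))) := by
  obtain ⟨C₀, hC₀, hVC⟩ := power_sum_cong c 2 hc1 hc2 (by norm_num)
  have hμ2 : 0 < √(μ / 2) := Real.sqrt_pos.2 (by linarith)
  refine ⟨C₀ * (2 + 1 / √(μ / 2)), ?_, ?_⟩
  · have : 0 < 1 / √(μ / 2) := by positivity
    nlinarith
  intro X θ D lam M k₁ k₂ hlam hX hθ hM h2 h21
  have h1 : 0 < k₁ := h2.trans h21
  set A := ⌊μ * X⌋₊ with hA
  set B := ⌊X⌋₊ with hB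
  set y := |θ| * X ^ (c - 1) * M * (k₁ - k₂) with hy
  have hk : (k₂ : ℝ) < k₁ := by exact_mod_cast h21
  have hk2 : (0 : ℝ) < k₂ := by exact_mod_cast h2
  have hk1 : (0 : ℝ) < k₁ := by exact_mod_cast h1
  have hM0 : (0 : ℝ) < M := by exact_mod_cast hM
  have hθ0 : 0 < |θ| := abs_pos.2 hθ
  have hr0 : (0 : ℝ) < k₁ - k₂ := by linarith
  have hy0 : 0 < y := by positivity
  have hbd0 : 0 ≤ C₀ * (2 + 1 / √(μ / 2)) * (√y + M / √y) := by positivity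
  set u := max (M - 1) (max (A / k₁) (A / k₂)) with hu
  set v := min (2 * M - 1) (min (B / k₁) (B / k₂)) with hv
  set κ := θ * ((k₁ : ℝ) ^ c - (k₂ : ℝ) ^ c) with hκ
  have hE : ∑ m ∈ Finset.Ico M (2 * M), G c θ D lam A B (m * k₁) *
      (starRingEnd ℂ) (G c θ D lam A B (m * k₂)) =
      ∑ d₁ ∈ Finset.range (⌊D⌋₊ + 1), ∑ d₂ ∈ Finset.range (⌊D⌋₊ + 1), (lam d₁ : ℂ) * (lam d₂ : ℂ) *
        ∑ m ∈ (Finset.Ioc u v).filter (fun m => d₁ ∣ m * k₁ + 2 ∧ d₂ ∣ m * k₂ + 2),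
          e (κ * (m : ℝ) ^ c) := by
    rw [Finset.sum_congr rfl (fun m hm => G_mul_conj c θ D lam A B M k₁ k₂ m h1 h2 hm),
      Finset.sum_comm]
    refine Finset.sum_congr rfl fun d₁ _ => ?_
    rw [Finset.sum_comm]
    refine Finset.sum_congr rfl fun d₂ _ => ?_
    rw [← Finset.mul_sum, ← Finset.sum_filter]
    congr 1
    refine Finset.sum_congr ?_ fun _ _ => rfl
    ext m
    simp only [Finset.mem_filter, Finset.mem_Ico, Finset.mem_Ioc, hu, hv, max_lt_iff, le_min_iff]
    constructor
    · rintro ⟨⟨q1, q2⟩, ⟨⟨q3, q4⟩, q5⟩⟩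
      exact ⟨⟨⟨by omega, q3⟩, ⟨by omega, q4⟩⟩, q5⟩
    · rintro ⟨⟨⟨q1, q3⟩, ⟨q2, q4⟩⟩, q5⟩
      exact ⟨⟨by omega, by omega⟩, ⟨⟨q3, q4⟩, q5⟩⟩
  have hinner : ∀ d₁ d₂ : ℕ, Odd d₁ → Odd d₂ →
      ‖∑ m ∈ (Finset.Ioc u v).filter (fun m => d₁ ∣ m * k₁ + 2 ∧ d₂ ∣ m * k₂ + 2),
          e (κ * (m : ℝ) ^ c)‖ ≤ C₀ * (2 + 1 / √(μ / 2)) * (√y + M / √y) := by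
    intro d₁ d₂ o1 o2
    rcases Nat.lt_or_ge u v with huv | huv
    swap
    · rw [Finset.Ioc_eq_empty (by omega)]
      simpa using hbd0
    obtain ⟨sb1, sb2⟩ := sub_rpow_bounds c k₁ k₂ hc1.le hk2 hk
    have hdiff : 0 < (k₁ : ℝ) ^ c - (k₂ : ℝ) ^ c := by
      have : 0 < ((k₁ : ℝ) - k₂) * (k₁ : ℝ) ^ (c - 1) := by positivity
      linarith
    have hκ0 : κ ≠ 0 := mul_ne_zero hθ hdiff.ne'
    have hvin : max (A / k₁) (A / k₂) < v ∧ v ≤ min (B / k₁) (B / k₂) ∧ M ≤ v ∧ v < 2 * M := by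
      refine ⟨lt_of_le_of_lt (le_max_right _ _) huv, min_le_right _ _, ?_, ?_⟩
      · have : M - 1 ≤ u := le_max_left _ _
        omega
      · have : v ≤ 2 * M - 1 := min_le_left _ _
        omega
    have hAk : A < v * k₁ := (Nat.div_lt_iff_lt_mul h1).1 (lt_of_le_of_lt (le_max_left _ _) hvin.1)
    have hBk : v * k₁ ≤ B := (Nat.le_div_iff_mul_le h1).1 (hvin.2.1.trans (min_le_left _ _))
    have up : (k₁ : ℝ) * M ≤ X := by
      have q1 : ((v * k₁ : ℕ) : ℝ) ≤ X := (Nat.cast_le.2 hBk).trans (Nat.floor_le hX.le)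
      have q2 : (M : ℝ) ≤ v := by exact_mod_cast hvin.2.2.1
      push_cast at q1
      nlinarith
    have lo : μ / 2 * X ≤ (k₁ : ℝ) * M := by
      have q1 : μ * X < ((v * k₁ : ℕ) : ℝ) := (Nat.floor_lt (by positivity)).1 hAk
      have q2 : (v : ℝ) ≤ 2 * M := by exact_mod_cast hvin.2.2.2.le
      push_cast at q1
      nlinarith
    have hF : |κ| * (M : ℝ) ^ c = |θ| * ((k₁ : ℝ) ^ c - (k₂ : ℝ) ^ c) * (M : ℝ) ^ c := by
      rw [hκ, abs_mul, abs_of_pos hdiff]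
    have hMc : (M : ℝ) ^ c = M * (M : ℝ) ^ (c - 1) := by
      rw [← Real.rpow_one_add' hM0.le (by linarith)]; ring_nf
    have hkM : (k₁ : ℝ) ^ (c - 1) * (M : ℝ) ^ (c - 1) = ((k₁ : ℝ) * M) ^ (c - 1) :=
      (Real.mul_rpow hk1.le hM0.le).symm
    have Fup : |κ| * (M : ℝ) ^ c ≤ 2 ^ 2 * y := by
      have q : ((k₁ : ℝ) * M) ^ (c - 1) ≤ X ^ (c - 1) :=
        Real.rpow_le_rpow (by positivity) up (by linarith)
      calc |κ| * (M : ℝ) ^ c ≤ |θ| * (c * (k₁ - k₂) * (k₁ : ℝ) ^ (c - 1)) * (M : ℝ) ^ c := by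
            rw [hF]; gcongr
        _ = c * (|θ| * ((k₁ : ℝ) * M) ^ (c - 1) * M * (k₁ - k₂)) := by rw [hMc, ← hkM]; ring
        _ ≤ c * y := by rw [hy]; gcongr
        _ ≤ _ := by nlinarith
    have Flo : μ / 2 * y ≤ |κ| * (M : ℝ) ^ c := by
      have q : μ / 2 * X ^ (c - 1) ≤ ((k₁ : ℝ) * M) ^ (c - 1) := by
        calc μ / 2 * X ^ (c - 1) ≤ (μ / 2) ^ (c - 1) * X ^ (c - 1) := by
              gcongr
              exact Real.self_le_rpow_of_le_one (by linarith) (by linarith) (by linarith)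
          _ = (μ / 2 * X) ^ (c - 1) := (Real.mul_rpow (by linarith) hX.le).symm
          _ ≤ _ := Real.rpow_le_rpow (by positivity) lo (by linarith)
      calc μ / 2 * y = |θ| * (μ / 2 * X ^ (c - 1)) * M * (k₁ - k₂) := by rw [hy]; ring
        _ ≤ |θ| * ((k₁ : ℝ) * M) ^ (c - 1) * M * (k₁ - k₂) := by gcongr
        _ = |θ| * ((k₁ - k₂) * (k₁ : ℝ) ^ (c - 1)) * (M : ℝ) ^ c := by rw [hMc, ← hkM]; ring
        _ ≤ |κ| * (M : ℝ) ^ c := by rw [hF]; gcongr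
    have hm := hVC κ M d₁ d₂ k₁ k₂ u v hκ0 (by exact_mod_cast hM) o1 o2
      (by
        have : M ≤ u + 1 := by
          have : M - 1 ≤ u := le_max_left _ _
          omega
        exact_mod_cast this)
      (by exact_mod_cast hvin.2.2.2.le)
    refine hm.trans ?_
    have s1 : √(|κ| * (M : ℝ) ^ c) ≤ 2 * √y := by
      have := Real.sqrt_le_sqrt Fup
      rwa [Real.sqrt_mul (show (0 : ℝ) ≤ 2 ^ 2 by norm_num) y, Real.sqrt_sq (by norm_num)] at this
    have s2 : √(μ / 2) * √y ≤ √(|κ| * (M : ℝ) ^ c) := by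
      have := Real.sqrt_le_sqrt Flo
      rwa [Real.sqrt_mul (show 0 ≤ μ / 2 by linarith) y] at this
    have hsy : 0 < √y := Real.sqrt_pos.2 hy0
    have s3 : M / √(|κ| * (M : ℝ) ^ c) ≤ 1 / √(μ / 2) * (M / √y) := by
      calc M / √(|κ| * (M : ℝ) ^ c) ≤ M / (√(μ / 2) * √y) := by gcongr
        _ = _ := by field_simp
    rw [mul_assoc]
    apply mul_le_mul_of_nonneg_left _ (by linarith)
    have p1 : 0 ≤ 1 / √(μ / 2) * √y := by positivity
    have p2 : 0 ≤ M / √y := by positivity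
    have p3 : (2 + 1 / √(μ / 2)) * (√y + M / √y) = 2 * √y + 1 / √(μ / 2) * √y +
        2 * (M / √y) + 1 / √(μ / 2) * (M / √y) := by ring
    linarith
  rw [hE]
  have hterm : ∀ d₁ ∈ Finset.range (⌊D⌋₊ + 1), ∀ d₂ ∈ Finset.range (⌊D⌋₊ + 1),
      ‖(lam d₁ : ℂ) * (lam d₂ : ℂ) *
        ∑ m ∈ (Finset.Ioc u v).filter (fun m => d₁ ∣ m * k₁ + 2 ∧ d₂ ∣ m * k₂ + 2),
          e (κ * (m : ℝ) ^ c)‖ ≤ C₀ * (2 + 1 / √(μ / 2)) * (√y + M / √y) := by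
    intro d₁ _ d₂ _
    by_cases z1 : lam d₁ = 0
    · simpa [z1] using hbd0
    by_cases z2 : lam d₂ = 0
    · simpa [z2] using hbd0
    rw [norm_mul, norm_mul, Complex.norm_real, Complex.norm_real, Real.norm_eq_abs,
      Real.norm_eq_abs]
    have l1 := hlam.1 d₁
    have l2 := hlam.1 d₂
    have l3 : |lam d₁| * |lam d₂| ≤ 1 := mul_le_one₀ l1 (abs_nonneg _) l2
    calc _ ≤ 1 * (C₀ * (2 + 1 / √(μ / 2)) * (√y + M / √y)) :=
          mul_le_mul l3 (hinner d₁ d₂ (sieve_odd hlam z1) (sieve_odd hlam z2)) (norm_nonneg _)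
            zero_le_one
      _ = _ := one_mul _
  refine (norm_sum_le_of_le _ (fun d₁ h₁ => norm_sum_le_of_le _ (fun d₂ h₂ =>
    hterm d₁ h₁ d₂ h₂))).trans ?_
  simp only [Finset.sum_const, Finset.card_range, nsmul_eq_mul]
  push_cast
  apply le_of_eq; ring

/-! ### Bilinear sums -/

lemma sum_sqrt_le (Q : ℕ) : ∑ r ∈ Finset.Ico 1 Q, √(r : ℝ) ≤ Q * √(Q : ℝ) := by
  calc ∑ r ∈ Finset.Ico 1 Q, √(r : ℝ) ≤ ∑ _r ∈ Finset.Ico 1 Q, √(Q : ℝ) := by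
        apply Finset.sum_le_sum
        intro r hr
        rw [Finset.mem_Ico] at hr
        exact Real.sqrt_le_sqrt (by exact_mod_cast hr.2.le)
    _ = ((Q - 1 : ℕ) : ℝ) * √(Q : ℝ) := by simp
    _ ≤ _ := by
        gcongr
        omega

lemma sum_inv_sqrt_le (Q : ℕ) : ∑ r ∈ Finset.Ico 1 Q, 1 / √(r : ℝ) ≤ 2 * √(Q : ℝ) := by
  have key : ∀ n : ℕ, ∑ r ∈ Finset.range n, 1 / √((1 + r : ℕ) : ℝ) ≤ 2 * √(n : ℝ) := by
    intro n
    induction n with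
    | zero => simp
    | succ n ih =>
      rw [Finset.sum_range_succ]
      have h1 : 0 < √((n + 1 : ℕ) : ℝ) := Real.sqrt_pos.2 (by positivity)
      have h2 : √((n + 1 : ℕ) : ℝ) ^ 2 = n + 1 := by
        rw [Real.sq_sqrt (by positivity)]; push_cast; ring
      have h3 : √(n : ℝ) ^ 2 = n := Real.sq_sqrt (by positivity)
      have h4 : 1 / √((n + 1 : ℕ) : ℝ) ≤ 2 * √((n + 1 : ℕ) : ℝ) - 2 * √(n : ℝ) := by
        rw [div_le_iff₀ h1]
        nlinarith [sq_nonneg (√((n + 1 : ℕ) : ℝ) - √(n : ℝ))]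
      rw [add_comm 1 n]
      linarith
  rw [Finset.sum_Ico_eq_sum_range]
  refine (key (Q - 1)).trans ?_
  gcongr
  omega

/-- Cauchy's inequality over blocks `k / Q = j` of length `Q`. -/
lemma bilinear_cauchy (F : ℕ → ℂ) (a b : ℕ → ℂ) (P : ℝ) (hP : 0 ≤ P) (ha : ∀ m, ‖a m‖ ≤ P)
    (M K Q : ℕ) :
    ‖∑ m ∈ Finset.Ico M (2 * M), ∑ k ∈ Finset.Icc 1 K, a m * b k * F (m * k)‖ ^ 2 ≤
      P ^ 2 * M * (K / Q + 1 : ℕ) * ∑ j ∈ Finset.range (K / Q + 1), ∑ m ∈ Finset.Ico M (2 * M),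
        ‖∑ k ∈ (Finset.Icc 1 K).filter (fun k => k / Q = j), b k * F (m * k)‖ ^ 2 := by
  set V : ℕ → ℕ → ℂ := fun m j =>
    ∑ k ∈ (Finset.Icc 1 K).filter (fun k => k / Q = j), b k * F (m * k) with hV
  have hsplit : ∀ m, ∑ k ∈ Finset.Icc 1 K, a m * b k * F (m * k) =
      ∑ j ∈ Finset.range (K / Q + 1), a m * V m j := by
    intro m
    rw [← Finset.mul_sum, Finset.sum_fiberwise_of_maps_to (g := fun k => k / Q)
      (f := fun k => b k * F (m * k)), Finset.mul_sum]
    · simp only [mul_assoc]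
    · intro k hk
      rw [Finset.mem_Icc] at hk
      rw [Finset.mem_range, Nat.lt_succ_iff]
      exact Nat.div_le_div_right hk.2
  have h1 : ‖∑ m ∈ Finset.Ico M (2 * M), ∑ k ∈ Finset.Icc 1 K, a m * b k * F (m * k)‖ ≤
      ∑ x ∈ Finset.Ico M (2 * M) ×ˢ Finset.range (K / Q + 1), P * ‖V x.1 x.2‖ := by
    simp only [hsplit]
    rw [← Finset.sum_product' (f := fun m j => a m * V m j)]
    refine norm_sum_le_of_le _ fun x _ => ?_
    rw [norm_mul]
    gcongr
    exact ha _
  have h2 := sq_sum_le_card_mul_sum_sq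
    (s := Finset.Ico M (2 * M) ×ˢ Finset.range (K / Q + 1)) (f := fun x => P * ‖V x.1 x.2‖)
  calc _ ≤ (∑ x ∈ Finset.Ico M (2 * M) ×ˢ Finset.range (K / Q + 1), P * ‖V x.1 x.2‖) ^ 2 := by
        gcongr
    _ ≤ _ := h2
    _ = _ := by
        rw [Finset.card_product, Nat.card_Ico, Finset.card_range,
          show 2 * M - M = M by omega, Finset.sum_product_right]
        simp only [mul_pow, ← Finset.mul_sum]
        push_cast
        ring

/-- Within a block of length `Q`, each distance to `k₁` occurs at most twice. -/
lemma block_sum_le (Q K k₁ j : ℕ) (hQ : 0 < Q) (f : ℕ → ℝ) (φ : ℕ → ℝ) (A : ℝ)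
    (hφ0 : ∀ r, 0 ≤ φ r) (hk : k₁ / Q = j) (hk1 : k₁ ∈ Finset.Icc 1 K) (hd : f k₁ ≤ A)
    (hf : ∀ k₂ ∈ Finset.Icc 1 K, k₂ ≠ k₁ → f k₂ ≤ φ (Nat.dist k₁ k₂)) :
    ∑ k₂ ∈ (Finset.Icc 1 K).filter (fun k => k / Q = j), f k₂ ≤
      A + 2 * ∑ r ∈ Finset.Ico 1 Q, φ r := by
  set S := (Finset.Icc 1 K).filter (fun k => k / Q = j) with hS
  have hmem : k₁ ∈ S := by simp only [hS, Finset.mem_filter]; exact ⟨hk1, hk⟩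
  rw [← Finset.add_sum_erase S f hmem]
  apply add_le_add hd
  have hlt : ∀ k ∈ S, Nat.dist k₁ k < Q := by
    intro k hkS
    simp only [hS, Finset.mem_filter] at hkS
    have e1 := Nat.div_add_mod k₁ Q
    have e2 := Nat.div_add_mod k Q
    have l1 := Nat.mod_lt k₁ hQ
    have l2 := Nat.mod_lt k hQ
    rw [hk] at e1
    rw [hkS.2] at e2
    unfold Nat.dist
    omega
  have hmaps : ∀ k ∈ S.erase k₁, Nat.dist k₁ k ∈ Finset.Ico 1 Q := by
    intro k hk
    rw [Finset.mem_erase] at hk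
    rw [Finset.mem_Ico]
    refine ⟨?_, hlt k hk.2⟩
    have := Nat.dist_pos_of_ne (Ne.symm hk.1)
    omega
  calc ∑ k ∈ S.erase k₁, f k ≤ ∑ k ∈ S.erase k₁, φ (Nat.dist k₁ k) := by
        apply Finset.sum_le_sum
        intro k hk
        rw [Finset.mem_erase] at hk
        exact hf k (Finset.mem_filter.1 hk.2).1 hk.1
    _ = ∑ r ∈ Finset.Ico 1 Q, ∑ k ∈ (S.erase k₁).filter (fun k => Nat.dist k₁ k = r),
          φ (Nat.dist k₁ k) := (Finset.sum_fiberwise_of_maps_to hmaps _).symm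
    _ ≤ ∑ r ∈ Finset.Ico 1 Q, 2 * φ r := by
        apply Finset.sum_le_sum
        intro r _
        calc ∑ k ∈ (S.erase k₁).filter (fun k => Nat.dist k₁ k = r), φ (Nat.dist k₁ k)
            = ∑ k ∈ (S.erase k₁).filter (fun k => Nat.dist k₁ k = r), φ r := by
              apply Finset.sum_congr rfl
              intro k hk
              rw [(Finset.mem_filter.1 hk).2]
          _ = ((S.erase k₁).filter (fun k => Nat.dist k₁ k = r)).card * φ r := by simp
          _ ≤ 2 * φ r := by
              apply mul_le_mul_of_nonneg_right _ (hφ0 r)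
              have : ((S.erase k₁).filter (fun k => Nat.dist k₁ k = r)).card ≤
                  ({k₁ - r, k₁ + r} : Finset ℕ).card := by
                apply Finset.card_le_card
                intro k hk
                have := (Finset.mem_filter.1 hk).2
                simp only [Finset.mem_insert, Finset.mem_singleton]
                unfold Nat.dist at this
                omega
              exact_mod_cast this.trans Finset.card_le_two
    _ = _ := by rw [Finset.mul_sum]

/-- The bilinear form estimate, in terms of a bound `φ` for the off-diagonal correlations. -/
lemma bilinear_bound (F : ℕ → ℂ) (a b : ℕ → ℂ) (P : ℝ) (hP : 0 ≤ P) (ha : ∀ m, ‖a m‖ ≤ P)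
    (hb : ∀ k, ‖b k‖ ≤ P) (hF : ∀ n, ‖F n‖ ≤ P) (M K Q : ℕ) (hQ : 0 < Q) (φ : ℕ → ℝ)
    (hφ0 : ∀ r, 0 ≤ φ r)
    (hφ : ∀ k₁ ∈ Finset.Icc 1 K, ∀ k₂ ∈ Finset.Icc 1 K, k₂ ≠ k₁ →
      ‖∑ m ∈ Finset.Ico M (2 * M), F (m * k₁) * (starRingEnd ℂ) (F (m * k₂))‖ ≤
        φ (Nat.dist k₁ k₂)) :
    ‖∑ m ∈ Finset.Ico M (2 * M), ∑ k ∈ Finset.Icc 1 K, a m * b k * F (m * k)‖ ^ 2 ≤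
      P ^ 2 * M * (K / Q + 1 : ℕ) *
        (P ^ 2 * K * (M * P ^ 2 + 2 * ∑ r ∈ Finset.Ico 1 Q, φ r)) := by
  refine (bilinear_cauchy F a b P hP ha M K Q).trans ?_
  apply mul_le_mul_of_nonneg_left _ (by positivity)
  set E : ℕ → ℕ → ℂ := fun k₁ k₂ =>
    ∑ m ∈ Finset.Ico M (2 * M), F (m * k₁) * (starRingEnd ℂ) (F (m * k₂)) with hE
  set Z := M * P ^ 2 + 2 * ∑ r ∈ Finset.Ico 1 Q, φ r with hZ
  have hblock : ∀ j ∈ Finset.range (K / Q + 1), ∑ m ∈ Finset.Ico M (2 * M),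
      ‖∑ k ∈ (Finset.Icc 1 K).filter (fun k => k / Q = j), b k * F (m * k)‖ ^ 2 ≤
      ∑ k₁ ∈ (Finset.Icc 1 K).filter (fun k => k / Q = j), P ^ 2 * Z := by
    intro j _
    set S := (Finset.Icc 1 K).filter (fun k => k / Q = j) with hS
    have hid : ((∑ m ∈ Finset.Ico M (2 * M), ‖∑ k ∈ S, b k * F (m * k)‖ ^ 2 : ℝ) : ℂ) =
        ∑ k₁ ∈ S, ∑ k₂ ∈ S, b k₁ * (starRingEnd ℂ) (b k₂) * E k₁ k₂ := by
      push_cast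
      have : ∀ m, ((‖∑ k ∈ S, b k * F (m * k)‖ : ℂ)) ^ 2 = ∑ k₁ ∈ S, ∑ k₂ ∈ S,
          b k₁ * (starRingEnd ℂ) (b k₂) * (F (m * k₁) * (starRingEnd ℂ) (F (m * k₂))) := by
        intro m
        rw [← Complex.mul_conj', map_sum, Finset.sum_mul_sum]
        refine Finset.sum_congr rfl fun k₁ _ => Finset.sum_congr rfl fun k₂ _ => ?_
        rw [map_mul]; ring
      simp only [this]
      rw [Finset.sum_comm]
      refine Finset.sum_congr rfl fun k₁ _ => ?_
      rw [Finset.sum_comm]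
      refine Finset.sum_congr rfl fun k₂ _ => ?_
      rw [← Finset.mul_sum]
    have hnn : 0 ≤ ∑ m ∈ Finset.Ico M (2 * M), ‖∑ k ∈ S, b k * F (m * k)‖ ^ 2 := by positivity
    rw [← Real.norm_of_nonneg hnn, ← Complex.norm_real, hid]
    refine norm_sum_le_of_le _ fun k₁ hk₁ => ?_
    rw [hS, Finset.mem_filter] at hk₁
    calc ‖∑ k₂ ∈ S, b k₁ * (starRingEnd ℂ) (b k₂) * E k₁ k₂‖ ≤ ∑ k₂ ∈ S, P ^ 2 * ‖E k₁ k₂‖ := by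
          refine norm_sum_le_of_le _ fun k₂ _ => ?_
          rw [norm_mul, norm_mul, RCLike.norm_conj, sq]
          gcongr
          · exact hb _
          · exact hb _
      _ = P ^ 2 * ∑ k₂ ∈ S, ‖E k₁ k₂‖ := by rw [Finset.mul_sum]
      _ ≤ P ^ 2 * Z := by
          gcongr
          apply block_sum_le Q K k₁ j hQ _ φ _ hφ0 hk₁.2 hk₁.1
          · calc ‖E k₁ k₁‖ ≤ ∑ m ∈ Finset.Ico M (2 * M), P ^ 2 := by
                  refine norm_sum_le_of_le _ fun m _ => ?_
                  rw [norm_mul, RCLike.norm_conj, sq]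
                  gcongr
                  · exact hF _
                  · exact hF _
              _ = _ := by
                  rw [Finset.sum_const, Nat.card_Ico, show 2 * M - M = M by omega, nsmul_eq_mul]
          · exact fun k₂ h2 hne => hφ k₁ hk₁.1 k₂ h2 hne
  refine (Finset.sum_le_sum hblock).trans ?_
  rw [Finset.sum_fiberwise_of_maps_to (g := fun k => k / Q) (f := fun _ => P ^ 2 * Z)]
  · rw [Finset.sum_const, Nat.card_Icc, nsmul_eq_mul, show K + 1 - 1 = K by omega]
    apply le_of_eq; ring
  · intro k hk
    rw [Finset.mem_Icc] at hk
    rw [Finset.mem_range, Nat.lt_succ_iff]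
    exact Nat.div_le_div_right hk.2

set_option maxHeartbeats 800000 in
/-- The bilinear form estimate with `N = X / M`, `T = |θ| X ^ c` and block length `Q ≤ N`. -/
lemma typeII (c μ : ℝ) (hc1 : 1 < c) (hc2 : c < 2) (hμ0 : 0 < μ) (hμ1 : μ < 1) :
    ∃ C : ℝ, 1 ≤ C ∧ ∀ (X θ D P : ℝ) (lam : ℕ → ℝ) (a b : ℕ → ℂ) (M Q : ℕ), IsSieveWeight D lam →
      0 < X → θ ≠ 0 → 1 ≤ D → 1 ≤ P → 0 < M → 0 < Q → (Q : ℝ) ≤ X / M → (∀ m, ‖a m‖ ≤ P) →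
      (∀ k, ‖b k‖ ≤ P) → (∀ n, ⌊μ * X⌋₊ < n → n ≤ ⌊X⌋₊ → |rho D lam n| ≤ P) →
      ‖∑ m ∈ Finset.Ico M (2 * M), ∑ k ∈ Finset.Icc 1 (⌊X⌋₊ / M),
          a m * b k * G c θ D lam ⌊μ * X⌋₊ ⌊X⌋₊ (m * k)‖ ^ 2 ≤
        C * P ^ 6 * X * (X / Q + D ^ 2 * √(X / M * (|θ| * X ^ c) * Q) +
          D ^ 2 * X * √(X / M / (|θ| * X ^ c * Q))) := by
  obtain ⟨C, hC, hcorr⟩ := corr_bound c μ hc1 hc2 hμ0 hμ1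
  refine ⟨32 * C, by linarith, ?_⟩
  intro X θ D P lam a b M Q hlam hX hθ hD hP hM hQ hQN ha hb hρ
  set N := X / M with hN
  set K := ⌊X⌋₊ / M with hK
  set T := |θ| * X ^ c with hT
  have hM0 : (0 : ℝ) < M := by exact_mod_cast hM
  have hQ0 : (0 : ℝ) < Q := by exact_mod_cast hQ
  have hθ0 : 0 < |θ| := abs_pos.2 hθ
  have hT0 : 0 < T := by positivity
  have hN0 : 0 < N := by positivity
  have hMN : M * N = X := by rw [hN]; field_simp
  set y := T / N with hy
  have hy0 : 0 < y := by positivity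
  have hyeq : ∀ r : ℝ, |θ| * X ^ (c - 1) * M * r = y * r := by
    intro r
    rw [hy, hT, hN, Real.rpow_sub_one hX.ne']
    field_simp
  set φ : ℕ → ℝ := fun r => (2 * D) ^ 2 * (C * (√(y * r) + M / √(y * r))) with hφ
  have hD1 : (⌊D⌋₊ + 1 : ℝ) ≤ 2 * D := by
    have := Nat.floor_le (show 0 ≤ D by linarith)
    linarith
  have hcorr' : ∀ k₁ k₂ : ℕ, 0 < k₂ → k₂ < k₁ →
      ‖∑ m ∈ Finset.Ico M (2 * M), G c θ D lam ⌊μ * X⌋₊ ⌊X⌋₊ (m * k₁) *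
          (starRingEnd ℂ) (G c θ D lam ⌊μ * X⌋₊ ⌊X⌋₊ (m * k₂))‖ ≤ φ (k₁ - k₂) := by
    intro k₁ k₂ h2 h12
    have h := hcorr X θ D lam M k₁ k₂ hlam hX hθ hM h2 h12
    rw [hyeq] at h
    refine h.trans ?_
    rw [hφ]
    simp only [Nat.cast_sub h12.le]
    gcongr
  have main := bilinear_bound (G c θ D lam ⌊μ * X⌋₊ ⌊X⌋₊) a b P (by linarith) ha hb
    (norm_G_le (by linarith) hρ) M K Q hQ φ (fun r => by simp only [hφ]; positivity) (by
      intro k₁ h1 k₂ h2 hne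
      rw [Finset.mem_Icc] at h1 h2
      rcases lt_or_gt_of_ne hne with h | h
      · rw [show Nat.dist k₁ k₂ = k₁ - k₂ by unfold Nat.dist; omega]
        exact hcorr' k₁ k₂ (by omega) h
      · rw [show Nat.dist k₁ k₂ = k₂ - k₁ by unfold Nat.dist; omega]
        have := hcorr' k₂ k₁ (by omega) h
        rw [← RCLike.norm_conj, map_sum] at this
        simpa only [map_mul, Complex.conj_conj, mul_comm] using this)
  refine main.trans ?_
  have hKN : (K : ℝ) ≤ N := by
    rw [hK, hN]
    refine Nat.cast_div_le.trans ?_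
    gcongr
    exact Nat.floor_le hX.le
  have hJ : ((K / Q + 1 : ℕ) : ℝ) ≤ 2 * (N / Q) := by
    push_cast
    have h1 : ((K / Q : ℕ) : ℝ) ≤ N / Q := Nat.cast_div_le.trans (by gcongr)
    have h2 : 1 ≤ N / Q := by rwa [le_div_iff₀ hQ0, one_mul]
    linarith
  have hsum : ∑ r ∈ Finset.Ico 1 Q, φ r ≤
      4 * C * D ^ 2 * (√y * (Q * √(Q : ℝ)) + M / √y * (2 * √(Q : ℝ))) := by
    calc ∑ r ∈ Finset.Ico 1 Q, φ r = 4 * C * D ^ 2 * (√y * ∑ r ∈ Finset.Ico 1 Q, √(r : ℝ) +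
          M / √y * ∑ r ∈ Finset.Ico 1 Q, 1 / √(r : ℝ)) := by
          rw [Finset.mul_sum, Finset.mul_sum, ← Finset.sum_add_distrib, Finset.mul_sum]
          refine Finset.sum_congr rfl fun r _ => ?_
          simp only [hφ]
          rw [Real.sqrt_mul hy0.le, div_mul_div_comm, mul_one]
          ring
      _ ≤ _ := by
          gcongr
          · exact sum_sqrt_le Q
          · exact sum_inv_sqrt_le Q
  set q := √(Q : ℝ) with hq
  have hq0 : 0 < q := Real.sqrt_pos.2 hQ0
  have hqq : q * q = Q := Real.mul_self_sqrt hQ0.le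
  set n := √N with hn
  have hn0 : 0 < n := Real.sqrt_pos.2 hN0
  have hnn : n * n = N := Real.mul_self_sqrt hN0.le
  set t := √T with ht
  have ht0 : 0 < t := Real.sqrt_pos.2 hT0
  have hsy : √y = t / n := Real.sqrt_div hT0.le _
  have r1 : √(N * T * Q) = n * t * q := by
    rw [Real.sqrt_mul (by positivity), Real.sqrt_mul (by positivity)]
  have r2 : √(N / (T * Q)) = n / (t * q) := by
    rw [Real.sqrt_div hN0.le, Real.sqrt_mul (by positivity)]
  rw [r1, r2]
  calc _ ≤ P ^ 2 * M * (2 * (N / Q)) * (P ^ 2 * N * (M * P ^ 2 +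
        2 * (4 * C * D ^ 2 * (√y * (Q * q) + M / √y * (2 * q))))) := by
        have : 0 ≤ ∑ r ∈ Finset.Ico 1 Q, φ r :=
          Finset.sum_nonneg fun r _ => by simp only [hφ]; positivity
        gcongr
    _ = 2 * P ^ 4 * X * (P ^ 2 * (X / Q) + 8 * C * D ^ 2 * (n * t * q) +
          16 * C * D ^ 2 * X * (n / (t * q))) := by
        rw [hsy, ← hMN, ← hqq, ← hnn]
        field_simp
        ring
    _ ≤ 2 * P ^ 4 * X * (16 * C * P ^ 2 * (X / Q) + 16 * C * P ^ 2 * (D ^ 2 * (n * t * q)) +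
          16 * C * P ^ 2 * (D ^ 2 * X * (n / (t * q)))) := by
        have hP2 : 1 ≤ P ^ 2 := one_le_pow₀ hP
        have z1 : 0 ≤ X / Q := by positivity
        have z2 : 0 ≤ D ^ 2 * (n * t * q) := by positivity
        have z3 : 0 ≤ D ^ 2 * X * (n / (t * q)) := by positivity
        have w1 : P ^ 2 ≤ 16 * C * P ^ 2 := by nlinarith
        have w2 : 8 * C ≤ 16 * C * P ^ 2 := by nlinarith
        have w3 : 16 * C ≤ 16 * C * P ^ 2 := by nlinarith
        have v1 := mul_le_mul_of_nonneg_right w1 z1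
        have v2 := mul_le_mul_of_nonneg_right w2 z2
        have v3 := mul_le_mul_of_nonneg_right w3 z3
        apply mul_le_mul_of_nonneg_left _ (by positivity)
        linarith
    _ = _ := by ring

lemma eventually_le_rpow (C ε : ℝ) (hε : 0 < ε) : ∀ᶠ X : ℝ in Filter.atTop, C ≤ X ^ ε :=
  (tendsto_rpow_atTop hε).eventually_ge_atTop C

lemma sqrt_rpow (X u : ℝ) (hX : 0 ≤ X) : √(X ^ u) = X ^ (u / 2) := by
  rw [Real.sqrt_eq_rpow, ← Real.rpow_mul hX]; ring_nf

set_option maxHeartbeats 800000 in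
/-- The bilinear estimate with the block length optimised, for `M` near or above `√X`.
Here `c = 17 / 16 - η`, `c - 1 = 1 / 16 - η` and `P = X ^ ε` with `ε = η / 1000`. -/
lemma typeII_dyadic (μ η ε : ℝ) (hμ0 : 0 < μ) (hμ1 : μ < 1) (hη0 : 0 < η) (hη1 : η < 1 / 16)
    (hε : ε = η / 1000) :
    ∀ᶠ X : ℝ in Filter.atTop, ∀ (θ : ℝ) (lam : ℕ → ℝ) (a b : ℕ → ℂ) (M : ℕ),
      IsSieveWeight (X ^ (η / 2)) lam → X ^ (3 / 8 - η / 2) ≤ |θ| * X ^ (17 / 16 - η) →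
      0 < M → X ^ (1 / 8 : ℝ) ≤ X / M → X / M ≤ 4 / μ * X ^ (1 / 2 : ℝ) →
      (∀ m, ‖a m‖ ≤ X ^ ε) → (∀ k, ‖b k‖ ≤ X ^ ε) →
      (∀ n, ⌊μ * X⌋₊ < n → n ≤ ⌊X⌋₊ → |rho (X ^ (η / 2)) lam n| ≤ X ^ ε) →
      ‖∑ m ∈ Finset.Ico M (2 * M), ∑ k ∈ Finset.Icc 1 (⌊X⌋₊ / M),
          a m * b k * G (17 / 16 - η) θ (X ^ (η / 2)) lam ⌊μ * X⌋₊ ⌊X⌋₊ (m * k)‖ ^ 2 ≤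
        X ^ (2 - 2 * (1 / 16 - η) - 40 * ε) *
          (1 + |θ| / X ^ (1 / 16 - η + 20 * ε)) := by
  have hε0 : 0 < ε := by rw [hε]; linarith
  have hη : η = 1000 * ε := by rw [hε]; ring
  obtain ⟨C, hC, hII⟩ := typeII (17 / 16 - η) μ (by linarith) (by linarith) hμ0 hμ1
  set C₁ := 4 / μ with hC₁
  have hC₁0 : 0 < C₁ := by positivity
  filter_upwards [eventually_le_rpow 4 ε hε0, eventually_le_rpow (2 * C₁ + 2 * C₁ ^ 2) ε hε0,
    eventually_le_rpow (3 * C) ε hε0, Filter.eventually_ge_atTop (1 : ℝ)] with X h4 hC1 h3C hX1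
  intro θ lam a b M hlam hθT hM hN1 hN2 ha hb hρ
  have hX : 0 < X := by linarith
  have hM0 : (0 : ℝ) < M := by exact_mod_cast hM
  set N := X / M with hN
  set T := |θ| * X ^ (17 / 16 - η) with hT
  set D := X ^ (η / 2) with hD
  set σ := 1 / 16 - η with hσ
  have mono : ∀ u v : ℝ, u ≤ v → X ^ u ≤ X ^ v := fun u v h =>
    Real.rpow_le_rpow_of_exponent_le hX1 h
  have pos : ∀ u : ℝ, 0 < X ^ u := fun u => Real.rpow_pos_of_pos hX u
  have add : ∀ u v : ℝ, X ^ u * X ^ v = X ^ (u + v) := fun u v => (Real.rpow_add hX u v).symm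
  have hT0 : 0 < T := lt_of_lt_of_le (pos _) hθT
  have hθ : θ ≠ 0 := by
    rintro rfl
    simp [hT] at hT0
  have hN0 : 0 < N := by positivity
  have hR : 1 ≤ 1 + |θ| / X ^ (σ + 20 * ε) := by
    have : 0 ≤ |θ| / X ^ (σ + 20 * ε) := div_nonneg (abs_nonneg _) (pos _).le
    linarith
  set R := 1 + |θ| / X ^ (σ + 20 * ε) with hRdef
  have hTR : T ≤ R * X ^ (1 + 2 * σ + 20 * ε) := by
    have h1 : |θ| ≤ R * X ^ (σ + 20 * ε) := by
      have : |θ| = |θ| / X ^ (σ + 20 * ε) * X ^ (σ + 20 * ε) := by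
        field_simp
      rw [this]
      apply mul_le_mul_of_nonneg_right _ (pos _).le
      rw [hRdef]; linarith
    calc T ≤ R * X ^ (σ + 20 * ε) * X ^ (17 / 16 - η) :=
          mul_le_mul_of_nonneg_right h1 (pos _).le
      _ = R * (X ^ (σ + 20 * ε) * X ^ (17 / 16 - η)) := by ring
      _ = _ := by rw [add]; congr 2; rw [hσ]; ring
  set A1 := X ^ (2 * σ + 100 * ε) with hA1
  set A2 := X ^ (4 * σ + 2 * η + 100 * ε) with hA2
  set Q0 := A1 + A2 * (N / T) with hQ0
  have hA1p : 0 < A1 := pos _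
  have hA2p : 0 < A2 := pos _
  have hA11 : 1 ≤ A1 := Real.one_le_rpow hX1 (by linarith)
  have hNT : 0 < A2 * (N / T) := by positivity
  have hQ01 : 1 ≤ Q0 := by linarith
  have hQ0N : Q0 ≤ N / 2 := by
    have h1 : 4 * A1 ≤ N := by
      calc 4 * A1 ≤ X ^ ε * A1 := by gcongr
        _ = X ^ (ε + (2 * σ + 100 * ε)) := add _ _
        _ ≤ X ^ (1 / 8 : ℝ) := mono _ _ (by rw [hσ, hη]; linarith)
        _ ≤ N := hN1
    have h2 : 4 * A2 ≤ T := by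
      calc 4 * A2 ≤ X ^ ε * A2 := by gcongr
        _ = X ^ (ε + (4 * σ + 2 * η + 100 * ε)) := add _ _
        _ ≤ X ^ (3 / 8 - η / 2) := mono _ _ (by rw [hσ]; linarith)
        _ ≤ T := hθT
    have h3 : A2 * (N / T) ≤ N / 4 := by
      rw [mul_div_assoc', div_le_iff₀ hT0]
      nlinarith
    linarith
  set Q := ⌈Q0⌉₊ with hQ
  have hQpos : 0 < Q := Nat.ceil_pos.2 (by linarith)
  have hQle : Q0 ≤ Q := Nat.le_ceil _
  have hQ2 : (Q : ℝ) ≤ 2 * Q0 := by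
    have := Nat.ceil_lt_add_one (show 0 ≤ Q0 by linarith)
    linarith
  have hQr : (0 : ℝ) < Q := by exact_mod_cast hQpos
  have main := hII X θ D (X ^ ε) lam a b M Q hlam hX hθ (Real.one_le_rpow hX1 (by linarith))
    (Real.one_le_rpow hX1 hε0.le) hM hQpos (by linarith) ha hb hρ
  refine main.trans ?_
  have hD2 : D ^ 2 = X ^ η := by
    rw [hD, sq, add]; congr 1; ring
  set E := X ^ (1 - 2 * σ - 50 * ε) with hE
  have hE0 : 0 < E := pos _
  have t1 : X / Q ≤ R * E := by
    calc X / Q ≤ X / A1 := by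
          gcongr
          linarith
      _ = X ^ (1 - (2 * σ + 100 * ε)) := by rw [Real.rpow_sub hX, Real.rpow_one]
      _ ≤ E := mono _ _ (by linarith)
      _ ≤ R * E := by nlinarith
  have t3 : D ^ 2 * X * √(N / (T * Q)) ≤ R * E := by
    have h1 : N / (T * Q) ≤ X ^ (-(4 * σ + 2 * η + 100 * ε)) := by
      rw [Real.rpow_neg hX.le, ← hA2, div_le_iff₀ (by positivity)]
      have : A2 * (N / T) ≤ Q := by linarith
      calc N = A2⁻¹ * (T * (A2 * (N / T))) := by field_simp
        _ ≤ A2⁻¹ * (T * Q) := by gcongr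
    calc D ^ 2 * X * √(N / (T * Q)) ≤ X ^ η * X ^ (1 : ℝ) *
          X ^ (-(4 * σ + 2 * η + 100 * ε) / 2) := by
          rw [hD2, ← sqrt_rpow _ _ hX.le, Real.rpow_one]
          gcongr
      _ = E := by rw [add, add]; congr 1; ring
      _ ≤ R * E := by nlinarith
  have t2 : D ^ 2 * √(N * T * Q) ≤ R * E := by
    have h1 : N * T * Q ≤ R ^ 2 * X ^ (3 / 2 + 4 * σ + 121 * ε) := by
      have hRR : R ≤ R ^ 2 := by nlinarith
      have g1 : N * T * A1 ≤ C₁ * R ^ 2 * X ^ (3 / 2 + 4 * σ + 120 * ε) := by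
        calc N * T * A1 ≤ (C₁ * X ^ (1 / 2 : ℝ)) * (R ^ 2 * X ^ (1 + 2 * σ + 20 * ε)) * A1 := by
              gcongr
              refine hTR.trans ?_
              gcongr
          _ = C₁ * R ^ 2 * (X ^ (1 / 2 : ℝ) * X ^ (1 + 2 * σ + 20 * ε) * A1) := by ring
          _ = _ := by rw [hA1, add, add]; congr 2; ring
      have g2 : A2 * N ^ 2 ≤ C₁ ^ 2 * R ^ 2 * X ^ (3 / 2 + 4 * σ + 120 * ε) := by
        calc A2 * N ^ 2 ≤ A2 * (C₁ * X ^ (1 / 2 : ℝ)) ^ 2 := by gcongr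
          _ = C₁ ^ 2 * (A2 * (X ^ (1 / 2 : ℝ) * X ^ (1 / 2 : ℝ))) := by ring
          _ = C₁ ^ 2 * 1 * X ^ (4 * σ + 2 * η + 100 * ε + (1 / 2 + 1 / 2)) := by
              rw [hA2, add, add, mul_one]
          _ ≤ _ := by
              apply mul_le_mul _ (mono _ _ (by linarith)) (pos _).le (by positivity)
              apply mul_le_mul_of_nonneg_left _ (by positivity)
              nlinarith
      calc N * T * Q ≤ N * T * (2 * Q0) := by gcongr
        _ = 2 * (N * T * A1) + 2 * (A2 * N ^ 2) := by
            rw [hQ0]; field_simp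
        _ ≤ (2 * C₁ + 2 * C₁ ^ 2) * (R ^ 2 * X ^ (3 / 2 + 4 * σ + 120 * ε)) := by linarith
        _ ≤ X ^ ε * (R ^ 2 * X ^ (3 / 2 + 4 * σ + 120 * ε)) := by
            apply mul_le_mul_of_nonneg_right hC1
            have := pos (3 / 2 + 4 * σ + 120 * ε)
            positivity
        _ = R ^ 2 * (X ^ ε * X ^ (3 / 2 + 4 * σ + 120 * ε)) := by ring
        _ = _ := by rw [add]; congr 2; ring
    calc D ^ 2 * √(N * T * Q) ≤ X ^ η * (R * X ^ ((3 / 2 + 4 * σ + 121 * ε) / 2)) := by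
          rw [hD2, ← sqrt_rpow _ _ hX.le]
          apply mul_le_mul_of_nonneg_left _ (pos _).le
          refine (Real.sqrt_le_sqrt h1).trans ?_
          rw [Real.sqrt_mul (by positivity), Real.sqrt_sq (by linarith)]
      _ = R * (X ^ η * X ^ ((3 / 2 + 4 * σ + 121 * ε) / 2)) := by ring
      _ ≤ R * E := by
          rw [add, hE]
          apply mul_le_mul_of_nonneg_left _ (by linarith)
          exact mono _ _ (by rw [hσ, hη]; linarith)
  have hP6 : (X ^ ε) ^ 6 = X ^ (6 * ε) := by
    rw [← Real.rpow_natCast, ← Real.rpow_mul hX.le]; congr 1; push_cast; ring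
  calc _ ≤ C * (X ^ ε) ^ 6 * X * (R * E + R * E + R * E) := by
        gcongr
    _ = 3 * C * (X ^ (6 * ε) * X ^ (1 : ℝ) * E) * R := by rw [hP6, Real.rpow_one]; ring
    _ ≤ X ^ ε * (X ^ (6 * ε) * X ^ (1 : ℝ) * E) * R := by
        have := pos (6 * ε)
        have := pos 1
        gcongr
    _ = X ^ (ε + (6 * ε + 1 + (1 - 2 * σ - 50 * ε))) * R := by rw [add, hE, add, add]
    _ ≤ _ := by
        apply mul_le_mul_of_nonneg_right _ (by linarith)
        exact mono _ _ (by linarith)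

lemma eventually_log_le_rpow (C ε : ℝ) (hε : 0 < ε) :
    ∀ᶠ X : ℝ in Filter.atTop, C * (1 + Real.log X) ≤ X ^ ε := by
  have h1 := (isLittleO_log_rpow_atTop hε).bound (show 0 < 1 / (2 * (|C| + 1)) by positivity)
  filter_upwards [h1, eventually_le_rpow (2 * |C|) ε hε, Filter.eventually_ge_atTop (1 : ℝ)]
    with X h2 h3 hX
  have hlog : 0 ≤ Real.log X := Real.log_nonneg hX
  have hp : 0 ≤ X ^ ε := Real.rpow_nonneg (by linarith) _
  rw [Real.norm_of_nonneg hlog, Real.norm_of_nonneg hp, one_div, ← div_eq_inv_mul,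
    le_div_iff₀ (by positivity)] at h2
  have h4 : C ≤ |C| := le_abs_self C
  nlinarith [abs_nonneg C]

lemma eventually_natLog_le (ε : ℝ) (hε : 0 < ε) :
    ∀ᶠ X : ℝ in Filter.atTop, ((Nat.log 2 ⌊X⌋₊ + 1 : ℕ) : ℝ) ≤ X ^ ε := by
  filter_upwards [eventually_log_le_rpow 2 ε hε, Filter.eventually_ge_atTop (1 : ℝ)] with X h hX
  refine le_trans ?_ h
  push_cast
  have h1 : (Nat.log 2 ⌊X⌋₊ : ℝ) ≤ Real.logb 2 ⌊X⌋₊ := Real.natLog_le_logb _ _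
  have hf : (1 : ℝ) ≤ ⌊X⌋₊ := by exact_mod_cast (Nat.one_le_floor_iff _).2 hX
  have h2 : Real.log ⌊X⌋₊ ≤ Real.log X :=
    Real.log_le_log (by linarith) (Nat.floor_le (by linarith))
  have h3 : Real.logb 2 ⌊X⌋₊ ≤ 2 * Real.log X := by
    unfold Real.logb
    rw [div_le_iff₀ (Real.log_pos (by norm_num))]
    have := Real.log_two_gt_d9
    have := Real.log_nonneg hX
    nlinarith
  linarith

set_option maxHeartbeats 800000 in
/-- Bilinear sums whose first variable is supported above `(μ / 2) √X` and whose second variable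
is supported above `X ^ (1 / 8)`, by dyadic decomposition of the first variable. -/
lemma typeII_long (μ η ε : ℝ) (hμ0 : 0 < μ) (hμ1 : μ < 1) (hη0 : 0 < η) (hη1 : η < 1 / 16)
    (hε : ε = η / 1000) :
    ∀ᶠ X : ℝ in Filter.atTop, ∀ (θ : ℝ) (lam : ℕ → ℝ) (a b : ℕ → ℂ),
      IsSieveWeight (X ^ (η / 2)) lam → X ^ (3 / 8 - η / 2) ≤ |θ| * X ^ (17 / 16 - η) →
      (∀ m, ‖a m‖ ≤ X ^ ε) → (∀ k, ‖b k‖ ≤ X ^ ε) →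
      (∀ n, ⌊μ * X⌋₊ < n → n ≤ ⌊X⌋₊ → |rho (X ^ (η / 2)) lam n| ≤ X ^ ε) →
      (∀ m k : ℕ, a m ≠ 0 → b k ≠ 0 → ⌊μ * X⌋₊ < m * k → m * k ≤ ⌊X⌋₊ →
        μ / 2 * X ^ (1 / 2 : ℝ) ≤ m ∧ X ^ (1 / 8 : ℝ) ≤ k) →
      ‖∑ m ∈ Finset.Icc 1 ⌊X⌋₊, ∑ k ∈ Finset.Icc 1 ⌊X⌋₊,
          a m * b k * G (17 / 16 - η) θ (X ^ (η / 2)) lam ⌊μ * X⌋₊ ⌊X⌋₊ (m * k)‖ ≤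
        X ^ (1 - (1 / 16 - η) - 19 * ε) * √(1 + |θ| / X ^ (1 / 16 - η + 20 * ε)) := by
  have hε0 : 0 < ε := by rw [hε]; linarith
  filter_upwards [typeII_dyadic μ η ε hμ0 hμ1 hη0 hη1 hε, eventually_natLog_le ε hε0,
    Filter.eventually_ge_atTop (1 : ℝ)] with X hdy hlog hX1
  intro θ lam a b hlam hθT ha hb hρ hsupp
  have hX : 0 < X := by linarith
  set B := ⌊X⌋₊ with hB
  set A := ⌊μ * X⌋₊ with hA
  set F := G (17 / 16 - η) θ (X ^ (η / 2)) lam A B with hF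
  have hF0 : ∀ n, ¬ (A < n ∧ n ≤ B) → F n = 0 := by
    intro n hn
    rw [hF]; unfold G; rw [if_neg hn]
  set R := 1 + |θ| / X ^ (1 / 16 - η + 20 * ε) with hR
  set E := X ^ (2 - 2 * (1 / 16 - η) - 40 * ε) with hE
  have hBX : (B : ℝ) ≤ X := Nat.floor_le hX.le
  have hpiece : ∀ i ∈ Finset.range (Nat.log 2 B + 1),
      ‖∑ m ∈ Finset.Ico (2 ^ i) (2 * 2 ^ i), ∑ k ∈ Finset.Icc 1 (B / 2 ^ i),
        a m * b k * F (m * k)‖ ≤ √(E * R) := by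
    intro i _
    by_cases hz : ∃ m ∈ Finset.Ico (2 ^ i) (2 * 2 ^ i), ∃ k ∈ Finset.Icc 1 (B / 2 ^ i),
        a m * b k * F (m * k) ≠ 0
    · obtain ⟨m, hm, k, hk, hne⟩ := hz
      rw [Finset.mem_Ico] at hm
      have hm2 : (m : ℝ) ≤ 2 * (2 ^ i : ℕ) := by exact_mod_cast hm.2.le
      have hm1 : ((2 ^ i : ℕ) : ℝ) ≤ m := by exact_mod_cast hm.1
      have hap : a m ≠ 0 := fun h => hne (by rw [h]; ring)
      have hbp : b k ≠ 0 := fun h => hne (by rw [h]; ring)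
      have hfp : A < m * k ∧ m * k ≤ B := by
        by_contra h
        exact hne (by rw [hF0 _ h]; ring)
      obtain ⟨q1, q2⟩ := hsupp m k hap hbp hfp.1 hfp.2
      have hM0 : (0 : ℝ) < (2 ^ i : ℕ) := by positivity
      apply Real.le_sqrt_of_sq_le
      refine hdy θ lam a b (2 ^ i) hlam hθT (by positivity) ?_ ?_ ha hb hρ
      · rw [le_div_iff₀ hM0]
        have : (m : ℝ) * k ≤ X := le_trans (by exact_mod_cast hfp.2) hBX
        have hk0 : (0 : ℝ) ≤ k := by positivity
        nlinarith
      · rw [div_le_iff₀ hM0]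
        have hs : X ^ (1 / 2 : ℝ) * X ^ (1 / 2 : ℝ) = X := by
          rw [← Real.rpow_add hX]; norm_num
        have hs0 : 0 < X ^ (1 / 2 : ℝ) := Real.rpow_pos_of_pos hX _
        calc X = 4 / μ * X ^ (1 / 2 : ℝ) * (μ / 4 * X ^ (1 / 2 : ℝ)) := by
              rw [show 4 / μ * X ^ (1 / 2 : ℝ) * (μ / 4 * X ^ (1 / 2 : ℝ)) =
                X ^ (1 / 2 : ℝ) * X ^ (1 / 2 : ℝ) by field_simp, hs]
          _ ≤ _ := by
              gcongr
              linarith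
    · push Not at hz
      rw [Finset.sum_eq_zero fun m hm => Finset.sum_eq_zero fun k hk => hz m hm k hk]
      simp
  have hdecomp : ∑ m ∈ Finset.Icc 1 B, ∑ k ∈ Finset.Icc 1 B, a m * b k * F (m * k) =
      ∑ i ∈ Finset.range (Nat.log 2 B + 1),
        ∑ m ∈ Finset.Ico (2 ^ i) (2 * 2 ^ i), ∑ k ∈ Finset.Icc 1 (B / 2 ^ i),
          a m * b k * F (m * k) := by
    rw [← Finset.sum_fiberwise_of_maps_to (g := Nat.log 2) (t := Finset.range (Nat.log 2 B + 1))]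
    · refine Finset.sum_congr rfl fun i _ => ?_
      have hsub : (Finset.Icc 1 B).filter (fun m => Nat.log 2 m = i) ⊆
          Finset.Ico (2 ^ i) (2 * 2 ^ i) := by
        intro m hm
        simp only [Finset.mem_filter, Finset.mem_Icc] at hm
        rw [Finset.mem_Ico]
        have h1 := Nat.pow_log_le_self 2 (show m ≠ 0 by omega)
        have h2 := Nat.lt_pow_succ_log_self (show 1 < 2 by norm_num) m
        rw [hm.2] at h1 h2
        rw [pow_succ] at h2
        exact ⟨h1, by linarith⟩
      rw [← Finset.sum_subset hsub]
      · refine Finset.sum_congr rfl fun m hm => ?_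
        have hm' := Finset.mem_Ico.1 (hsub hm)
        symm
        apply Finset.sum_subset
        · intro k hk
          rw [Finset.mem_Icc] at hk ⊢
          exact ⟨hk.1, hk.2.trans (Nat.div_le_self _ _)⟩
        · intro k hk hk'
          rw [hF0, mul_zero]
          intro h
          apply hk'
          rw [Finset.mem_Icc] at hk ⊢
          refine ⟨hk.1, ?_⟩
          rw [Nat.le_div_iff_mul_le (by positivity)]
          calc k * 2 ^ i ≤ k * m := Nat.mul_le_mul_left _ hm'.1
            _ ≤ B := by rw [mul_comm]; exact h.2
      · intro m hm hm'
        rw [Finset.mem_Ico] at hm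
        apply Finset.sum_eq_zero
        intro k hk
        rw [hF0, mul_zero]
        intro h
        apply hm'
        rw [Finset.mem_Icc] at hk
        have h1 : 0 < 2 ^ i := by positivity
        simp only [Finset.mem_filter, Finset.mem_Icc]
        refine ⟨⟨by omega, ?_⟩, ?_⟩
        · exact (Nat.le_mul_of_pos_right m (by omega)).trans h.2
        · rw [Nat.log_eq_iff (Or.inr ⟨by norm_num, by omega⟩)]
          refine ⟨hm.1, ?_⟩
          rw [pow_succ]; linarith [hm.2]
    · intro m hm
      rw [Finset.mem_Icc] at hm
      rw [Finset.mem_range, Nat.lt_succ_iff]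
      exact Nat.log_mono_right hm.2
  rw [hdecomp]
  refine (norm_sum_le_of_le _ hpiece).trans ?_
  rw [Finset.sum_const, Finset.card_range, nsmul_eq_mul, Real.sqrt_mul (by positivity), hE,
    sqrt_rpow _ _ hX.le, ← mul_assoc]
  apply mul_le_mul_of_nonneg_right _ (Real.sqrt_nonneg _)
  calc _ ≤ X ^ ε * X ^ ((2 - 2 * (1 / 16 - η) - 40 * ε) / 2) := by gcongr
    _ = _ := by rw [← Real.rpow_add hX]; congr 1; ring

/-- Bilinear sums with both variables supported above `X ^ (1 / 8)`. -/
lemma typeII_full (μ η ε : ℝ) (hμ0 : 0 < μ) (hμ1 : μ < 1) (hη0 : 0 < η) (hη1 : η < 1 / 16)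
    (hε : ε = η / 1000) :
    ∀ᶠ X : ℝ in Filter.atTop, ∀ (θ : ℝ) (lam : ℕ → ℝ) (a b : ℕ → ℂ),
      IsSieveWeight (X ^ (η / 2)) lam → X ^ (3 / 8 - η / 2) ≤ |θ| * X ^ (17 / 16 - η) →
      (∀ m, ‖a m‖ ≤ X ^ ε) → (∀ k, ‖b k‖ ≤ X ^ ε) →
      (∀ n, ⌊μ * X⌋₊ < n → n ≤ ⌊X⌋₊ → |rho (X ^ (η / 2)) lam n| ≤ X ^ ε) →
      (∀ m : ℕ, a m ≠ 0 → X ^ (1 / 8 : ℝ) ≤ m) → (∀ k : ℕ, b k ≠ 0 → X ^ (1 / 8 : ℝ) ≤ k) →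
      ‖∑ m ∈ Finset.Icc 1 ⌊X⌋₊, ∑ k ∈ Finset.Icc 1 ⌊X⌋₊,
          a m * b k * G (17 / 16 - η) θ (X ^ (η / 2)) lam ⌊μ * X⌋₊ ⌊X⌋₊ (m * k)‖ ≤
        2 * (X ^ (1 - (1 / 16 - η) - 19 * ε) * √(1 + |θ| / X ^ (1 / 16 - η + 20 * ε))) := by
  filter_upwards [typeII_long μ η ε hμ0 hμ1 hη0 hη1 hε,
    Filter.eventually_ge_atTop (2 : ℝ)] with X hlong hX2
  intro θ lam a b hlam hθT ha hb hρ ha8 hb8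
  have hX : 0 < X := by linarith
  set B := ⌊X⌋₊ with hB
  set A := ⌊μ * X⌋₊ with hA
  set F := G (17 / 16 - η) θ (X ^ (η / 2)) lam A B with hF
  have hBX : (B : ℝ) ≤ X := Nat.floor_le hX.le
  have hBX' : X < B + 1 := Nat.lt_floor_add_one X
  set s := X ^ (1 / 2 : ℝ) with hs
  have hs0 : 0 < s := Real.rpow_pos_of_pos hX _
  have hss : s * s = X := by
    rw [hs, ← Real.rpow_add hX]; norm_num
  have hP0 : 0 ≤ X ^ ε := Real.rpow_nonneg hX.le _
  set a₁ : ℕ → ℂ := fun m => if B ≤ m * m then a m else 0 with ha₁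
  set a₂ : ℕ → ℂ := fun m => if B ≤ m * m then 0 else a m with ha₂
  have hsum : ∀ m, a m = a₁ m + a₂ m := by
    intro m
    simp only [ha₁, ha₂]
    split_ifs <;> simp
  have h1 := hlong θ lam a₁ b hlam hθT
    (by intro m; simp only [ha₁]; split_ifs; exacts [ha m, by simpa using hP0]) hb hρ (by
      intro m k hm hk _ _
      refine ⟨?_, hb8 k hk⟩
      simp only [ha₁] at hm
      have hmB : B ≤ m * m := by
        by_contra h
        exact hm (if_neg h)
      have hmB' : (B : ℝ) ≤ m * m := by exact_mod_cast hmB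
      by_contra hlt
      push Not at hlt
      have : (m : ℝ) < s / 2 := by nlinarith
      have hm0 : (0 : ℝ) ≤ m := by positivity
      nlinarith)
  have h2 := hlong θ lam b a₂ hlam hθT hb
    (by intro m; simp only [ha₂]; split_ifs; exacts [by simpa using hP0, ha m]) hρ (by
      intro k m hk hm hA1 hB1
      simp only [ha₂] at hm
      have hmB : ¬ B ≤ m * m := by
        intro h
        exact hm (if_pos h)
      rw [if_neg hmB] at hm
      refine ⟨?_, ha8 m hm⟩
      have hmB' : (m : ℝ) * m < B := by exact_mod_cast not_le.1 hmB
      have hA2 : μ * X < ((k * m : ℕ) : ℝ) := (Nat.floor_lt (by positivity)).1 hA1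
      push_cast at hA2
      have hms : (m : ℝ) < s := by
        by_contra h
        push Not at h
        nlinarith
      by_contra hlt
      push Not at hlt
      have hk0 : (0 : ℝ) ≤ k := by positivity
      have : (k : ℝ) * m ≤ (μ / 2 * s) * s := by
        apply mul_le_mul hlt.le hms.le (by positivity) (by positivity)
      nlinarith)
  rw [Finset.sum_comm] at h2
  have hdec : ∑ m ∈ Finset.Icc 1 B, ∑ k ∈ Finset.Icc 1 B, a m * b k * F (m * k) =
      ∑ m ∈ Finset.Icc 1 B, ∑ k ∈ Finset.Icc 1 B, a₁ m * b k * F (m * k) +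
      ∑ m ∈ Finset.Icc 1 B, ∑ k ∈ Finset.Icc 1 B, b k * a₂ m * F (k * m) := by
    rw [← Finset.sum_add_distrib]
    refine Finset.sum_congr rfl fun m _ => ?_
    rw [← Finset.sum_add_distrib]
    refine Finset.sum_congr rfl fun k _ => ?_
    rw [hsum m, mul_comm k m]
    ring
  rw [hdec]
  refine (norm_add_le _ _).trans ?_
  linarith

/-! ### Linear sums -/

/-- Partial summation for a monotone weight. -/
lemma norm_sum_monotone_mul_le (w : ℕ → ℝ) (hw : Monotone w) (hw0 : 0 ≤ w 0) (z : ℕ → ℂ)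
    (u v : ℕ) (S : ℝ)
    (hS : ∀ u', u ≤ u' → ‖∑ k ∈ Finset.Ioc u' v, z k‖ ≤ S) :
    ‖∑ k ∈ Finset.Ioc u v, (w k : ℂ) * z k‖ ≤ w v * S := by
  set δ : ℕ → ℝ := fun j => if j = 0 then w 0 else w j - w (j - 1) with hδ
  have hδ0 : ∀ j, 0 ≤ δ j := by
    intro j
    simp only [hδ]
    split_ifs
    · exact hw0
    · exact sub_nonneg.2 (hw (Nat.sub_le _ _))
  have hsum : ∀ k, ∑ j ∈ Finset.range (k + 1), δ j = w k := by
    intro k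
    induction k with
    | zero => simp [hδ]
    | succ k ih => rw [Finset.sum_range_succ, ih]; simp [hδ]
  have hre : ∑ k ∈ Finset.Ioc u v, (w k : ℂ) * z k =
      ∑ j ∈ Finset.range (v + 1), (δ j : ℂ) * ∑ k ∈ Finset.Ioc (max u (j - 1)) v, z k := by
    have h1 : ∀ j ∈ Finset.range (v + 1), (δ j : ℂ) * ∑ k ∈ Finset.Ioc (max u (j - 1)) v, z k =
        ∑ k ∈ Finset.Ioc u v, if j ≤ k then (δ j : ℂ) * z k else 0 := by
      intro j _
      rw [← Finset.sum_filter, Finset.mul_sum]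
      refine Finset.sum_congr ?_ fun _ _ => rfl
      ext k
      simp only [Finset.mem_Ioc, Finset.mem_filter, max_lt_iff]
      omega
    rw [Finset.sum_congr rfl h1, Finset.sum_comm]
    refine Finset.sum_congr rfl fun k hk => ?_
    rw [Finset.mem_Ioc] at hk
    rw [← hsum k, ← Finset.sum_filter]
    push_cast
    rw [Finset.sum_mul]
    refine Finset.sum_congr ?_ fun _ _ => rfl
    ext j
    simp only [Finset.mem_range, Finset.mem_filter]
    omega
  rw [hre, ← hsum v, Finset.sum_mul]
  refine norm_sum_le_of_le _ fun j _ => ?_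
  rw [norm_mul, Complex.norm_real, Real.norm_of_nonneg (hδ0 j)]
  exact mul_le_mul_of_nonneg_left (hS _ (le_max_left _ _)) (hδ0 j)

set_option maxHeartbeats 800000 in
/-- The monotone weight is removed by partial summation, after which the second derivative test
applies to each divisor `d` of the sieve. -/
lemma typeI_inner (c μ : ℝ) (hc1 : 1 < c) (hc2 : c < 2) (hμ0 : 0 < μ) (hμ1 : μ < 1) :
    ∃ C : ℝ, 1 ≤ C ∧ ∀ (X θ D : ℝ) (lam : ℕ → ℝ) (w : ℕ → ℝ) (m : ℕ), IsSieveWeight D lam →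
      0 < X → θ ≠ 0 → 0 < m → (m : ℝ) ≤ μ * X → Monotone w → 0 ≤ w 0 →
      ‖∑ k ∈ Finset.Icc 1 ⌊X⌋₊, (w k : ℂ) * G c θ D lam ⌊μ * X⌋₊ ⌊X⌋₊ (m * k)‖ ≤
        (⌊D⌋₊ + 1 : ℝ) * (w ⌊X⌋₊ * (C * (√(|θ| * X ^ c) + X / m / √(|θ| * X ^ c)))) := by
  obtain ⟨C₀, hC₀, hVC⟩ := power_sum_cong c (1 / μ) hc1 hc2 (by
    rw [le_div_iff₀ hμ0]; linarith)
  set s := √(μ ^ c) with hs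
  have hs0 : 0 < s := Real.sqrt_pos.2 (Real.rpow_pos_of_pos hμ0 _)
  have hs1 : s ≤ 1 := by
    rw [hs, Real.sqrt_le_one]
    exact Real.rpow_le_one hμ0.le hμ1.le (by linarith)
  refine ⟨C₀ * (1 + 1 / s), ?_, ?_⟩
  · have : 0 < 1 / s := by positivity
    nlinarith
  intro X θ D lam w m hlam hX hθ hm hmX hw hw0
  set A := ⌊μ * X⌋₊ with hA
  set B := ⌊X⌋₊ with hB
  set T := |θ| * X ^ c with hT
  have hT0 : 0 < T := by
    have := abs_pos.2 hθ
    positivity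
  have hm0 : (0 : ℝ) < m := by exact_mod_cast hm
  set Z := C₀ * (1 + 1 / s) * (√T + X / m / √T) with hZ
  have hZ0 : 0 ≤ Z := by positivity
  have hwn : ∀ k, 0 ≤ w k := fun k => hw0.trans (hw (Nat.zero_le k))
  set κ := θ * (m : ℝ) ^ c with hκ
  have hκ0 : κ ≠ 0 := mul_ne_zero hθ (Real.rpow_pos_of_pos hm0 _).ne'
  have hsize : |κ| * (μ * X / m) ^ c = μ ^ c * T := by
    rw [hκ, abs_mul, abs_of_pos (Real.rpow_pos_of_pos hm0 c), mul_assoc,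
      ← Real.mul_rpow hm0.le (by positivity), show (m : ℝ) * (μ * X / m) = μ * X by field_simp,
      Real.mul_rpow hμ0.le hX.le, hT]
    ring
  have hE : ∑ k ∈ Finset.Icc 1 B, (w k : ℂ) * G c θ D lam A B (m * k) =
      ∑ d ∈ Finset.range (⌊D⌋₊ + 1), (lam d : ℂ) *
        ∑ k ∈ Finset.Ioc (A / m) (B / m), (w k : ℂ) *
          if d ∣ k * m + 2 then e (κ * (k : ℝ) ^ c) else 0 := by
    simp only [Finset.mul_sum]
    rw [Finset.sum_comm]
    symm
    have hsub : Finset.Ioc (A / m) (B / m) ⊆ Finset.Icc 1 B := by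
      intro k hk
      rw [Finset.mem_Ioc] at hk
      rw [Finset.mem_Icc]
      exact ⟨Nat.one_le_of_lt hk.1, hk.2.trans (Nat.div_le_self _ _)⟩
    rw [← Finset.sum_subset hsub]
    · refine Finset.sum_congr rfl fun k hk => ?_
      rw [Finset.mem_Ioc, Nat.div_lt_iff_lt_mul hm, Nat.le_div_iff_mul_le hm] at hk
      unfold G
      rw [mul_comm m k, if_pos hk]
      unfold rho
      rw [Finset.sum_filter]
      push_cast
      rw [Finset.sum_mul, Finset.mul_sum]
      refine Finset.sum_congr rfl fun d _ => ?_
      rw [Real.mul_rpow (by positivity) hm0.le]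
      have : θ * ((k : ℝ) ^ c * (m : ℝ) ^ c) = κ * (k : ℝ) ^ c := by rw [hκ]; ring
      rw [this]
      by_cases hd : d ∣ k * m + 2
      · simp only [hd, if_true]; ring
      · simp only [hd, if_false]; simp
    · intro k _ hk'
      rw [Finset.mem_Ioc, Nat.div_lt_iff_lt_mul hm, Nat.le_div_iff_mul_le hm] at hk'
      unfold G
      rw [mul_comm m k, if_neg hk', mul_zero]
  rw [hE]
  have hterm : ∀ d ∈ Finset.range (⌊D⌋₊ + 1), ‖(lam d : ℂ) *
        ∑ k ∈ Finset.Ioc (A / m) (B / m), (w k : ℂ) *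
          if d ∣ k * m + 2 then e (κ * (k : ℝ) ^ c) else 0‖ ≤ w B * Z := by
    intro d _
    by_cases z1 : lam d = 0
    · simpa [z1] using mul_nonneg (hwn B) hZ0
    have hodd := sieve_odd hlam z1
    rw [norm_mul, Complex.norm_real, Real.norm_eq_abs]
    have hin : ‖∑ k ∈ Finset.Ioc (A / m) (B / m), (w k : ℂ) *
          if d ∣ k * m + 2 then e (κ * (k : ℝ) ^ c) else 0‖ ≤ w (B / m) * Z := by
      apply norm_sum_monotone_mul_le w hw hw0
      intro u' hu'
      have h := hVC κ (μ * X / m) d d m m u' (B / m) hκ0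
        (by rwa [le_div_iff₀ hm0, one_mul]) hodd hodd
        (by
          rw [div_le_iff₀ hm0]
          have h1 : A < (u' + 1) * m := by
            have := Nat.lt_succ_of_le hu'
            exact (Nat.div_lt_iff_lt_mul hm).1 this
          have h2 : μ * X < (((u' + 1) * m : ℕ) : ℝ) := (Nat.floor_lt (by positivity)).1 h1
          push_cast at h2
          linarith)
        (by
          calc ((B / m : ℕ) : ℝ) ≤ B / m := Nat.cast_div_le
            _ ≤ X / m := by
                gcongr
                exact Nat.floor_le hX.le
            _ = 1 / μ * (μ * X / m) := by field_simp)
      rw [← Finset.sum_filter]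
      simp only [and_self] at h
      refine h.trans ?_
      rw [hsize, Real.sqrt_mul (Real.rpow_pos_of_pos hμ0 _).le, ← hs, hZ, mul_assoc]
      apply mul_le_mul_of_nonneg_left _ (by linarith)
      have hsT : 0 < √T := Real.sqrt_pos.2 hT0
      have g1 : s * √T ≤ √T := by nlinarith
      have g2 : μ * X / m / (s * √T) ≤ 1 / s * (X / m / √T) := by
        calc μ * X / m / (s * √T) = μ * (1 / s * (X / m / √T)) := by field_simp
          _ ≤ 1 * (1 / s * (X / m / √T)) := by gcongr
          _ = _ := one_mul _
      have g3 : 0 ≤ 1 / s * √T := by positivity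
      have g4 : 0 ≤ X / m / √T := by positivity
      have g5 : (1 + 1 / s) * (√T + X / m / √T) = √T + 1 / s * √T + X / m / √T +
        1 / s * (X / m / √T) := by ring
      linarith
    calc _ ≤ 1 * (w (B / m) * Z) :=
          mul_le_mul (hlam.1 d) hin (norm_nonneg _) zero_le_one
      _ ≤ w B * Z := by
          rw [one_mul]
          exact mul_le_mul_of_nonneg_right (hw (Nat.div_le_self _ _)) hZ0
  refine (norm_sum_le_of_le _ hterm).trans ?_
  rw [Finset.sum_const, Finset.card_range, nsmul_eq_mul]
  push_cast
  exact le_rfl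

set_option maxHeartbeats 800000 in
/-- Linear sums with a monotone weight `w` of at most logarithmic size and the other variable
supported up to `X ^ (1 / 4)`. -/
lemma typeI_full (μ η ε : ℝ) (hμ0 : 0 < μ) (hμ1 : μ < 1) (hη0 : 0 < η) (hη1 : η < 1 / 16)
    (hε : ε = η / 1000) :
    ∀ᶠ X : ℝ in Filter.atTop, ∀ (θ : ℝ) (lam : ℕ → ℝ) (a : ℕ → ℂ) (w : ℕ → ℝ),
      IsSieveWeight (X ^ (η / 2)) lam → X ^ (3 / 8 - η / 2) ≤ |θ| * X ^ (17 / 16 - η) →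
      (∀ m, ‖a m‖ ≤ X ^ ε) → Monotone w → 0 ≤ w 0 → w ⌊X⌋₊ ≤ X ^ ε →
      (∀ m : ℕ, a m ≠ 0 → (m : ℝ) ≤ X ^ (1 / 4 : ℝ)) →
      ‖∑ m ∈ Finset.Icc 1 ⌊X⌋₊, ∑ k ∈ Finset.Icc 1 ⌊X⌋₊,
          a m * w k * G (17 / 16 - η) θ (X ^ (η / 2)) lam ⌊μ * X⌋₊ ⌊X⌋₊ (m * k)‖ ≤
        X ^ (1 - (1 / 16 - η) - 19 * ε) * √(1 + |θ| / X ^ (1 / 16 - η + 20 * ε)) := by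
  have hε0 : 0 < ε := by rw [hε]; linarith
  have hη : η = 1000 * ε := by rw [hε]; ring
  obtain ⟨C, hC, hI⟩ := typeI_inner (17 / 16 - η) μ (by linarith) (by linarith) hμ0 hμ1
  filter_upwards [eventually_le_rpow (4 * C) ε hε0, eventually_log_le_rpow 1 ε hε0,
    eventually_le_rpow (1 / μ) (3 / 4) (by norm_num),
    Filter.eventually_ge_atTop (1 : ℝ)] with X h4C hlog hXμ hX1
  intro θ lam a w hlam hθT ha hw hw0 hwB ha4
  rw [one_mul] at hlog
  have hX : 0 < X := by linarith
  set B := ⌊X⌋₊ with hB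
  set A := ⌊μ * X⌋₊ with hA
  set T := |θ| * X ^ (17 / 16 - η) with hT
  set D := X ^ (η / 2) with hD
  set F := G (17 / 16 - η) θ D lam A B with hF
  set σ := 1 / 16 - η with hσ
  set R := 1 + |θ| / X ^ (σ + 20 * ε) with hRdef
  have mono : ∀ u v : ℝ, u ≤ v → X ^ u ≤ X ^ v := fun u v h =>
    Real.rpow_le_rpow_of_exponent_le hX1 h
  have pos : ∀ u : ℝ, 0 < X ^ u := fun u => Real.rpow_pos_of_pos hX u
  have add : ∀ u v : ℝ, X ^ u * X ^ v = X ^ (u + v) := fun u v => (Real.rpow_add hX u v).symm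
  have hR : 1 ≤ R := by
    have : 0 ≤ |θ| / X ^ (σ + 20 * ε) := div_nonneg (abs_nonneg _) (pos _).le
    linarith
  have hT0 : 0 < T := lt_of_lt_of_le (pos _) hθT
  have hθ : θ ≠ 0 := by
    rintro rfl
    simp [hT] at hT0
  have hTR : T ≤ R * X ^ (1 + 2 * σ + 20 * ε) := by
    have h1 : |θ| ≤ R * X ^ (σ + 20 * ε) := by
      have : |θ| = |θ| / X ^ (σ + 20 * ε) * X ^ (σ + 20 * ε) := by
        field_simp
      rw [this]
      apply mul_le_mul_of_nonneg_right _ (pos _).le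
      rw [hRdef]; linarith
    calc T ≤ R * X ^ (σ + 20 * ε) * X ^ (17 / 16 - η) :=
          mul_le_mul_of_nonneg_right h1 (pos _).le
      _ = R * (X ^ (σ + 20 * ε) * X ^ (17 / 16 - η)) := by ring
      _ = _ := by rw [add]; congr 2; rw [hσ]; ring
  have hBX : (B : ℝ) ≤ X := Nat.floor_le hX.le
  have hB1 : 1 ≤ B := (Nat.one_le_floor_iff _).2 hX1
  have hD1 : 1 ≤ D := Real.one_le_rpow hX1 (by linarith)
  have hD2 : (⌊D⌋₊ + 1 : ℝ) ≤ 2 * D := by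
    have := Nat.floor_le (show 0 ≤ D by linarith)
    linarith
  set M := ⌊X ^ (1 / 4 : ℝ)⌋₊ with hM
  have hM' : (M : ℝ) ≤ X ^ (1 / 4 : ℝ) := Nat.floor_le (pos _).le
  have hMB : M ≤ B := Nat.floor_le_floor (by
    calc X ^ (1 / 4 : ℝ) ≤ X ^ (1 : ℝ) := mono _ _ (by norm_num)
      _ = X := Real.rpow_one X)
  have hsT : 0 < √T := Real.sqrt_pos.2 hT0
  have hcut : ∑ m ∈ Finset.Icc 1 B, ∑ k ∈ Finset.Icc 1 B, a m * w k * F (m * k) =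
      ∑ m ∈ Finset.Icc 1 M, a m * ∑ k ∈ Finset.Icc 1 B, w k * F (m * k) := by
    symm
    have hsub : Finset.Icc 1 M ⊆ Finset.Icc 1 B := Finset.Icc_subset_Icc_right hMB
    rw [Finset.sum_subset hsub]
    · refine Finset.sum_congr rfl fun m _ => ?_
      rw [Finset.mul_sum]
      exact Finset.sum_congr rfl fun k _ => by ring
    · intro m hm hm'
      have : a m = 0 := by
        by_contra h
        apply hm'
        rw [Finset.mem_Icc] at hm ⊢
        exact ⟨hm.1, Nat.le_floor (ha4 m h)⟩
      rw [this, zero_mul]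
  rw [hcut]
  have hterm : ∀ m ∈ Finset.Icc 1 M, ‖a m * ∑ k ∈ Finset.Icc 1 B, w k * F (m * k)‖ ≤
      2 * C * X ^ (η / 2 + 2 * ε) * (√T + X / √T * (m : ℝ)⁻¹) := by
    intro m hm
    rw [Finset.mem_Icc] at hm
    have hm0 : (0 : ℝ) < m := by exact_mod_cast (show 0 < m by omega)
    have hmM : (m : ℝ) ≤ X ^ (1 / 4 : ℝ) := le_trans (by exact_mod_cast hm.2) hM'
    have hmX : (m : ℝ) ≤ μ * X := by
      have h1 : X ^ (3 / 4 : ℝ) * X ^ (1 / 4 : ℝ) = X := by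
        rw [add]; norm_num
      rw [div_le_iff₀ hμ0] at hXμ
      have := pos (1 / 4)
      nlinarith
    rw [norm_mul]
    calc _ ≤ X ^ ε * ((⌊D⌋₊ + 1 : ℝ) * (w B * (C * (√T + X / m / √T)))) := by
          gcongr
          · exact ha m
          · exact hI X θ D lam w m hlam hX hθ (by omega) hmX hw hw0
      _ ≤ X ^ ε * ((2 * D) * (X ^ ε * (C * (√T + X / m / √T)))) := by
          have := pos ε
          have hwB0 : 0 ≤ w B := hw0.trans (hw (Nat.zero_le B))
          gcongr
      _ = 2 * C * (D * X ^ ε * X ^ ε) * (√T + X / m / √T) := by ring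
      _ = _ := by
          rw [hD, add, add]
          congr 1
          · congr 2; ring
          · congr 1; rw [div_right_comm]; rfl
  refine (norm_sum_le_of_le _ hterm).trans ?_
  rw [← Finset.mul_sum, Finset.sum_add_distrib, ← Finset.mul_sum, Finset.sum_const, Nat.card_Icc,
    nsmul_eq_mul, show M + 1 - 1 = M by omega]
  have hharm : ∑ m ∈ Finset.Icc 1 M, (m : ℝ)⁻¹ ≤ X ^ ε := by
    have h1 := harmonic_le_one_add_log M
    rw [harmonic_eq_sum_Icc] at h1
    push_cast at h1
    refine h1.trans (le_trans ?_ hlog)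
    have : Real.log M ≤ Real.log X := by
      rcases Nat.eq_zero_or_pos M with h0 | h0
      · rw [h0]; simpa using Real.log_nonneg hX1
      · exact Real.log_le_log (by exact_mod_cast h0) (le_trans (by exact_mod_cast hMB) hBX)
    linarith
  have hsR : 1 ≤ √R := by rw [← Real.sqrt_one]; exact Real.sqrt_le_sqrt hR
  have hsT2 : √T ≤ √R * X ^ (1 / 2 + σ + 10 * ε) := by
    refine (Real.sqrt_le_sqrt hTR).trans ?_
    rw [Real.sqrt_mul (by linarith), sqrt_rpow _ _ hX.le]
    apply le_of_eq; congr 2; ring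
  have hsT3 : X ^ (3 / 16 - η / 4) ≤ √T := by
    refine le_trans (le_of_eq ?_) (Real.sqrt_le_sqrt hθT)
    rw [sqrt_rpow _ _ hX.le]; congr 1; ring
  have p1 : (M : ℝ) * √T ≤ √R * X ^ (3 / 4 + σ + 10 * ε) := by
    calc (M : ℝ) * √T ≤ X ^ (1 / 4 : ℝ) * (√R * X ^ (1 / 2 + σ + 10 * ε)) := by gcongr
      _ = √R * (X ^ (1 / 4 : ℝ) * X ^ (1 / 2 + σ + 10 * ε)) := by ring
      _ = _ := by rw [add]; congr 2; ring
  have p2 : X / √T * ∑ m ∈ Finset.Icc 1 M, (m : ℝ)⁻¹ ≤ √R * X ^ (13 / 16 + η / 4 + ε) := by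
    calc X / √T * ∑ m ∈ Finset.Icc 1 M, (m : ℝ)⁻¹ ≤ X / X ^ (3 / 16 - η / 4) * X ^ ε := by
          have := pos (3 / 16 - η / 4)
          gcongr
      _ = X ^ (13 / 16 + η / 4 + ε) := by
          nth_rewrite 1 [← Real.rpow_one X]
          rw [← Real.rpow_sub hX, add]; congr 1; ring
      _ ≤ _ := by
          have := pos (13 / 16 + η / 4 + ε)
          nlinarith
  set E := X ^ (1 - σ - η / 2 - 22 * ε) with hE
  have q1 : X ^ (3 / 4 + σ + 10 * ε) ≤ E := mono _ _ (by rw [hσ, hη]; linarith)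
  have q2 : X ^ (13 / 16 + η / 4 + ε) ≤ E := mono _ _ (by rw [hσ, hη]; linarith)
  have hE0 : 0 < E := pos _
  have hp := pos (η / 2 + 2 * ε)
  calc _ ≤ 2 * C * X ^ (η / 2 + 2 * ε) * (√R * E + √R * E) := by
        apply mul_le_mul_of_nonneg_left _ (by positivity)
        have s1 := mul_le_mul_of_nonneg_left q1 (Real.sqrt_nonneg R)
        have s2 := mul_le_mul_of_nonneg_left q2 (Real.sqrt_nonneg R)
        linarith
    _ = 4 * C * (X ^ (η / 2 + 2 * ε) * E) * √R := by ring
    _ ≤ X ^ ε * (X ^ (η / 2 + 2 * ε) * E) * √R := by gcongr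
    _ = _ := by
        rw [hE, add, add]; congr 2; ring

/-! ### Vaughan's identity -/

open ArithmeticFunction in
/-- The part of an arithmetic function supported on `n ≤ U`. -/
noncomputable def lowPart (f : ArithmeticFunction ℝ) (U : ℝ) : ArithmeticFunction ℝ :=
  ⟨fun n => if (n : ℝ) ≤ U then f n else 0, by simp⟩

lemma lowPart_apply (f : ArithmeticFunction ℝ) (U : ℝ) (n : ℕ) :
    lowPart f U n = if (n : ℝ) ≤ U then f n else 0 := rfl

lemma highPart_apply (f : ArithmeticFunction ℝ) (U : ℝ) (n : ℕ) :
    (f - lowPart f U) n = if (n : ℝ) ≤ U then 0 else f n := by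
  rw [sub_eq_add_neg, ArithmeticFunction.add_apply, ArithmeticFunction.neg_apply, lowPart_apply]
  split_ifs <;> simp

open ArithmeticFunction in
lemma vaughan_identity (U : ℝ) :
    vonMangoldt = lowPart vonMangoldt U + lowPart (moebius : ArithmeticFunction ℝ) U * log
      - (lowPart (moebius : ArithmeticFunction ℝ) U * lowPart vonMangoldt U) *
        (zeta : ArithmeticFunction ℝ)
      + ((moebius : ArithmeticFunction ℝ) - lowPart (moebius : ArithmeticFunction ℝ) U) *
        ((vonMangoldt - lowPart vonMangoldt U) * (zeta : ArithmeticFunction ℝ)) := by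
  have h1 : (moebius : ArithmeticFunction ℝ) * (zeta : ArithmeticFunction ℝ) = 1 :=
    coe_moebius_mul_coe_zeta
  have h2 : vonMangoldt * (zeta : ArithmeticFunction ℝ) = log := vonMangoldt_mul_zeta
  rw [← h2]
  linear_combination (lowPart vonMangoldt U - vonMangoldt) * h1

/-- A sum against a Dirichlet convolution as a double sum. Both variables may run freely up to `B`,
since `F` vanishes beyond `B`. -/
lemma sum_mul_arith (f g : ArithmeticFunction ℝ) (F : ℕ → ℂ) (B : ℕ)
    (hF : ∀ n, B < n → F n = 0) :
    ∑ n ∈ Finset.Icc 1 B, ((f * g) n : ℂ) * F n =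
      ∑ m ∈ Finset.Icc 1 B, ∑ k ∈ Finset.Icc 1 B, (f m : ℂ) * (g k : ℂ) * F (m * k) := by
  rw [← Finset.sum_product' (f := fun m k => (f m : ℂ) * (g k : ℂ) * F (m * k))]
  have h1 : ∑ x ∈ Finset.Icc 1 B ×ˢ Finset.Icc 1 B, (f x.1 : ℂ) * (g x.2 : ℂ) * F (x.1 * x.2) =
      ∑ x ∈ (Finset.Icc 1 B ×ˢ Finset.Icc 1 B).filter (fun x => x.1 * x.2 ≤ B),
        (f x.1 : ℂ) * (g x.2 : ℂ) * F (x.1 * x.2) := by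
    rw [Finset.sum_filter]
    refine Finset.sum_congr rfl fun x _ => ?_
    split_ifs with h
    · rfl
    · rw [hF _ (by omega), mul_zero]
  rw [h1, ← Finset.sum_fiberwise_of_maps_to (g := fun x : ℕ × ℕ => x.1 * x.2)
    (t := Finset.Icc 1 B)]
  · refine Finset.sum_congr rfl fun n hn => ?_
    rw [Finset.mem_Icc] at hn
    rw [ArithmeticFunction.mul_apply]
    push_cast
    rw [Finset.sum_mul]
    refine Finset.sum_congr ?_ ?_
    · ext x
      simp only [Nat.mem_divisorsAntidiagonal, Finset.mem_filter, Finset.mem_product,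
        Finset.mem_Icc]
      constructor
      · rintro ⟨h, hn0⟩
        have hx1 : 0 < x.1 := Nat.pos_of_ne_zero (by rintro h0; rw [h0] at h; simp at h; omega)
        have hx2 : 0 < x.2 := Nat.pos_of_ne_zero (by rintro h0; rw [h0] at h; simp at h; omega)
        have l1 : x.1 ≤ x.1 * x.2 := Nat.le_mul_of_pos_right _ hx2
        have l2 : x.2 ≤ x.1 * x.2 := Nat.le_mul_of_pos_left _ hx1
        exact ⟨⟨⟨⟨hx1, by omega⟩, ⟨hx2, by omega⟩⟩, by omega⟩, h⟩
      · rintro ⟨_, h⟩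
        exact ⟨h, by omega⟩
    · intro x hx
      rw [(Finset.mem_filter.1 hx).2]
  · intro x hx
    simp only [Finset.mem_filter, Finset.mem_product, Finset.mem_Icc] at hx ⊢
    exact ⟨Nat.mul_pos (by omega) (by omega), hx.2⟩

lemma eventually_rho_le (η ε : ℝ) (hε : 0 < ε) :
    ∀ᶠ X : ℝ in Filter.atTop, ∀ lam : ℕ → ℝ, IsSieveWeight (X ^ (η / 2)) lam →
      ∀ n : ℕ, n ≤ ⌊X⌋₊ → |rho (X ^ (η / 2)) lam n| ≤ X ^ ε := by
  obtain ⟨C, hC, hdiv⟩ := divisor_bound (ε / 2) (by linarith)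
  filter_upwards [eventually_le_rpow (C * 3 ^ (ε / 2)) (ε / 2) (by linarith),
    Filter.eventually_ge_atTop (1 : ℝ)] with X hCX hX1
  intro lam hlam n hn
  have hX : 0 < X := by linarith
  have h1 : |rho (X ^ (η / 2)) lam n| ≤ ((n + 2).divisors.card : ℝ) := by
    unfold rho
    refine (Finset.abs_sum_le_sum_abs _ _).trans ((Finset.sum_le_card_nsmul _ _ 1
      fun d _ => hlam.1 d).trans ?_)
    rw [nsmul_eq_mul, mul_one]
    have : ((Finset.range (⌊X ^ (η / 2)⌋₊ + 1)).filter (fun d => d ∣ n + 2)) ⊆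
        (n + 2).divisors := by
      intro d hd
      rw [Nat.mem_divisors]
      exact ⟨(Finset.mem_filter.1 hd).2, by omega⟩
    exact_mod_cast Finset.card_le_card this
  have h2 : ((n + 2 : ℕ) : ℝ) ≤ 3 * X := by
    have : (n : ℝ) ≤ X := le_trans (by exact_mod_cast hn) (Nat.floor_le hX.le)
    push_cast; linarith
  calc _ ≤ C * ((n + 2 : ℕ) : ℝ) ^ (ε / 2) := h1.trans (hdiv _ (by omega))
    _ ≤ C * (3 * X) ^ (ε / 2) := by
        gcongr
    _ = C * 3 ^ (ε / 2) * X ^ (ε / 2) := by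
        rw [Real.mul_rpow (by norm_num) hX.le]; ring
    _ ≤ X ^ (ε / 2) * X ^ (ε / 2) := by gcongr
    _ = X ^ ε := by rw [← Real.rpow_add hX]; congr 1; ring

open ArithmeticFunction in
lemma abs_low_mul_low_le (U : ℝ) (m : ℕ) :
    |(lowPart (moebius : ArithmeticFunction ℝ) U * lowPart vonMangoldt U) m| ≤ Real.log m := by
  rw [ArithmeticFunction.mul_apply]
  refine (Finset.abs_sum_le_sum_abs _ _).trans ?_
  calc _ ≤ ∑ x ∈ m.divisorsAntidiagonal, vonMangoldt x.2 := by
        apply Finset.sum_le_sum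
        intro x _
        have h1 : |lowPart (moebius : ArithmeticFunction ℝ) U x.1| ≤ 1 := by
          rw [lowPart_apply]
          split_ifs
          · rw [intCoe_apply]
            exact_mod_cast abs_moebius_le_one
          · simp
        have h2 : |lowPart vonMangoldt U x.2| ≤ vonMangoldt x.2 := by
          rw [lowPart_apply]
          split_ifs
          · rw [abs_of_nonneg vonMangoldt_nonneg]
          · simp
        rw [abs_mul]
        calc _ ≤ 1 * vonMangoldt x.2 := mul_le_mul h1 h2 (abs_nonneg _) zero_le_one
          _ = _ := one_mul _
    _ = ∑ d ∈ m.divisors, vonMangoldt d :=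
        Nat.sum_divisorsAntidiagonal' (f := fun _ d => (vonMangoldt d : ℝ))
    _ = _ := vonMangoldt_sum

open ArithmeticFunction in
lemma high_mul_zeta_bounds (U : ℝ) (k : ℕ) :
    0 ≤ ((vonMangoldt - lowPart vonMangoldt U) * (zeta : ArithmeticFunction ℝ)) k ∧
    ((vonMangoldt - lowPart vonMangoldt U) * (zeta : ArithmeticFunction ℝ)) k ≤ Real.log k ∧
    (((vonMangoldt - lowPart vonMangoldt U) * (zeta : ArithmeticFunction ℝ)) k ≠ 0 → U ≤ k) := by
  rw [coe_mul_zeta_apply]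
  refine ⟨?_, ?_, ?_⟩
  · apply Finset.sum_nonneg
    intro d _
    rw [highPart_apply]
    split_ifs
    · exact le_rfl
    · exact vonMangoldt_nonneg
  · rw [← vonMangoldt_sum]
    apply Finset.sum_le_sum
    intro d _
    rw [highPart_apply]
    split_ifs
    · exact vonMangoldt_nonneg
    · exact le_rfl
  · intro h
    obtain ⟨d, hd, hne⟩ := Finset.exists_ne_zero_of_sum_ne_zero h
    rw [highPart_apply] at hne
    have h1 : ¬ (d : ℝ) ≤ U := fun h' => hne (if_pos h')
    push Not at h1
    have h2 : (d : ℝ) ≤ k := by exact_mod_cast Nat.divisor_le hd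
    linarith

open ArithmeticFunction in
set_option maxHeartbeats 800000 in
/-- The exponential sum with the von Mangoldt function, for every frequency `θ` that is not too
small. -/
lemma mangoldt_sum_bound (μ η ε : ℝ) (hμ0 : 0 < μ) (hμ1 : μ < 1) (hη0 : 0 < η) (hη1 : η < 1 / 16)
    (hε : ε = η / 1000) :
    ∀ᶠ X : ℝ in Filter.atTop, ∀ (θ : ℝ) (lam : ℕ → ℝ),
      IsSieveWeight (X ^ (η / 2)) lam → X ^ (3 / 8 - η / 2) ≤ |θ| * X ^ (17 / 16 - η) →
      ‖∑ n ∈ Finset.Icc 1 ⌊X⌋₊, (vonMangoldt n : ℂ) *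
          G (17 / 16 - η) θ (X ^ (η / 2)) lam ⌊μ * X⌋₊ ⌊X⌋₊ n‖ ≤
        X ^ (1 - (1 / 16 - η) - 18 * ε) * √(1 + |θ| / X ^ (1 / 16 - η + 20 * ε)) := by
  have hε0 : 0 < ε := by rw [hε]; linarith
  filter_upwards [typeI_full μ η ε hμ0 hμ1 hη0 hη1 hε, typeII_full μ η ε hμ0 hμ1 hη0 hη1 hε,
    eventually_rho_le η ε hε0, eventually_log_le_rpow 1 ε hε0, eventually_le_rpow 4 ε hε0,
    eventually_le_rpow (1 / μ) (7 / 8) (by norm_num),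
    Filter.eventually_ge_atTop (1 : ℝ)] with X hI hII hρ hlog h4 hXμ hX1
  intro θ lam hlam hθT
  rw [one_mul] at hlog
  have hX : 0 < X := by linarith
  set B := ⌊X⌋₊ with hB
  set A := ⌊μ * X⌋₊ with hA
  set F := G (17 / 16 - η) θ (X ^ (η / 2)) lam A B with hF
  have hF0 : ∀ n, ¬ (A < n ∧ n ≤ B) → F n = 0 := by
    intro n hn
    rw [hF]; unfold G; rw [if_neg hn]
  have hFB : ∀ n, B < n → F n = 0 := fun n hn => hF0 n (by omega)
  set U := X ^ (1 / 8 : ℝ) with hU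
  have hUX : U ≤ X := by
    calc U ≤ X ^ (1 : ℝ) := Real.rpow_le_rpow_of_exponent_le hX1 (by norm_num)
      _ = X := Real.rpow_one X
  have hU4 : X ^ (1 / 4 : ℝ) = U * U := by
    rw [hU, ← Real.rpow_add hX]; norm_num
  have hU0 : 0 < U := Real.rpow_pos_of_pos hX _
  have hU1 : 1 ≤ U := Real.one_le_rpow hX1 (by norm_num)
  have h4X : X ^ (1 / 4 : ℝ) ≤ X := by
    calc X ^ (1 / 4 : ℝ) ≤ X ^ (1 : ℝ) := Real.rpow_le_rpow_of_exponent_le hX1 (by norm_num)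
      _ = X := Real.rpow_one X
  have hP1 : 1 ≤ X ^ ε := Real.one_le_rpow hX1 hε0.le
  have hBX : (B : ℝ) ≤ X := Nat.floor_le hX.le
  have hlogle : ∀ n : ℕ, (n : ℝ) ≤ X → Real.log n ≤ X ^ ε := by
    intro n hn
    have : Real.log n ≤ Real.log X := by
      rcases Nat.eq_zero_or_pos n with h0 | h0
      · rw [h0]; simpa using Real.log_nonneg hX1
      · exact Real.log_le_log (by exact_mod_cast h0) hn
    linarith
  set R := 1 + |θ| / X ^ (1 / 16 - η + 20 * ε) with hR
  set E := X ^ (1 - (1 / 16 - η) - 19 * ε) with hE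
  set Ms := lowPart (moebius : ArithmeticFunction ℝ) U with hMs
  set Ls := lowPart vonMangoldt U with hLs
  set Mb := (moebius : ArithmeticFunction ℝ) - Ms with hMb
  set Lz := (vonMangoldt - Ls) * (zeta : ArithmeticFunction ℝ) with hLz
  have hmu : ∀ n, |(moebius : ArithmeticFunction ℝ) n| ≤ 1 := by
    intro n
    rw [intCoe_apply]
    exact_mod_cast abs_moebius_le_one
  -- the short part of the von Mangoldt function does not meet the range of summation
  have s0 : ∑ n ∈ Finset.Icc 1 B, (Ls n : ℂ) * F n = 0 := by
    apply Finset.sum_eq_zero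
    intro n _
    by_cases hn : A < n ∧ n ≤ B
    · have h1 : μ * X < n := (Nat.floor_lt (by positivity)).1 hn.1
      have h2 : ¬ (n : ℝ) ≤ U := by
        have h3 : X ^ (7 / 8 : ℝ) * U = X := by
          rw [hU, ← Real.rpow_add hX]; norm_num
        rw [div_le_iff₀ hμ0] at hXμ
        push Not
        nlinarith
      rw [hLs, lowPart_apply, if_neg h2]; simp
    · rw [hF0 n hn, mul_zero]
  have s1 : ‖∑ n ∈ Finset.Icc 1 B, ((Ms * log) n : ℂ) * F n‖ ≤ E * √R := by
    rw [sum_mul_arith _ _ _ _ hFB]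
    refine hI θ lam (fun m => (Ms m : ℂ)) (fun k => Real.log k) hlam hθT ?_ ?_ ?_ ?_ ?_
    · intro m
      rw [Complex.norm_real, Real.norm_eq_abs, hMs, lowPart_apply]
      split_ifs
      · exact (hmu m).trans hP1
      · rw [abs_zero]; linarith
    · intro i j hij
      rcases Nat.eq_zero_or_pos i with h0 | h0
      · simp only [h0, Nat.cast_zero, Real.log_zero]
        exact Real.log_natCast_nonneg j
      · exact Real.log_le_log (by exact_mod_cast h0) (by exact_mod_cast hij)
    · simp
    · exact hlogle B hBX
    · intro m hm
      rw [hMs, lowPart_apply] at hm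
      have : (m : ℝ) ≤ U := by
        by_contra h
        rw [if_neg h] at hm
        simp at hm
      rw [hU4]
      nlinarith
  have s2 : ‖∑ n ∈ Finset.Icc 1 B, ((Ms * Ls * (zeta : ArithmeticFunction ℝ)) n : ℂ) * F n‖ ≤
      E * √R := by
    have hsup : ∀ m : ℕ, (Ms * Ls) m ≠ 0 → (m : ℝ) ≤ X ^ (1 / 4 : ℝ) := by
      intro m hm
      rw [ArithmeticFunction.mul_apply] at hm
      obtain ⟨x, hx, hne⟩ := Finset.exists_ne_zero_of_sum_ne_zero hm
      have e1 : (x.1 : ℝ) ≤ U := by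
        by_contra h
        apply hne
        rw [hMs, lowPart_apply _ _ x.1, if_neg h, zero_mul]
      have e2 : (x.2 : ℝ) ≤ U := by
        by_contra h
        apply hne
        rw [hLs, lowPart_apply _ _ x.2, if_neg h, mul_zero]
      rw [← (Nat.mem_divisorsAntidiagonal.1 hx).1, hU4]
      push_cast
      gcongr
    rw [sum_mul_arith _ _ _ _ hFB]
    refine le_trans (le_of_eq ?_)
      (hI θ lam (fun m => ((Ms * Ls) m : ℂ)) (fun _ => 1) hlam hθT ?_ ?_ ?_ ?_ ?_)
    · congr 1
      refine Finset.sum_congr rfl fun m _ => Finset.sum_congr rfl fun k hk => ?_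
      rw [Finset.mem_Icc] at hk
      rw [natCoe_apply, zeta_apply, if_neg (by omega), hF]
      norm_num
    · intro m
      rw [Complex.norm_real, Real.norm_eq_abs]
      by_cases hz : (Ms * Ls) m = 0
      · rw [hz, abs_zero]; linarith
      · exact (abs_low_mul_low_le U m).trans (hlogle m ((hsup m hz).trans h4X))
    · exact monotone_const
    · exact zero_le_one
    · exact hP1
    · intro m hm
      exact hsup m (by exact_mod_cast hm)
  have s3 : ‖∑ n ∈ Finset.Icc 1 B, ((Mb * Lz) n : ℂ) * F n‖ ≤ 2 * (E * √R) := by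
    rw [sum_mul_arith _ _ _ _ hFB]
    refine le_trans (le_of_eq ?_)
      (hII θ lam (fun m => (Mb m : ℂ)) (fun k => if k ≤ B then (Lz k : ℂ) else 0) hlam hθT
      ?_ ?_ (fun n _ hn => hρ lam hlam n hn) ?_ ?_)
    · congr 1
      refine Finset.sum_congr rfl fun m _ => Finset.sum_congr rfl fun k hk => ?_
      rw [Finset.mem_Icc] at hk
      rw [if_pos hk.2]
    · intro m
      rw [Complex.norm_real, Real.norm_eq_abs, hMb, hMs, highPart_apply]
      split_ifs
      · rw [abs_zero]; linarith
      · exact (hmu m).trans hP1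
    · intro k
      split_ifs with hk
      · rw [Complex.norm_real, Real.norm_eq_abs, hLz, hLs,
          abs_of_nonneg (high_mul_zeta_bounds U k).1]
        exact (high_mul_zeta_bounds U k).2.1.trans
          (hlogle k (le_trans (by exact_mod_cast hk) hBX))
      · rw [norm_zero]; linarith
    · intro m hm
      rw [hMb, hMs, highPart_apply] at hm
      have h : ¬ (m : ℝ) ≤ U := fun h => hm (by rw [if_pos h]; simp)
      exact (not_le.1 h).le
    · intro k hk
      have h : Lz k ≠ 0 := by
        intro h
        apply hk
        simp only [h]
        simp
      exact (high_mul_zeta_bounds U k).2.2 h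
  have hdec : ∑ n ∈ Finset.Icc 1 B, (vonMangoldt n : ℂ) * F n =
      ∑ n ∈ Finset.Icc 1 B, (Ls n : ℂ) * F n + ∑ n ∈ Finset.Icc 1 B, ((Ms * log) n : ℂ) * F n -
      ∑ n ∈ Finset.Icc 1 B, ((Ms * Ls * (zeta : ArithmeticFunction ℝ)) n : ℂ) * F n +
      ∑ n ∈ Finset.Icc 1 B, ((Mb * Lz) n : ℂ) * F n := by
    rw [← Finset.sum_add_distrib, ← Finset.sum_sub_distrib, ← Finset.sum_add_distrib]
    refine Finset.sum_congr rfl fun n _ => ?_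
    have h := congrArg (fun f : ArithmeticFunction ℝ => f n) (vaughan_identity U)
    simp only [sub_eq_add_neg, ArithmeticFunction.add_apply, ArithmeticFunction.neg_apply] at h
    rw [h, hLz, hMb, hMs, hLs]
    simp only [sub_eq_add_neg]
    push_cast
    ring
  rw [hdec, s0, zero_add]
  have hfin : 4 * E ≤ X ^ (1 - (1 / 16 - η) - 18 * ε) := by
    calc 4 * E ≤ X ^ ε * E := by
          have : 0 < E := Real.rpow_pos_of_pos hX _
          gcongr
      _ = _ := by rw [hE, ← Real.rpow_add hX]; congr 1; ring
  calc _ ≤ E * √R + E * √R + 2 * (E * √R) := by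
        refine (norm_add_le _ _).trans (add_le_add ((norm_sub_le _ _).trans ?_) s3)
        exact add_le_add s1 s2
    _ = 4 * E * √R := by ring
    _ ≤ _ := by gcongr

/-! ### Removing the integer part -/

lemma hasDerivAt_e_mul (k x : ℝ) :
    HasDerivAt (fun t : ℝ => e (k * t)) (2 * Real.pi * Complex.I * k * e (k * x)) x := by
  have h1 : HasDerivAt (fun t : ℝ => ((k * t : ℝ) : ℂ)) (k : ℂ) x := by
    have := ((hasDerivAt_id x).const_mul k).ofReal_comp
    simpa using this
  have h2 := (h1.const_mul (2 * Real.pi * Complex.I : ℂ)).cexp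
  unfold e
  convert! h2 using 1
  ring

lemma two_pi_I_mul_ne_zero {k : ℝ} (hk : k ≠ 0) : 2 * Real.pi * Complex.I * (k : ℂ) ≠ 0 := by
  have : (k : ℂ) ≠ 0 := by exact_mod_cast hk
  exact mul_ne_zero Complex.two_pi_I_ne_zero this

lemma integral_e_mul {k : ℝ} (hk : k ≠ 0) (a b : ℝ) :
    ∫ t in a..b, e (k * t) = (e (k * b) - e (k * a)) / (2 * Real.pi * Complex.I * k) := by
  have hz := two_pi_I_mul_ne_zero hk
  rw [intervalIntegral.integral_eq_sub_of_hasDerivAt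
    (f := fun t => e (k * t) / (2 * Real.pi * Complex.I * k))]
  · ring
  · intro x _
    convert! (hasDerivAt_e_mul k x).div_const (2 * Real.pi * Complex.I * k) using 1
    rw [mul_div_cancel_left₀ _ hz]
  · exact (continuous_e.comp (by fun_prop)).intervalIntegrable _ _

lemma integral_ramp {k w : ℝ} (hk : k ≠ 0) (hw : 0 < w) :
    ∫ t in (1 - w)..1, e (-k * t) * (((t - 1 + w) / w : ℝ) : ℂ) =
      e (-k) * (-1 / (2 * Real.pi * Complex.I * k) +
        (e (k * w) - 1) / ((2 * Real.pi * Complex.I * k) ^ 2 * w)) := by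
  have hz := two_pi_I_mul_ne_zero hk
  have hw' : (w : ℂ) ≠ 0 := by exact_mod_cast hw.ne'
  set z := 2 * Real.pi * Complex.I * (k : ℂ) with hzdef
  rw [intervalIntegral.integral_eq_sub_of_hasDerivAt
    (f := fun t => e (-k * t) / (-z) * (((t - 1 + w) / w : ℝ) : ℂ) - e (-k * t) / (z ^ 2 * w))]
  · have h1 : e (-k * (1 - w)) = e (-k) * e (k * w) := by rw [← e_add]; ring_nf
    simp only [mul_one, h1]
    push_cast
    field_simp
    ring
  · intro x _
    have d1 := (hasDerivAt_e_mul (-k) x)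
    have d2 : HasDerivAt (fun t : ℝ => (((t - 1 + w) / w : ℝ) : ℂ)) ((1 / w : ℝ) : ℂ) x := by
      have : HasDerivAt (fun t : ℝ => (t - 1 + w) / w) (1 / w) x :=
        (((hasDerivAt_id x).sub_const 1).add_const w).div_const w
      exact this.ofReal_comp
    convert! ((d1.div_const (-z)).mul d2).sub (d1.div_const (z ^ 2 * w)) using 1
    have : (2 * Real.pi * Complex.I * ((-k : ℝ) : ℂ)) = -z := by rw [hzdef]; push_cast; ring
    rw [this]
    push_cast
    field_simp
    ring
  · refine Continuous.intervalIntegrable ?_ _ _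
    exact (continuous_e.comp (by fun_prop)).mul (by fun_prop)

/-- For `0 < w ≤ 1`, a continuous function on `[0, 1]` with equal values at the end points which
agrees with `e(-αx)` outside the short interval `(1 - w, 1]`. -/
noncomputable def smoothPhase (α w x : ℝ) : ℂ :=
  e (-α * x) + (1 - e (-α)) * ((max 0 ((x - 1 + w) / w) : ℝ) : ℂ)

lemma continuous_smoothPhase (α w : ℝ) : Continuous (smoothPhase α w) := by
  unfold smoothPhase
  refine (continuous_e.comp (by fun_prop)).add (continuous_const.mul ?_)
  exact Complex.continuous_ofReal.comp (by fun_prop)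

lemma norm_one_sub_e_le (α : ℝ) : ‖1 - e α‖ ≤ 2 := by
  calc _ ≤ ‖(1 : ℂ)‖ + ‖e α‖ := norm_sub_le _ _
    _ = 2 := by rw [norm_e, norm_one]; norm_num

lemma smoothPhase_sub_le {α w x : ℝ} (hw : 0 < w) (hx : x < 1) :
    ‖e (-α * x) - smoothPhase α w x‖ ≤ if 1 - w < x then 2 else 0 := by
  unfold smoothPhase
  split_ifs with h
  · have h0 : 0 ≤ max 0 ((x - 1 + w) / w) := le_max_left _ _
    have h1 : max 0 ((x - 1 + w) / w) ≤ 1 := by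
      refine max_le zero_le_one ?_
      rw [div_le_one hw]; linarith
    rw [sub_add_cancel_left, norm_neg, norm_mul, Complex.norm_real, Real.norm_eq_abs,
      abs_of_nonneg h0]
    calc _ ≤ 2 * 1 := mul_le_mul (norm_one_sub_e_le _) h1 h0 (by norm_num)
      _ = 2 := by norm_num
  · have : max 0 ((x - 1 + w) / w) = 0 := by
      apply max_eq_left
      apply div_nonpos_of_nonpos_of_nonneg <;> linarith
    rw [this]; simp

/-- The Fourier coefficients of `smoothPhase`. -/
noncomputable def phaseCoeff (α w : ℝ) (h : ℤ) : ℂ :=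
  ∫ x in (0 : ℝ)..1, e (-h * x) * smoothPhase α w x

lemma phaseCoeff_zero_le {α w : ℝ} (hw : 0 < w) : ‖phaseCoeff α w 0‖ ≤ 3 := by
  unfold phaseCoeff
  have := intervalIntegral.norm_integral_le_of_norm_le_const (a := 0) (b := 1) (C := 3)
    (f := fun x => e (-((0 : ℤ) : ℝ) * x) * smoothPhase α w x) ?_
  · simpa using this
  · intro x hx
    rw [Set.uIoc_of_le zero_le_one, Set.mem_Ioc] at hx
    rw [norm_mul, norm_e, one_mul]
    unfold smoothPhase
    refine (norm_add_le _ _).trans ?_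
    have h0 : 0 ≤ max 0 ((x - 1 + w) / w) := le_max_left _ _
    have h1 : max 0 ((x - 1 + w) / w) ≤ 1 := by
      refine max_le zero_le_one ?_
      rw [div_le_one hw]; linarith
    rw [norm_e, norm_mul, Complex.norm_real, Real.norm_eq_abs, abs_of_nonneg h0]
    have := mul_le_mul (norm_one_sub_e_le (-α)) h1 h0 (by norm_num)
    linarith

lemma phaseCoeff_eq {α w : ℝ} (hα : |α| ≤ 1 / 2) (hw : 0 < w) (hw1 : w ≤ 1) {h : ℤ} (hh : h ≠ 0) :
    phaseCoeff α w h = (1 - e (-α)) *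
      (-α / (2 * Real.pi * Complex.I * h * (α + h)) +
        (e (h * w) - 1) / ((2 * Real.pi * Complex.I * h) ^ 2 * w)) := by
  have hhR : (h : ℝ) ≠ 0 := by exact_mod_cast hh
  have hh1 : (1 : ℝ) ≤ |(h : ℝ)| := by exact_mod_cast Int.one_le_abs hh
  have hne : α + h ≠ 0 := by
    intro h0
    have : (h : ℝ) = -α := by linarith
    rw [this, abs_neg] at hh1
    linarith
  have hne' : -(α + h) ≠ 0 := neg_ne_zero.2 hne
  have hneC : (α : ℂ) + h ≠ 0 := by exact_mod_cast hne
  have hhC : (h : ℂ) ≠ 0 := by exact_mod_cast hh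
  have hwC : (w : ℂ) ≠ 0 := by exact_mod_cast hw.ne'
  have i1 : IntervalIntegrable (fun x : ℝ => e (-(α + h) * x)) MeasureTheory.volume 0 1 :=
    (continuous_e.comp (by fun_prop)).intervalIntegrable _ _
  have c2 : Continuous (fun x : ℝ => e (-(h : ℝ) * x) * ((max 0 ((x - 1 + w) / w) : ℝ) : ℂ)) :=
    (continuous_e.comp (by fun_prop)).mul (Complex.continuous_ofReal.comp (by fun_prop))
  have s1 : phaseCoeff α w h = (∫ x in (0 : ℝ)..1, e (-(α + h) * x)) +
      (1 - e (-α)) * ∫ x in (0 : ℝ)..1, e (-(h : ℝ) * x) * ((max 0 ((x - 1 + w) / w) : ℝ) : ℂ) := by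
    rw [← intervalIntegral.integral_const_mul, ← intervalIntegral.integral_add i1
      ((c2.intervalIntegrable 0 1).const_mul (1 - e (-α)))]
    unfold phaseCoeff smoothPhase
    congr 1
    ext x
    have : e (-(α + h) * x) = e (-h * x) * e (-α * x) := by rw [← e_add]; ring_nf
    rw [this]; ring
  have s2 : ∫ x in (0 : ℝ)..1, e (-(h : ℝ) * x) * ((max 0 ((x - 1 + w) / w) : ℝ) : ℂ) =
      ∫ x in (1 - w)..1, e (-(h : ℝ) * x) * (((x - 1 + w) / w : ℝ) : ℂ) := by
    rw [← intervalIntegral.integral_add_adjacent_intervals (b := 1 - w)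
      (c2.intervalIntegrable _ _) (c2.intervalIntegrable _ _)]
    have z : ∫ x in (0 : ℝ)..(1 - w), e (-(h : ℝ) * x) * ((max 0 ((x - 1 + w) / w) : ℝ) : ℂ) =
        ∫ x in (0 : ℝ)..(1 - w), (0 : ℂ) := by
      apply intervalIntegral.integral_congr
      intro x hx
      rw [Set.uIcc_of_le (by linarith), Set.mem_Icc] at hx
      have : max 0 ((x - 1 + w) / w) = 0 :=
        max_eq_left (div_nonpos_of_nonpos_of_nonneg (by linarith) hw.le)
      simp [this]
    rw [z, intervalIntegral.integral_zero, zero_add]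
    apply intervalIntegral.integral_congr
    intro x hx
    rw [Set.uIcc_of_le (by linarith), Set.mem_Icc] at hx
    have : max 0 ((x - 1 + w) / w) = (x - 1 + w) / w :=
      max_eq_right (div_nonneg (by linarith) hw.le)
    simp only [this]
  have e1 : e (-(h : ℝ)) = 1 := by
    have := e_int (-h)
    push_cast at this
    exact this
  have e2 : e (-(α + h)) = e (-α) := by
    rw [neg_add, e_add, e1, mul_one]
  have hI := Complex.two_pi_I_ne_zero
  rw [s1, s2, integral_e_mul hne', integral_ramp hhR hw, e1, mul_one, e2, mul_zero, e_zero]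
  generalize hE : e (h * w) = E
  push_cast
  field_simp
  ring

lemma phaseCoeff_le {α w : ℝ} (hα : |α| ≤ 1 / 2) (hw : 0 < w) (hw1 : w ≤ 1) {h : ℤ} (hh : h ≠ 0) :
    ‖phaseCoeff α w h‖ ≤ 1 / |(h : ℝ)| ∧ ‖phaseCoeff α w h‖ ≤ 1 / (w * |(h : ℝ)| ^ 2) := by
  have hh1 : (1 : ℝ) ≤ |(h : ℝ)| := by exact_mod_cast Int.one_le_abs hh
  set H := |(h : ℝ)| with hH
  have hH0 : 0 < H := by linarith
  have hαh : H / 2 ≤ |α + h| := by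
    have : |(h : ℝ)| ≤ |α + h| + |α| := by
      calc |(h : ℝ)| = |(α + h) - α| := by ring_nf
        _ ≤ _ := abs_sub _ _
    linarith
  have hπ := Real.pi_gt_three
  have hαh0 : 0 < |α + h| := lt_of_lt_of_le (by linarith) hαh
  have n1 : ‖(-α / (2 * Real.pi * Complex.I * h * (α + h)) : ℂ)‖ ≤
      1 / (6 * H ^ 2) := by
    have : ‖(2 * Real.pi * Complex.I * h * (α + h) : ℂ)‖ = 2 * Real.pi * H * |α + h| := by
      rw [show (α + h : ℂ) = ((α + h : ℝ) : ℂ) by push_cast; rfl]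
      simp only [norm_mul, Complex.norm_real, Complex.norm_I, Complex.norm_intCast,
        Real.norm_eq_abs, mul_one, abs_of_pos Real.pi_pos, ← hH]
      norm_num
    rw [norm_div, norm_neg, Complex.norm_real, Real.norm_eq_abs, this,
      div_le_div_iff₀ (by positivity) (by positivity), one_mul]
    calc |α| * (6 * H ^ 2) ≤ 1 / 2 * (6 * H ^ 2) := by gcongr
      _ = 2 * 3 * H * (H / 2) := by ring
      _ ≤ _ := by gcongr
  have n2 : ‖(e (h * w) - 1) / ((2 * Real.pi * Complex.I * h : ℂ) ^ 2 * w)‖ =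
      ‖e (h * w) - 1‖ / ((2 * Real.pi * H) ^ 2 * w) := by
    rw [norm_div, norm_mul, norm_pow]
    congr 2
    · simp only [norm_mul, Complex.norm_I, Complex.norm_intCast, Complex.norm_real,
        Real.norm_eq_abs, mul_one, abs_of_pos Real.pi_pos, ← hH]
      norm_num
    · rw [Complex.norm_real, Real.norm_eq_abs, abs_of_pos hw]
  have n2a : ‖e (h * w) - 1‖ / ((2 * Real.pi * H) ^ 2 * w) ≤ 1 / (6 * H) := by
    have : ‖e (h * w) - 1‖ ≤ 2 * Real.pi * H * w := by
      rw [norm_e_sub_one]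
      calc 2 * |Real.sin (Real.pi * (h * w))| ≤ 2 * |Real.pi * (h * w)| := by
            exact mul_le_mul_of_nonneg_left Real.abs_sin_le_abs (by norm_num)
        _ = _ := by
            rw [abs_mul, abs_mul, abs_of_pos Real.pi_pos, abs_of_pos hw]; ring
    rw [div_le_div_iff₀ (by positivity) (by positivity), one_mul]
    calc _ ≤ 2 * Real.pi * H * w * (6 * H) := by gcongr
      _ = 2 * Real.pi * H * w * (2 * 3 * H) := by ring
      _ ≤ 2 * Real.pi * H * w * (2 * Real.pi * H) := by gcongr
      _ = _ := by ring
  have n2b : ‖e (h * w) - 1‖ / ((2 * Real.pi * H) ^ 2 * w) ≤ 1 / (18 * (w * H ^ 2)) := by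
    have : ‖e (h * w) - 1‖ ≤ 2 := by
      rw [norm_sub_rev]; exact norm_one_sub_e_le _
    rw [div_le_div_iff₀ (by positivity) (by positivity), one_mul]
    calc _ ≤ 2 * (18 * (w * H ^ 2)) := by gcongr
      _ = (2 * 3 * H) ^ 2 * w := by ring
      _ ≤ _ := by gcongr
  rw [phaseCoeff_eq hα hw hw1 hh, norm_mul]
  have hsum := norm_add_le ((-α / (2 * Real.pi * Complex.I * h * (α + h)) : ℂ))
    ((e (h * w) - 1) / ((2 * Real.pi * Complex.I * h : ℂ) ^ 2 * w))
  rw [n2] at hsum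
  have hm : ∀ {x y : ℝ}, ‖((-α / (2 * Real.pi * Complex.I * h * (α + h)) : ℂ)) +
    ((e (h * w) - 1) / ((2 * Real.pi * Complex.I * h : ℂ) ^ 2 * w))‖ ≤ x → 2 * x ≤ y →
      ‖1 - e (-α)‖ * ‖((-α / (2 * Real.pi * Complex.I * h * (α + h)) : ℂ)) +
    ((e (h * w) - 1) / ((2 * Real.pi * Complex.I * h : ℂ) ^ 2 * w))‖ ≤ y := by
    intro x y hx hxy
    refine le_trans ?_ hxy
    exact mul_le_mul (norm_one_sub_e_le _) hx (norm_nonneg _) (by norm_num)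
  constructor
  · refine hm (hsum.trans (add_le_add n1 n2a)) ?_
    have : 1 / (6 * H ^ 2) ≤ 1 / (6 * H) := by
      apply one_div_le_one_div_of_le (by positivity)
      nlinarith
    calc _ ≤ 2 * (1 / (6 * H) + 1 / (6 * H)) := by linarith
      _ = (2 / 3) * (1 / H) := by field_simp; norm_num
      _ ≤ 1 * (1 / H) := by gcongr; norm_num
      _ = _ := one_mul _
  · refine hm (hsum.trans (add_le_add n1 n2b)) ?_
    have : 1 / (6 * H ^ 2) ≤ 1 / (6 * (w * H ^ 2)) := by
      apply one_div_le_one_div_of_le (by positivity)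
      have : w * H ^ 2 ≤ 1 * H ^ 2 := by gcongr
      linarith
    calc _ ≤ 2 * (1 / (6 * (w * H ^ 2)) + 1 / (18 * (w * H ^ 2))) := by linarith
      _ = (4 / 9) * (1 / (w * H ^ 2)) := by field_simp; norm_num
      _ ≤ 1 * (1 / (w * H ^ 2)) := by gcongr; norm_num
      _ = _ := one_mul _

lemma summable_phaseCoeff {α w : ℝ} (hα : |α| ≤ 1 / 2) (hw : 0 < w) (hw1 : w ≤ 1) :
    Summable (phaseCoeff α w) := by
  have h1 : Summable (fun h : ℤ => 1 / w * (1 / |(h : ℝ)| ^ (2 : ℝ))) :=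
    (Summable.mul_left _ (by
      simpa only [one_div, Real.rpow_neg (abs_nonneg _)] using
        Real.summable_abs_int_rpow (b := 2) (by norm_num)))
  refine Summable.of_norm_bounded_eventually h1 ?_
  have : ∀ᶠ h : ℤ in Filter.cofinite, h ≠ 0 :=
    (Set.finite_singleton (0 : ℤ)).compl_mem_cofinite
  filter_upwards [this] with h hh
  refine (phaseCoeff_le hα hw hw1 hh).2.trans (le_of_eq ?_)
  rw [Real.rpow_two, one_div_mul_one_div]

lemma hasSum_smoothPhase {α w : ℝ} (hα : |α| ≤ 1 / 2) (hw : 0 < w) (hw1 : w ≤ 1) (t : ℝ) :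
    HasSum (fun h : ℤ => phaseCoeff α w h * e (h * t)) (smoothPhase α w (Int.fract t)) := by
  have : Fact ((0 : ℝ) < 1) := ⟨one_pos⟩
  have hend : smoothPhase α w 0 = smoothPhase α w 1 := by
    unfold smoothPhase
    have m0 : max 0 ((0 - 1 + w) / w) = 0 :=
      max_eq_left (div_nonpos_of_nonpos_of_nonneg (by linarith) hw.le)
    have m1 : max 0 ((1 - 1 + w) / w) = 1 := by
      rw [sub_self, zero_add, div_self hw.ne']; norm_num
    rw [m0, m1, mul_zero, e_zero]
    push_cast
    ring_nf
  let f : C(AddCircle (1 : ℝ), ℂ) :=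
    ⟨AddCircle.liftIco 1 0 (smoothPhase α w),
      AddCircle.liftIco_zero_continuous hend (continuous_smoothPhase α w).continuousOn⟩
  have hcoef : ∀ h : ℤ, fourierCoeff f h = phaseCoeff α w h := by
    intro h
    change fourierCoeff (AddCircle.liftIco 1 0 (smoothPhase α w)) h = _
    rw [fourierCoeff_liftIco_eq, fourierCoeffOn_eq_integral]
    unfold phaseCoeff
    simp only [zero_add, sub_zero, div_one, one_smul, smul_eq_mul]
    apply intervalIntegral.integral_congr
    intro x _
    simp only
    congr 1
    rw [fourier_coe_apply]
    unfold e
    push_cast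
    congr 1
    ring
  have hsm : Summable (fourierCoeff f) := by
    rw [show fourierCoeff f = phaseCoeff α w from funext hcoef]
    exact summable_phaseCoeff hα hw hw1
  have := has_pointwise_sum_fourier_series_of_summable hsm ((Int.fract t : ℝ) : AddCircle (1 : ℝ))
  have hf : f ((Int.fract t : ℝ) : AddCircle (1 : ℝ)) = smoothPhase α w (Int.fract t) := by
    change AddCircle.liftIco 1 0 (smoothPhase α w) _ = _
    exact AddCircle.liftIco_zero_coe_apply ⟨Int.fract_nonneg t, Int.fract_lt_one t⟩
  rw [hf] at this
  convert! this using 2 with h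
  rw [hcoef, smul_eq_mul]
  congr 1
  rw [fourier_coe_apply]
  have : e (h * t) = e (h * Int.fract t) := by
    have h1 : (h : ℝ) * t = h * Int.fract t + ((h * ⌊t⌋ : ℤ) : ℝ) := by
      push_cast
      nth_rewrite 1 [← Int.floor_add_fract t]
      ring
    rw [h1, e_add, e_int, mul_one]
  rw [this]
  unfold e
  push_cast
  congr 1
  ring

/-- The phase `e(α⌊t⌋)` is an absolutely convergent combination of the phases `e((α + h)t)`,
up to an error supported on `{t} > 1 - w`. -/
lemma floor_phase_approx {α w : ℝ} (hα : |α| ≤ 1 / 2) (hw : 0 < w) (hw1 : w ≤ 1) (t : ℝ) :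
    Summable (fun h : ℤ => phaseCoeff α w h * e ((α + h) * t)) ∧
    ‖e (α * ⌊t⌋) - ∑' h : ℤ, phaseCoeff α w h * e ((α + h) * t)‖ ≤
      if 1 - w < Int.fract t then 2 else 0 := by
  have hs := (hasSum_smoothPhase hα hw hw1 t).mul_left (e (α * t))
  have hfun : (fun h : ℤ => e (α * t) * (phaseCoeff α w h * e (h * t))) =
      fun h : ℤ => phaseCoeff α w h * e ((α + h) * t) := by
    ext h
    rw [add_mul, e_add]; ring
  rw [hfun] at hs
  refine ⟨hs.summable, ?_⟩
  rw [hs.tsum_eq]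
  have h1 : e (α * ⌊t⌋) = e (α * t) * e (-α * Int.fract t) := by
    rw [← e_add]
    congr 1
    have := Int.floor_add_fract t
    have h2 : (⌊t⌋ : ℝ) = t - Int.fract t := by linarith
    rw [h2]; ring
  rw [h1, ← mul_sub, norm_mul, norm_e, one_mul]
  exact smoothPhase_sub_le hw (Int.fract_lt_one t)

/-! ### Fractional parts close to one -/

/-- If `t` lies just below an integer then the geometric sum of length `K` is large at `t`. -/
lemma geom_sum_large {t w : ℝ} {K : ℕ} (hKw : K * w ≤ 1 / 8)
    (ht : 1 - w < Int.fract t) : (K : ℝ) / 2 ≤ ‖∑ j ∈ Finset.range K, e (j * t)‖ := by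
  have hs0 : 0 < 1 - Int.fract t := by linarith [Int.fract_lt_one t]
  refine le_trans ?_ (Complex.re_le_norm _)
  rw [Complex.re_sum]
  have : ∀ j ∈ Finset.range K, (1 / 2 : ℝ) ≤ (e (j * t)).re := by
    intro j hj
    rw [Finset.mem_range] at hj
    have h1 : (j : ℝ) * t = ((j * (⌊t⌋ + 1) : ℤ) : ℝ) + -(j * (1 - Int.fract t)) := by
      push_cast
      nth_rewrite 1 [← Int.floor_add_fract t]
      ring
    rw [h1, e_add, e_int, one_mul]
    set y := (j : ℝ) * (1 - Int.fract t) with hy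
    have hy0 : 0 ≤ y := mul_nonneg (Nat.cast_nonneg _) hs0.le
    have hy1 : y ≤ 1 / 8 := by
      refine le_trans ?_ hKw
      have : (j : ℝ) ≤ K := by exact_mod_cast hj.le
      exact mul_le_mul this (by linarith) hs0.le (Nat.cast_nonneg _)
    have h2 : (e (-y)).re = Real.cos (2 * Real.pi * y) := by
      unfold e
      rw [show (2 * Real.pi * Complex.I * ((-y : ℝ) : ℂ)) =
        ((-(2 * Real.pi * y) : ℝ) : ℂ) * Complex.I by push_cast; ring,
        Complex.exp_ofReal_mul_I_re, Real.cos_neg]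
    rw [h2]
    have h3 := Real.one_sub_sq_div_two_le_cos (x := 2 * Real.pi * y)
    have h4 : 2 * Real.pi * y ≤ 1 := by
      have := Real.pi_lt_four
      nlinarith [Real.pi_pos]
    have h5 : 0 ≤ 2 * Real.pi * y := by have := Real.pi_pos; positivity
    nlinarith
  calc (K : ℝ) / 2 = ∑ j ∈ Finset.range K, (1 / 2 : ℝ) := by
        rw [Finset.sum_const, Finset.card_range, nsmul_eq_mul]; ring
    _ ≤ _ := Finset.sum_le_sum this

lemma norm_sq_geom (t : ℝ) (K : ℕ) :
    ((‖∑ j ∈ Finset.range K, e (j * t)‖ ^ 2 : ℝ) : ℂ) =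
      ∑ j ∈ Finset.range K, ∑ i ∈ Finset.range K, e (((j : ℝ) - i) * t) := by
  rw [← Complex.normSq_eq_norm_sq, ← Complex.mul_conj, map_sum, Finset.sum_mul_sum]
  refine Finset.sum_congr rfl fun j _ => Finset.sum_congr rfl fun i _ => ?_
  rw [conj_e, ← e_add]
  ring_nf

/-- Few `n` have the fractional part of `n ^ c` within `w` of `1`: the Fejér kernel is at least
`K ^ 2 / 4` at such `n ^ c`, and its nonzero frequencies are bounded by the second derivative
test. -/
lemma count_fract (c μ : ℝ) (hc1 : 1 < c) (hc2 : c < 2) (hμ0 : 0 < μ) (hμ1 : μ < 1) :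
    ∃ C : ℝ, 1 ≤ C ∧ ∀ (X w : ℝ) (K : ℕ), 1 ≤ μ * X → 1 ≤ K → K * w ≤ 1 / 8 →
      (((Finset.Ioc ⌊μ * X⌋₊ ⌊X⌋₊).filter (fun n : ℕ => 1 - w < Int.fract ((n : ℝ) ^ c))).card : ℝ)
        ≤ 4 * X / K + C * √(K * X ^ c) := by
  obtain ⟨C, hC, hP⟩ := power_sum_bound c (1 / μ) hc1 hc2 (by rw [le_div_iff₀ hμ0]; linarith)
  refine ⟨8 * C, by linarith, ?_⟩
  intro X w K hX hK hKw
  have hX0 : 0 < X := by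
    by_contra h
    nlinarith
  have hX1 : 1 ≤ X := by nlinarith
  set I := Finset.Ioc ⌊μ * X⌋₊ ⌊X⌋₊ with hI
  set S := I.filter (fun n : ℕ => 1 - w < Int.fract ((n : ℝ) ^ c)) with hS
  have hK1 : (1 : ℝ) ≤ K := by exact_mod_cast hK
  have hK0 : (0 : ℝ) < K := by linarith
  set Y := √(K * X ^ c) with hY
  have hXc : X ≤ X ^ c := by
    calc X = X ^ (1 : ℝ) := (Real.rpow_one X).symm
      _ ≤ _ := Real.rpow_le_rpow_of_exponent_le hX1 hc1.le
  have hXY : √X ≤ Y := by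
    apply Real.sqrt_le_sqrt
    nlinarith
  have hsum : ∀ k : ℝ, 1 ≤ |k| → |k| ≤ K → ‖∑ n ∈ I, e (k * (n : ℝ) ^ c)‖ ≤ 2 * C * Y := by
    intro k hk1 hkK
    have h := hP k (μ * X) 1 0 ⌊μ * X⌋₊ ⌊X⌋₊ (by rintro rfl; norm_num at hk1) hX one_pos
      (Nat.lt_floor_add_one _).le (by
        rw [← mul_assoc, one_div_mul_cancel hμ0.ne', one_mul]; exact Nat.floor_le hX0.le)
    rw [Finset.filter_true_of_mem (fun m _ => Nat.modEq_one)] at h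
    refine h.trans ?_
    have hM : (μ * X) ^ c ≤ X ^ c :=
      Real.rpow_le_rpow (by linarith) (by nlinarith) (by linarith)
    have hM1 : μ * X ≤ (μ * X) ^ c := by
      calc μ * X = (μ * X) ^ (1 : ℝ) := (Real.rpow_one _).symm
        _ ≤ _ := Real.rpow_le_rpow_of_exponent_le hX hc1.le
    have a1 : √(|k| * (μ * X) ^ c) ≤ Y := by
      apply Real.sqrt_le_sqrt
      exact mul_le_mul hkK hM (by linarith) hK0.le
    have a2 : μ * X / √(|k| * (μ * X) ^ c) ≤ √X := by
      have : √(μ * X) ≤ √(|k| * (μ * X) ^ c) := by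
        apply Real.sqrt_le_sqrt
        nlinarith
      have h0 : 0 < √(μ * X) := Real.sqrt_pos.2 (by linarith)
      calc _ ≤ μ * X / √(μ * X) := by gcongr
        _ = √(μ * X) := Real.div_sqrt
        _ ≤ √X := Real.sqrt_le_sqrt (by nlinarith)
    calc _ ≤ C * (Y + Y) := by gcongr; exact a2.trans hXY
      _ = _ := by ring
  have hcardI : (I.card : ℝ) ≤ X := by
    rw [hI, Nat.card_Ioc]
    exact le_trans (by exact_mod_cast Nat.sub_le _ _) (Nat.floor_le hX0.le)
  have hup : ∑ n ∈ I, ‖∑ j ∈ Finset.range K, e (j * (n : ℝ) ^ c)‖ ^ 2 ≤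
      K * X + K ^ 2 * (2 * C * Y) := by
    have h1 : ((∑ n ∈ I, ‖∑ j ∈ Finset.range K, e (j * (n : ℝ) ^ c)‖ ^ 2 : ℝ) : ℂ) =
        ∑ j ∈ Finset.range K, ∑ i ∈ Finset.range K, ∑ n ∈ I, e (((j : ℝ) - i) * (n : ℝ) ^ c) := by
      rw [Complex.ofReal_sum]
      simp only [norm_sq_geom]
      rw [Finset.sum_comm]
      exact Finset.sum_congr rfl fun j _ => Finset.sum_comm
    have h2 : ∑ n ∈ I, ‖∑ j ∈ Finset.range K, e (j * (n : ℝ) ^ c)‖ ^ 2 =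
        ‖∑ j ∈ Finset.range K, ∑ i ∈ Finset.range K,
          ∑ n ∈ I, e (((j : ℝ) - i) * (n : ℝ) ^ c)‖ := by
      rw [← h1, Complex.norm_real, Real.norm_eq_abs, abs_of_nonneg]
      exact Finset.sum_nonneg fun n _ => by positivity
    rw [h2]
    have hCY : 0 ≤ 2 * C * Y := by positivity
    calc _ ≤ ∑ j ∈ Finset.range K, ∑ i ∈ Finset.range K,
          ((if j = i then X else 0) + 2 * C * Y) := by
          refine norm_sum_le_of_le _ fun j hj => norm_sum_le_of_le _ fun i hi => ?_
          rw [Finset.mem_range] at hj hi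
          split_ifs with hji
          · rw [hji, sub_self]
            calc _ ≤ ∑ n ∈ I, (1 : ℝ) := norm_sum_le_of_le _ fun n _ => (norm_e _).le
              _ = I.card := by simp
              _ ≤ X + 2 * C * Y := by linarith
          · rw [zero_add]
            apply hsum
            · have : (1 : ℤ) ≤ |(j : ℤ) - i| := Int.one_le_abs (by omega)
              exact_mod_cast this
            · rw [abs_le]
              have hj' : (j : ℝ) < K := by exact_mod_cast hj
              have hi' : (i : ℝ) < K := by exact_mod_cast hi
              have := Nat.cast_nonneg (α := ℝ) j
              have := Nat.cast_nonneg (α := ℝ) i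
              constructor <;> linarith
      _ = ∑ j ∈ Finset.range K, (X + K * (2 * C * Y)) := by
          refine Finset.sum_congr rfl fun j hj => ?_
          rw [Finset.sum_add_distrib, Finset.sum_ite_eq, if_pos hj, Finset.sum_const,
            Finset.card_range, nsmul_eq_mul]
      _ = _ := by
          rw [Finset.sum_const, Finset.card_range, nsmul_eq_mul]; ring
  have hlow : (S.card : ℝ) * (K / 2) ^ 2 ≤
      ∑ n ∈ I, ‖∑ j ∈ Finset.range K, e (j * (n : ℝ) ^ c)‖ ^ 2 := by
    calc (S.card : ℝ) * (K / 2) ^ 2 = ∑ n ∈ S, ((K : ℝ) / 2) ^ 2 := by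
          rw [Finset.sum_const, nsmul_eq_mul]
      _ ≤ ∑ n ∈ S, ‖∑ j ∈ Finset.range K, e (j * (n : ℝ) ^ c)‖ ^ 2 := by
          apply Finset.sum_le_sum
          intro n hn
          have := geom_sum_large hKw (Finset.mem_filter.1 hn).2
          gcongr
      _ ≤ _ := by
          apply Finset.sum_le_sum_of_subset_of_nonneg (Finset.filter_subset _ _)
          intro n _ _
          positivity
  have h := hlow.trans hup
  have hK2 : 0 < (K : ℝ) ^ 2 := by positivity
  rw [show 4 * X / K + 8 * C * Y = (K * X + K ^ 2 * (2 * C * Y)) * 4 / K ^ 2 by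
    field_simp; ring, le_div_iff₀ hK2]
  linarith

/-! ### Pointwise bounds for the sifted prime sum -/

lemma eventually_count (μ η ε : ℝ) (hμ0 : 0 < μ) (hμ1 : μ < 1) (hη0 : 0 < η) (hη1 : η < 1 / 16)
    (hε : ε = η / 1000) :
    ∀ᶠ X : ℝ in Filter.atTop,
      (((Finset.Ioc ⌊μ * X⌋₊ ⌊X⌋₊).filter (fun n : ℕ => 1 - X ^ (-(1 / 16 - η + 20 * ε)) <
        Int.fract ((n : ℝ) ^ (17 / 16 - η)))).card : ℝ) ≤ X ^ (1 - (1 / 16 - η) - 19 * ε) := by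
  have hε0 : 0 < ε := by rw [hε]; linarith
  obtain ⟨C, hC, hcount⟩ := count_fract (17 / 16 - η) μ (by linarith) (by linarith) hμ0 hμ1
  set s := 1 / 16 - η + 20 * ε with hs
  have hs0 : 0 < s := by linarith
  filter_upwards [eventually_le_rpow (64 + C) ε hε0, eventually_le_rpow 16 s hs0,
    Filter.eventually_ge_atTop (1 : ℝ), Filter.eventually_ge_atTop (1 / μ)] with X hCX h16 hX1 hXμ
  have hX : 0 < X := by linarith
  have hX0 : 0 ≤ X := hX.le
  have hμX : 1 ≤ μ * X := by
    rw [div_le_iff₀ hμ0] at hXμ; linarith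
  set K := ⌊X ^ s / 8⌋₊ with hK
  have hs1 : 0 < X ^ s := Real.rpow_pos_of_pos hX _
  have hKle : (K : ℝ) ≤ X ^ s / 8 := Nat.floor_le (by positivity)
  have hKge : X ^ s / 16 ≤ K := by
    have := Nat.lt_floor_add_one (X ^ s / 8)
    rw [← hK] at this
    linarith
  have hK1 : 1 ≤ K := by
    have : (0 : ℝ) < K := by linarith
    exact_mod_cast this
  have hKw : K * X ^ (-s) ≤ 1 / 8 := by
    rw [Real.rpow_neg hX0]
    calc _ ≤ X ^ s / 8 * (X ^ s)⁻¹ := by gcongr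
      _ = 1 / 8 := by field_simp
  refine (hcount X (X ^ (-s)) K hμX hK1 hKw).trans ?_
  have t1 : 4 * X / K ≤ 64 * X ^ (1 - (1 / 16 - η) - 20 * ε) := by
    calc 4 * X / K ≤ 4 * X / (X ^ s / 16) := by gcongr
      _ = 64 * (X ^ (1 : ℝ) / X ^ s) := by rw [Real.rpow_one]; field_simp; norm_num
      _ = _ := by rw [← Real.rpow_sub hX, hs]; ring_nf
  have t2 : √(K * X ^ (17 / 16 - η)) ≤ X ^ (1 - (1 / 16 - η) - 20 * ε) := by
    calc _ ≤ √(X ^ s * X ^ (17 / 16 - η)) := by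
          apply Real.sqrt_le_sqrt
          gcongr
          linarith
      _ = X ^ ((s + (17 / 16 - η)) / 2) := by rw [← Real.rpow_add hX, sqrt_rpow _ _ hX0]
      _ ≤ _ := Real.rpow_le_rpow_of_exponent_le hX1 (by rw [hs]; linarith)
  have hE : 0 < X ^ (1 - (1 / 16 - η) - 20 * ε) := Real.rpow_pos_of_pos hX _
  calc _ ≤ 64 * X ^ (1 - (1 / 16 - η) - 20 * ε) + C * X ^ (1 - (1 / 16 - η) - 20 * ε) := by gcongr
    _ = (64 + C) * X ^ (1 - (1 / 16 - η) - 20 * ε) := by ring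
    _ ≤ X ^ ε * X ^ (1 - (1 / 16 - η) - 20 * ε) := by gcongr
    _ = _ := by rw [← Real.rpow_add hX]; congr 1; ring

/-- Two bounds for a Fourier coefficient `b` of frequency `H`, interpolated so that the weighted
coefficients remain summable. -/
lemma coeff_weight_le {b H w ε θ : ℝ} (hH : 1 ≤ H) (hw : 0 < w) (hε : 0 < ε) (hε1 : ε ≤ 1 / 2)
    (h1 : b ≤ 1 / H) (h2 : b ≤ 1 / (w * H ^ 2)) (hθ : |θ| ≤ 2 * H) :
    b * √(1 + |θ| * w) ≤ 3 * w ^ (-ε) * H ^ (-(1 + ε)) := by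
  have hH0 : 0 < H := by linarith
  set x := H * w with hx
  have hx0 : 0 < x := by positivity
  have hR : √(1 + |θ| * w) ≤ √(1 + 2 * x) := by
    apply Real.sqrt_le_sqrt
    have : |θ| * w ≤ 2 * H * w := by gcongr
    linarith
  have hrhs : 3 * w ^ (-ε) * H ^ (-(1 + ε)) = 3 * (x ^ (-ε) * (1 / H)) := by
    rw [hx, Real.mul_rpow hH0.le hw.le, neg_add, Real.rpow_add hH0, Real.rpow_neg_one]
    ring
  rw [hrhs]
  rcases le_total x 1 with hx1 | hx1
  · have a1 : √(1 + 2 * x) ≤ 3 := by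
      rw [Real.sqrt_le_iff]; constructor <;> linarith
    have a2 : 1 ≤ x ^ (-ε) := Real.one_le_rpow_of_pos_of_le_one_of_nonpos hx0 hx1 (by linarith)
    calc b * √(1 + |θ| * w) ≤ 1 / H * 3 := mul_le_mul h1 (hR.trans a1) (by positivity) (by positivity)
      _ = 3 * (1 * (1 / H)) := by ring
      _ ≤ _ := by gcongr
  · have a1 : √(1 + 2 * x) ≤ 3 * √x := by
      rw [Real.sqrt_le_iff]
      refine ⟨by positivity, ?_⟩
      rw [mul_pow, Real.sq_sqrt hx0.le]
      linarith
    have a2 : √x / x ≤ x ^ (-ε) := by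
      rw [Real.sqrt_eq_rpow]
      nth_rewrite 2 [← Real.rpow_one x]
      rw [← Real.rpow_sub hx0]
      exact Real.rpow_le_rpow_of_exponent_le hx1 (by linarith)
    calc b * √(1 + |θ| * w) ≤ 1 / (w * H ^ 2) * (3 * √x) :=
          mul_le_mul h2 (hR.trans a1) (by positivity) (by positivity)
      _ = 3 * (√x / x * (1 / H)) := by rw [hx]; field_simp
      _ ≤ _ := by gcongr

open ArithmeticFunction in
set_option maxHeartbeats 800000 in
/-- The von Mangoldt sum with the phase `e(α⌊n^c⌋)`, for `α` away from `0`. -/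
lemma mangoldt_floor_bound (μ η ε : ℝ) (hμ0 : 0 < μ) (hμ1 : μ < 1) (hη0 : 0 < η)
    (hη1 : η < 1 / 16) (hε : ε = η / 1000) :
    ∀ᶠ X : ℝ in Filter.atTop, ∀ (α : ℝ) (lam : ℕ → ℝ),
      IsSieveWeight (X ^ (η / 2)) lam → |α| ≤ 1 / 2 →
      X ^ (3 / 8 - η / 2) ≤ |α| * X ^ (17 / 16 - η) →
      ‖∑ n ∈ Finset.Ioc ⌊μ * X⌋₊ ⌊X⌋₊, ((vonMangoldt n : ℂ) * rho (X ^ (η / 2)) lam n) *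
          e (α * ⌊(n : ℝ) ^ (17 / 16 - η)⌋)‖ ≤ X ^ (1 - (1 / 16 - η) - 15 * ε) := by
  have hε0 : 0 < ε := by rw [hε]; linarith
  set Z := ∑' h : ℤ, |(h : ℝ)| ^ (-(1 + ε)) with hZ
  have hZs : Summable (fun h : ℤ => |(h : ℝ)| ^ (-(1 + ε))) :=
    Real.summable_abs_int_rpow (by linarith)
  filter_upwards [mangoldt_sum_bound μ η ε hμ0 hμ1 hη0 hη1 hε,
    eventually_count μ η ε hμ0 hμ1 hη0 hη1 hε,
    eventually_rho_le η ε hε0, eventually_log_le_rpow 1 ε hε0, eventually_le_rpow 2 ε hε0,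
    eventually_le_rpow (6 + 3 * Z) ε hε0,
    eventually_le_rpow 2 (11 / 16 - η / 2) (by linarith),
    Filter.eventually_ge_atTop (1 : ℝ)] with X hS hcount hρ hlog h2 hZX h2X hX1
  intro α lam hlam hα hαT
  rw [one_mul] at hlog
  have hX : 0 < X := by linarith
  set A := ⌊μ * X⌋₊ with hA
  set B := ⌊X⌋₊ with hB
  set c := 17 / 16 - η with hc
  set v : ℕ → ℂ := fun n => (vonMangoldt n : ℂ) * rho (X ^ (η / 2)) lam n with hv
  have hSv : ∀ θ : ℝ, ∑ n ∈ Finset.Icc 1 B, (vonMangoldt n : ℂ) * G c θ (X ^ (η / 2)) lam A B n =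
      ∑ n ∈ Finset.Ioc A B, v n * e (θ * (n : ℝ) ^ c) := by
    intro θ
    have hsub : Finset.Ioc A B ⊆ Finset.Icc 1 B := by
      intro n hn
      rw [Finset.mem_Ioc] at hn
      rw [Finset.mem_Icc]; omega
    rw [← Finset.sum_subset hsub]
    · refine Finset.sum_congr rfl fun n hn => ?_
      rw [Finset.mem_Ioc] at hn
      unfold G
      rw [if_pos hn, hv]; ring
    · intro n _ hn
      rw [Finset.mem_Ioc] at hn
      unfold G
      rw [if_neg hn, mul_zero]
  set s := 1 / 16 - η + 20 * ε with hs
  have hs0 : 0 < s := by linarith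
  have hs1 : s ≤ 1 := by rw [hs, hε]; linarith
  set w := X ^ (-s) with hw
  have hw0 : 0 < w := Real.rpow_pos_of_pos hX _
  have hw1 : w ≤ 1 := Real.rpow_le_one_of_one_le_of_nonpos hX1 (by linarith)
  set E := X ^ (1 - (1 / 16 - η) - 18 * ε) with hE
  have hE0 : 0 < E := Real.rpow_pos_of_pos hX _
  have hSb : ∀ θ : ℝ, X ^ (3 / 8 - η / 2) ≤ |θ| * X ^ c →
      ‖∑ n ∈ Finset.Ioc A B, v n * e (θ * (n : ℝ) ^ c)‖ ≤ E * √(1 + |θ| * w) := by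
    intro θ hθ
    rw [← hSv]
    have := hS θ lam hlam hθ
    rwa [div_eq_mul_inv |θ|, ← Real.rpow_neg hX.le] at this
  have hv_le : ∀ n ∈ Finset.Ioc A B, ‖v n‖ ≤ X ^ (2 * ε) := by
    intro n hn
    rw [Finset.mem_Ioc] at hn
    have l1 : vonMangoldt n ≤ X ^ ε := by
      have a1 : Real.log n ≤ Real.log X := by
        apply Real.log_le_log (by exact_mod_cast (by omega : 0 < n))
        exact le_trans (by exact_mod_cast hn.2) (Nat.floor_le hX.le)
      have := vonMangoldt_le_log (n := n)
      linarith
    rw [hv, norm_mul, Complex.norm_real, Complex.norm_real, Real.norm_eq_abs, Real.norm_eq_abs,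
      abs_of_nonneg vonMangoldt_nonneg, two_mul, Real.rpow_add hX]
    exact mul_le_mul l1 (hρ lam hlam n hn.2) (abs_nonneg _) (by positivity)
  have hF := fun n : ℕ => floor_phase_approx hα hw0 hw1 ((n : ℝ) ^ c)
  have hone : ‖∑ n ∈ Finset.Ioc A B, v n * (e (α * ⌊(n : ℝ) ^ c⌋) -
      ∑' h : ℤ, phaseCoeff α w h * e ((α + h) * (n : ℝ) ^ c))‖ ≤
        X ^ (1 - (1 / 16 - η) - 16 * ε) := by
    calc _ ≤ ∑ n ∈ Finset.Ioc A B, X ^ (2 * ε) *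
          (if 1 - w < Int.fract ((n : ℝ) ^ c) then 2 else 0) := by
          refine norm_sum_le_of_le _ fun n hn => ?_
          rw [norm_mul]
          exact mul_le_mul (hv_le n hn) (hF n).2 (norm_nonneg _) (by positivity)
      _ = X ^ (2 * ε) * (2 * ((Finset.Ioc A B).filter
          (fun n : ℕ => 1 - w < Int.fract ((n : ℝ) ^ c))).card) := by
          rw [← Finset.mul_sum, ← Finset.sum_filter, Finset.sum_const, nsmul_eq_mul]
          ring
      _ ≤ X ^ (2 * ε) * (X ^ ε * X ^ (1 - (1 / 16 - η) - 19 * ε)) := by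
          gcongr
      _ = _ := by
          rw [← Real.rpow_add hX, ← Real.rpow_add hX]; congr 1; ring
  have htwo : ‖∑ n ∈ Finset.Ioc A B, v n *
      ∑' h : ℤ, phaseCoeff α w h * e ((α + h) * (n : ℝ) ^ c)‖ ≤
        X ^ (1 - (1 / 16 - η) - 16 * ε) := by
    have hswap : ∑ n ∈ Finset.Ioc A B, v n *
        ∑' h : ℤ, phaseCoeff α w h * e ((α + h) * (n : ℝ) ^ c) =
        ∑' h : ℤ, phaseCoeff α w h * ∑ n ∈ Finset.Ioc A B, v n * e ((α + h) * (n : ℝ) ^ c) := by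
      simp only [← tsum_mul_left]
      rw [← Summable.tsum_finsetSum (fun n _ => (hF n).1.mul_left (v n))]
      congr 1
      ext h
      rw [Finset.mul_sum]
      exact Finset.sum_congr rfl fun n _ => by ring
    rw [hswap]
    have hg : HasSum (fun h : ℤ => (if h = 0 then 6 * E else 0) +
        3 * w ^ (-ε) * E * |(h : ℝ)| ^ (-(1 + ε))) (6 * E + 3 * w ^ (-ε) * E * Z) :=
      (hasSum_ite_eq 0 (6 * E)).add (hZs.hasSum.mul_left _)
    refine (tsum_of_norm_bounded hg ?_).trans ?_
    · intro h
      rw [norm_mul]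
      split_ifs with h0
      · subst h0
        have b1 := hSb (α + ((0 : ℤ) : ℝ)) (by simpa using hαT)
        have b2 : √(1 + |α + ((0 : ℤ) : ℝ)| * w) ≤ 2 := by
          rw [Real.sqrt_le_iff]
          refine ⟨by norm_num, ?_⟩
          simp only [Int.cast_zero, add_zero]
          nlinarith [abs_nonneg α]
        calc _ ≤ 3 * (E * 2) := by
              refine mul_le_mul (phaseCoeff_zero_le hw0) (b1.trans ?_) (norm_nonneg _) (by norm_num)
              gcongr
          _ = 6 * E + 0 := by ring
          _ ≤ _ := by gcongr; positivity
      · have hH : (1 : ℝ) ≤ |(h : ℝ)| := by exact_mod_cast Int.one_le_abs h0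
        have hlo : 1 / 2 ≤ |α + h| := by
          have : |(h : ℝ)| ≤ |α + h| + |α| := by
            calc |(h : ℝ)| = |(α + h) - α| := by ring_nf
              _ ≤ _ := abs_sub _ _
          linarith
        have hhi : |α + h| ≤ 2 * |(h : ℝ)| := (abs_add_le _ _).trans (by linarith)
        have hcond : X ^ (3 / 8 - η / 2) ≤ |α + h| * X ^ c := by
          calc X ^ (3 / 8 - η / 2) = 1 / 2 * (2 * X ^ (3 / 8 - η / 2)) := by ring
            _ ≤ 1 / 2 * (X ^ (11 / 16 - η / 2) * X ^ (3 / 8 - η / 2)) := by gcongr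
            _ = 1 / 2 * X ^ c := by rw [← Real.rpow_add hX, hc]; ring_nf
            _ ≤ _ := by gcongr
        have hb := phaseCoeff_le hα hw0 hw1 h0
        have := coeff_weight_le hH hw0 hε0 (by rw [hε]; linarith) hb.1 hb.2 hhi
        calc _ ≤ ‖phaseCoeff α w h‖ * (E * √(1 + |α + h| * w)) := by
              gcongr
              exact hSb _ hcond
          _ = E * (‖phaseCoeff α w h‖ * √(1 + |α + h| * w)) := by ring
          _ ≤ E * (3 * w ^ (-ε) * |(h : ℝ)| ^ (-(1 + ε))) := by gcongr
          _ = _ := by ring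
    · have hwε : w ^ (-ε) ≤ X ^ ε := by
        rw [hw, ← Real.rpow_mul hX.le]
        apply Real.rpow_le_rpow_of_exponent_le hX1
        nlinarith
      have hP1 : 1 ≤ X ^ ε := Real.one_le_rpow hX1 hε0.le
      have hZ0 : 0 ≤ Z := tsum_nonneg fun h => by positivity
      calc 6 * E + 3 * w ^ (-ε) * E * Z ≤ 6 * (E * X ^ ε) + 3 * X ^ ε * E * Z := by
            gcongr
            nlinarith
        _ = (6 + 3 * Z) * (E * X ^ ε) := by ring
        _ ≤ X ^ ε * (E * X ^ ε) := by gcongr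
        _ = _ := by
            rw [hE, ← Real.rpow_add hX, ← Real.rpow_add hX]; congr 1; ring
  have hsplit : ∑ n ∈ Finset.Ioc A B, v n * e (α * ⌊(n : ℝ) ^ c⌋) =
      ∑ n ∈ Finset.Ioc A B, v n * (e (α * ⌊(n : ℝ) ^ c⌋) -
        ∑' h : ℤ, phaseCoeff α w h * e ((α + h) * (n : ℝ) ^ c)) +
      ∑ n ∈ Finset.Ioc A B, v n *
        ∑' h : ℤ, phaseCoeff α w h * e ((α + h) * (n : ℝ) ^ c) := by
    rw [← Finset.sum_add_distrib]
    exact Finset.sum_congr rfl fun n _ => by ring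
  rw [hsplit]
  calc _ ≤ X ^ (1 - (1 / 16 - η) - 16 * ε) + X ^ (1 - (1 / 16 - η) - 16 * ε) :=
        (norm_add_le _ _).trans (add_le_add hone htwo)
    _ = 2 * X ^ (1 - (1 / 16 - η) - 16 * ε) := by ring
    _ ≤ X ^ ε * X ^ (1 - (1 / 16 - η) - 16 * ε) := by gcongr
    _ = _ := by rw [← Real.rpow_add hX]; congr 1; ring

/-- The summation over the divisors carried out first. -/
lemma L_eq {c μ X D : ℝ} (hμX : 0 ≤ μ * X) (lam : ℕ → ℝ) (α : ℝ) :
    L c μ X D lam α = ∑ p ∈ (Finset.Ioc ⌊μ * X⌋₊ ⌊X⌋₊).filter Nat.Prime,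
      ((Real.log p : ℂ) * rho D lam p) * e (α * ⌊(p : ℝ) ^ c⌋) := by
  set Q := (Finset.Ioc ⌊μ * X⌋₊ ⌊X⌋₊).filter Nat.Prime with hQ
  have h1 : ∀ d : ℕ, (Finset.range (⌊X⌋₊ + 1)).filter
      (fun p : ℕ => p.Prime ∧ μ * X < (p : ℝ) ∧ d ∣ (p + 2)) = Q.filter (fun p => d ∣ p + 2) := by
    intro d
    ext p
    simp only [hQ, Finset.mem_filter, Finset.mem_range, Finset.mem_Ioc, Nat.floor_lt hμX]
    constructor
    · rintro ⟨a, b, c, d⟩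
      exact ⟨⟨⟨c, by omega⟩, b⟩, d⟩
    · rintro ⟨⟨⟨c, a⟩, b⟩, d⟩
      exact ⟨by omega, b, c, d⟩
  unfold L rho
  simp only [h1, Finset.sum_filter (s := Q), Finset.mul_sum]
  rw [Finset.sum_comm]
  refine Finset.sum_congr rfl fun p _ => ?_
  rw [Finset.sum_filter]
  push_cast
  rw [Finset.mul_sum, Finset.sum_mul]
  refine Finset.sum_congr rfl fun d _ => ?_
  split_ifs
  · ring
  · simp

open ArithmeticFunction in
/-- The pointwise bound for `L(α)`: the primes are separated from the higher prime powers, which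
contribute `O(√X log X)` up to the size of the sieve convolution. -/
lemma L_sup_bound (μ η ε : ℝ) (hμ0 : 0 < μ) (hμ1 : μ < 1) (hη0 : 0 < η)
    (hη1 : η < 1 / 16) (hε : ε = η / 1000) :
    ∀ᶠ X : ℝ in Filter.atTop, ∀ (α : ℝ) (lam : ℕ → ℝ),
      IsSieveWeight (X ^ (η / 2)) lam → |α| ≤ 1 / 2 →
      X ^ (3 / 8 - η / 2) ≤ |α| * X ^ (17 / 16 - η) →
      ‖L (17 / 16 - η) μ X (X ^ (η / 2)) lam α‖ ≤ X ^ (1 - (1 / 16 - η) - 14 * ε) := by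
  have hε0 : 0 < ε := by rw [hε]; linarith
  filter_upwards [mangoldt_floor_bound μ η ε hμ0 hμ1 hη0 hη1 hε, eventually_rho_le η ε hε0,
    eventually_log_le_rpow 2 ε hε0, eventually_le_rpow 2 ε hε0,
    Filter.eventually_ge_atTop (1 : ℝ)] with X hT hρ hlog h2 hX1
  intro α lam hlam hα hαT
  have hX : 0 < X := by linarith
  have hμX : 0 ≤ μ * X := by positivity
  set c := 17 / 16 - η with hc
  set I := Finset.Ioc ⌊μ * X⌋₊ ⌊X⌋₊ with hI
  set F : ℕ → ℂ := fun n => ((vonMangoldt n : ℂ) * rho (X ^ (η / 2)) lam n) *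
          e (α * ⌊(n : ℝ) ^ c⌋) with hF
  have h1 : L c μ X (X ^ (η / 2)) lam α = ∑ n ∈ I.filter Nat.Prime, F n := by
    rw [L_eq hμX]
    refine Finset.sum_congr rfl fun p hp => ?_
    simp only [hF]
    rw [vonMangoldt_apply_prime (Finset.mem_filter.1 hp).2]
  have h3 : ∑ n ∈ I.filter Nat.Prime, F n =
      ∑ n ∈ I, F n - ∑ n ∈ I.filter (fun n => ¬ n.Prime), F n := by
    rw [← Finset.sum_filter_add_sum_filter_not I Nat.Prime F]; ring
  have h4 : ‖∑ n ∈ I.filter (fun n => ¬ n.Prime), F n‖ ≤ X ^ (1 - (1 / 16 - η) - 15 * ε) := by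
    calc _ ≤ ∑ n ∈ I.filter (fun n => ¬ n.Prime), vonMangoldt n * X ^ ε := by
          refine norm_sum_le_of_le _ fun n hn => ?_
          simp only [hF]
          rw [norm_mul, norm_e, mul_one, norm_mul, Complex.norm_real, Complex.norm_real,
            Real.norm_eq_abs, Real.norm_eq_abs, abs_of_nonneg vonMangoldt_nonneg]
          refine mul_le_mul_of_nonneg_left ?_ vonMangoldt_nonneg
          exact hρ lam hlam n (Finset.mem_Ioc.1 (Finset.mem_filter.1 hn).1).2
      _ = (∑ n ∈ I.filter (fun n => ¬ n.Prime), vonMangoldt n) * X ^ ε := by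
          rw [Finset.sum_mul]
      _ ≤ (∑ n ∈ (Finset.Ioc 0 ⌊X⌋₊).filter (fun n => ¬ n.Prime), vonMangoldt n) * X ^ ε := by
          refine mul_le_mul_of_nonneg_right ?_ (by positivity)
          refine Finset.sum_le_sum_of_subset_of_nonneg ?_ fun n _ _ => vonMangoldt_nonneg
          refine Finset.filter_subset_filter _ (Finset.Ioc_subset_Ioc_left (Nat.zero_le _))
      _ ≤ (2 * √X * Real.log X) * X ^ ε := by
          rw [← Chebyshev.psi_sub_theta_eq_sum_not_prime]
          refine mul_le_mul_of_nonneg_right (Chebyshev.psi_sub_theta_le hX1) (by positivity)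
      _ = X ^ (1 / 2 : ℝ) * (2 * Real.log X) * X ^ ε := by
          rw [Real.sqrt_eq_rpow]; ring
      _ ≤ X ^ (1 / 2 : ℝ) * X ^ ε * X ^ ε := by
          gcongr
          linarith
      _ = X ^ (1 / 2 + ε + ε) := by rw [Real.rpow_add hX, Real.rpow_add hX]
      _ ≤ _ := Real.rpow_le_rpow_of_exponent_le hX1 (by linarith)
  rw [h1, h3]
  calc _ ≤ X ^ (1 - (1 / 16 - η) - 15 * ε) + X ^ (1 - (1 / 16 - η) - 15 * ε) :=
        (norm_sub_le _ _).trans (add_le_add (hT α lam hlam hα hαT) h4)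
    _ = 2 * X ^ (1 - (1 / 16 - η) - 15 * ε) := by ring
    _ ≤ X ^ ε * X ^ (1 - (1 / 16 - η) - 15 * ε) := by gcongr
    _ = _ := by rw [← Real.rpow_add hX]; congr 1; ring

/-! ### The mean square and the conclusion -/

lemma integral_e_int (k : ℤ) :
    ∫ α in (-(1 / 2) : ℝ)..(1 / 2), e (k * α) = if k = 0 then 1 else 0 := by
  split_ifs with hk
  · subst hk
    simp only [Int.cast_zero, zero_mul, e_zero, intervalIntegral.integral_const]
    norm_num
  · have hkR : (k : ℝ) ≠ 0 := by exact_mod_cast hk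
    rw [integral_e_mul hkR]
    have : e (k * (1 / 2)) = e (k * -(1 / 2)) := by
      rw [show (k : ℝ) * (1 / 2) = k * -(1 / 2) + k by ring, e_add, e_int, mul_one]
    rw [this, sub_self, zero_div]

/-- Parseval's identity for an exponential sum with distinct integer frequencies. -/
lemma parseval_finite (Q : Finset ℕ) (a : ℕ → ℂ) (f : ℕ → ℤ) (hf : Set.InjOn f Q) :
    ∫ α in (-(1 / 2) : ℝ)..(1 / 2), ‖∑ p ∈ Q, a p * e (α * f p)‖ ^ 2 = ∑ p ∈ Q, ‖a p‖ ^ 2 := by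
  have h1 : ∀ α : ℝ, ((‖∑ p ∈ Q, a p * e (α * f p)‖ ^ 2 : ℝ) : ℂ) =
      ∑ p ∈ Q, ∑ q ∈ Q, a p * (starRingEnd ℂ) (a q) * e (((f p - f q : ℤ) : ℝ) * α) := by
    intro α
    rw [← Complex.normSq_eq_norm_sq, ← Complex.mul_conj, map_sum, Finset.sum_mul_sum]
    refine Finset.sum_congr rfl fun p _ => Finset.sum_congr rfl fun q _ => ?_
    rw [map_mul, conj_e]
    have : e (((f p - f q : ℤ) : ℝ) * α) = e (α * f p) * e (-(α * f q)) := by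
      rw [← e_add]; push_cast; ring_nf
    rw [this]; ring
  have hterm_int : ∀ (z : ℂ) (k : ℤ), IntervalIntegrable (fun α : ℝ => z * e ((k : ℝ) * α)) volume
      (-(1 / 2)) (1 / 2) := fun z k =>
    (continuous_const.mul (continuous_e.comp (by fun_prop))).intervalIntegrable _ _
  have h2 : ((∫ α in (-(1 / 2) : ℝ)..(1 / 2), ‖∑ p ∈ Q, a p * e (α * f p)‖ ^ 2 : ℝ) : ℂ) =
      ((∑ p ∈ Q, ‖a p‖ ^ 2 : ℝ) : ℂ) := by
    rw [← intervalIntegral.integral_ofReal]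
    simp only [h1]
    rw [intervalIntegral.integral_finsetSum]
    · rw [Complex.ofReal_sum]
      refine Finset.sum_congr rfl fun p hp => ?_
      rw [intervalIntegral.integral_finsetSum (fun q _ => hterm_int _ _)]
      have : ∀ q ∈ Q, ∫ α in (-(1 / 2) : ℝ)..(1 / 2),
          a p * (starRingEnd ℂ) (a q) * e (((f p - f q : ℤ) : ℝ) * α) =
          if p = q then a p * (starRingEnd ℂ) (a p) else 0 := by
        intro q hq
        rw [intervalIntegral.integral_const_mul, integral_e_int]
        by_cases hpq : p = q
        · subst hpq; simp
        · have : f p - f q ≠ 0 := fun h => hpq (hf hp hq (by omega))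
          rw [if_neg this, if_neg hpq, mul_zero]
      rw [Finset.sum_congr rfl this, Finset.sum_ite_eq, if_pos hp, Complex.mul_conj,
        Complex.normSq_eq_norm_sq]
    · intro p _
      exact (continuous_finsetSum _ fun q _ =>
        continuous_const.mul (continuous_e.comp (by fun_prop))).intervalIntegrable _ _
  exact_mod_cast h2

lemma floor_rpow_strictMono {c : ℝ} (hc : 1 ≤ c) :
    StrictMono (fun n : ℕ => ⌊(n : ℝ) ^ c⌋) := by
  apply strictMono_nat_of_lt_succ
  intro n
  have h1 : (n : ℝ) ^ c + 1 ≤ ((n + 1 : ℕ) : ℝ) ^ c := by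
    have := Real.add_rpow_le_rpow_add (a := (n : ℝ)) (b := 1) (by positivity) zero_le_one hc
    rw [Real.one_rpow] at this
    push_cast
    exact this
  have h2 := Int.floor_le_floor h1
  rw [Int.floor_add_one] at h2
  omega

lemma continuous_L {c μ X D : ℝ} (lam : ℕ → ℝ) : Continuous (L c μ X D lam) := by
  unfold L
  refine continuous_finsetSum _ fun d _ => continuous_const.mul ?_
  refine continuous_finsetSum _ fun p _ => continuous_const.mul ?_
  exact continuous_e.comp (by fun_prop)

/-- The mean square of `L` over a full period, by Parseval's identity. -/
lemma L_mean_square (μ η ε : ℝ) (hμ0 : 0 < μ) (hη1 : η < 1 / 16) (hε0 : 0 < ε) :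
    ∀ᶠ X : ℝ in Filter.atTop, ∀ lam : ℕ → ℝ, IsSieveWeight (X ^ (η / 2)) lam →
      ∫ α in (-(1 / 2) : ℝ)..(1 / 2), ‖L (17 / 16 - η) μ X (X ^ (η / 2)) lam α‖ ^ 2 ≤
        X ^ (1 + 4 * ε) := by
  filter_upwards [eventually_rho_le η ε hε0, eventually_log_le_rpow 1 ε hε0,
    Filter.eventually_ge_atTop (1 : ℝ)] with X hρ hlog hX1
  intro lam hlam
  rw [one_mul] at hlog
  have hX : 0 < X := by linarith
  have hμX : 0 ≤ μ * X := by positivity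
  simp only [L_eq hμX]
  rw [parseval_finite _ _ (fun n : ℕ => ⌊(n : ℝ) ^ (17 / 16 - η)⌋)
    ((floor_rpow_strictMono (by linarith)).injective.injOn)]
  set Q := (Finset.Ioc ⌊μ * X⌋₊ ⌊X⌋₊).filter Nat.Prime with hQ
  have hcard : (Q.card : ℝ) ≤ X := by
    refine le_trans ?_ (Nat.floor_le hX.le)
    have := (Finset.card_filter_le (Finset.Ioc ⌊μ * X⌋₊ ⌊X⌋₊) Nat.Prime).trans
      ((Nat.card_Ioc _ _).le.trans (Nat.sub_le _ _))
    exact_mod_cast this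
  calc _ ≤ ∑ p ∈ Q, (X ^ ε * X ^ ε) ^ 2 := by
        apply Finset.sum_le_sum
        intro p hp
        have hp' := Finset.mem_Ioc.1 (Finset.mem_filter.1 hp).1
        have hpr := (Finset.mem_filter.1 hp).2
        have l1 : Real.log p ≤ Real.log X :=
          Real.log_le_log (by exact_mod_cast hpr.pos)
            (le_trans (by exact_mod_cast hp'.2) (Nat.floor_le hX.le))
        have l0 : 0 ≤ Real.log p := Real.log_natCast_nonneg p
        rw [norm_mul, Complex.norm_real, Complex.norm_real, Real.norm_eq_abs, Real.norm_eq_abs,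
          abs_of_nonneg l0]
        have := hρ lam hlam p hp'.2
        gcongr
        linarith
    _ = Q.card * (X ^ ε * X ^ ε) ^ 2 := by rw [Finset.sum_const, nsmul_eq_mul]
    _ ≤ X * (X ^ ε * X ^ ε) ^ 2 := by gcongr
    _ = X ^ (1 : ℝ) * X ^ (4 * ε) := by
        rw [Real.rpow_one, ← Real.rpow_add hX, ← Real.rpow_natCast, ← Real.rpow_mul hX.le]
        congr 2
        push_cast
        ring
    _ = _ := by rw [← Real.rpow_add hX]

theorem stmt_10 (c μ : ℝ) (hc1 : 1 < c) (hc2 : c < 17 / 16) (hμ1 : 0 < μ) (hμ2 : μ < 1) :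
    ∃ ε₀ : ℝ, 0 < ε₀ ∧ ∃ X₀ : ℝ, 0 < X₀ ∧
      ∀ X : ℝ, X₀ ≤ X →
        ∀ lamM lamP : ℕ → ℝ,
          IsSieveWeight (X ^ ((17 - 16 * c) / 32)) lamM →
          IsSieveWeight (X ^ ((17 - 16 * c) / 32)) lamP →
            (∫ α in {α : ℝ | X ^ ((16 * c - 5) / 32 - c) ≤ |α| ∧ |α| ≤ 1 / 2},
                ‖L c μ X (X ^ ((17 - 16 * c) / 32)) lamM α‖ *
                  ‖L c μ X (X ^ ((17 - 16 * c) / 32)) lamP α‖ ^ 2) ≤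
              X ^ (3 - c - ε₀) := by
  obtain ⟨η, hη⟩ : ∃ η : ℝ, η = 17 / 16 - c := ⟨_, rfl⟩
  have hη0 : 0 < η := by linarith
  have hη1 : η < 1 / 16 := by linarith
  have hcη : c = 17 / 16 - η := by linarith
  obtain ⟨ε, hε⟩ : ∃ ε : ℝ, ε = η / 1000 := ⟨_, rfl⟩
  have hε0 : 0 < ε := by rw [hε]; linarith
  have hD : (17 - 16 * c) / 32 = η / 2 := by rw [hcη]; ring
  have hξ : (16 * c - 5) / 32 - c = (3 / 8 - η / 2) - (17 / 16 - η) := by rw [hcη]; ring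
  rw [hD, hξ]
  subst hcη
  obtain ⟨X₀, hX₀⟩ := Filter.eventually_atTop.1
    ((L_sup_bound μ η ε hμ1 hμ2 hη0 hη1 hε).and (L_mean_square μ η ε hμ1 hη1 hε0))
  -- the pointwise bound saves `14ε` and the mean square loses `4ε`
  refine ⟨10 * ε, by linarith, max X₀ 1, by positivity, ?_⟩
  intro X hXge lamM lamP hM hP
  have hX : 0 < X := lt_of_lt_of_le (by positivity) hXge
  obtain ⟨hsup, hms⟩ := hX₀ X ((le_max_left _ _).trans hXge)
  set S := {α : ℝ | X ^ ((3 / 8 - η / 2) - (17 / 16 - η)) ≤ |α| ∧ |α| ≤ 1 / 2} with hS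
  set f := L (17 / 16 - η) μ X (X ^ (η / 2)) lamM with hf
  set g := L (17 / 16 - η) μ X (X ^ (η / 2)) lamP with hg
  have cf : Continuous f := continuous_L lamM
  have cg : Continuous g := continuous_L lamP
  set V := X ^ (1 - (1 / 16 - η) - 14 * ε) with hV
  have hV0 : 0 < V := Real.rpow_pos_of_pos hX _
  have hSm : MeasurableSet S :=
    (measurableSet_le measurable_const measurable_norm).inter
      (measurableSet_le measurable_norm measurable_const)
  have hSI : S ⊆ Set.Icc (-(1 / 2)) (1 / 2) := fun α hα => abs_le.1 hα.2
  have i1 : IntegrableOn (fun α => ‖f α‖ * ‖g α‖ ^ 2) (Set.Icc (-(1 / 2)) (1 / 2)) :=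
    (by fun_prop : Continuous fun α => ‖f α‖ * ‖g α‖ ^ 2).integrableOn_Icc
  have i2 : IntegrableOn (fun α => V * ‖g α‖ ^ 2) (Set.Icc (-(1 / 2)) (1 / 2)) :=
    (by fun_prop : Continuous fun α => V * ‖g α‖ ^ 2).integrableOn_Icc
  calc ∫ α in S, ‖f α‖ * ‖g α‖ ^ 2 ≤ ∫ α in S, V * ‖g α‖ ^ 2 := by
        refine setIntegral_mono_on (i1.mono_set hSI) (i2.mono_set hSI) hSm fun α hα => ?_
        refine mul_le_mul_of_nonneg_right (hsup α lamM hM hα.2 ?_) (by positivity)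
        calc X ^ (3 / 8 - η / 2) =
              X ^ ((3 / 8 - η / 2) - (17 / 16 - η)) * X ^ (17 / 16 - η) := by
              rw [← Real.rpow_add hX]; congr 1; ring
          _ ≤ _ := by
              have := hα.1
              gcongr
    _ ≤ ∫ α in Set.Icc (-(1 / 2)) (1 / 2), V * ‖g α‖ ^ 2 := by
        refine setIntegral_mono_set i2 ?_ hSI.eventuallyLE
        exact Filter.Eventually.of_forall fun α => by positivity
    _ = V * ∫ α in (-(1 / 2) : ℝ)..(1 / 2), ‖g α‖ ^ 2 := by
        rw [integral_Icc_eq_integral_Ioc, ← intervalIntegral.integral_of_le (by norm_num),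
          intervalIntegral.integral_const_mul]
    _ ≤ V * X ^ (1 + 4 * ε) := by
        gcongr
        exact hms lamP hP
    _ = X ^ (3 - (17 / 16 - η) - 10 * ε) := by
        rw [hV, ← Real.rpow_add hX]; congr 1; ring
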